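/- arXiv:1306.3637 — 2 statements merged into one kernel-verified Lean document; each statement's English description precedes it below -/
import Mathlib

section
/- Let L > 0 and T > 0. There exists a constant C > 0, independent of the data and of ε, with the following property. Let ε ∈ (0,1], let y₀, ȳ₀ be two initial data, let y and ȳ be classical solutions of the modified KdV system (with cutoff Φ_ε) on [0,T] with y(0,·) = y₀ and ȳ(0,·) = ȳ₀, and let z and z̄ be classical solutions of the linearized KdV system on [0,T] with z(0,·) = y₀ and z̄(0,·) = ȳ₀. Set Δ(t,·) = (y(t,·) − z(t,·)) − (ȳ(t,·) − z̄(t,·)). Then ‖Δ(t,·)‖_{L²(0,L)} ≤ C for all t ∈ [0,T]. -/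
open Set Real MeasureTheory

/-- The `L²(0,L)` norm of a function on `(0,L)`. -/
noncomputable def L2norm (L : ℝ) (f : ℝ → ℝ) : ℝ :=
  Real.sqrt (∫ x in (0:ℝ)..L, (f x) ^ 2)

/-- A smooth cutoff `Φ ∈ C^∞([0,∞);[0,1])` with `Φ ≡ 1` on `[0,1/2]`, `Φ ≡ 0` on
`[1,∞)` and `Φ′ ≤ 0`.  (The rescaled cutoff is `Φ_ε(r) = Φ(r/ε)`.) -/
def IsCutoff (Φ : ℝ → ℝ) : Prop :=
  ContDiff ℝ (⊤ : ℕ∞) Φ ∧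
  (∀ r ∈ Ici (0:ℝ), Φ r ∈ Icc (0:ℝ) 1) ∧
  (∀ r ∈ Icc (0:ℝ) (1/2 : ℝ), Φ r = 1) ∧
  (∀ r ∈ Ici (1:ℝ), Φ r = 0) ∧
  (∀ r ∈ Ici (0:ℝ), deriv Φ r ≤ 0)

/-- A classical solution of the modified KdV system (with cutoff `Φ_ε = Φ(·/ε)`)
`y_t + y_x + y_xxx + Φ_ε(‖y(t,·)‖_{L²(0,L)}) y y_x = 0`,
`y(t,0) = y(t,L) = y_x(t,L) = 0`, on `[0,T] × [0,L]`. -/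
def IsModifiedKdVSol (L T ε : ℝ) (Φ : ℝ → ℝ) (y : ℝ → ℝ → ℝ) : Prop :=
  (∀ t ∈ Icc (0:ℝ) T, ContDiffOn ℝ 3 (y t) (Icc (0:ℝ) L)) ∧
  (∀ x ∈ Icc (0:ℝ) L, ContDiffOn ℝ 1 (fun s => y s x) (Icc (0:ℝ) T)) ∧
  ContinuousOn (fun p : ℝ × ℝ => y p.1 p.2) (Icc (0:ℝ) T ×ˢ Icc (0:ℝ) L) ∧
  (∀ t ∈ Ioo (0:ℝ) T, ∀ x ∈ Ioo (0:ℝ) L,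
    derivWithin (fun s => y s x) (Icc (0:ℝ) T) t
      + derivWithin (y t) (Icc (0:ℝ) L) x
      + iteratedDerivWithin 3 (y t) (Icc (0:ℝ) L) x
      + Φ (L2norm L (y t) / ε) * (y t x * derivWithin (y t) (Icc (0:ℝ) L) x) = 0) ∧
  (∀ t ∈ Icc (0:ℝ) T,
    y t 0 = 0 ∧ y t L = 0 ∧ derivWithin (y t) (Icc (0:ℝ) L) L = 0)

/-- A classical solution of the linearized KdV system
`z_t + z_x + z_xxx = 0`, `z(t,0) = z(t,L) = z_x(t,L) = 0`, on `[0,T] × [0,L]`. -/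
def IsLinearKdVSol (L T : ℝ) (z : ℝ → ℝ → ℝ) : Prop :=
  (∀ t ∈ Icc (0:ℝ) T, ContDiffOn ℝ 3 (z t) (Icc (0:ℝ) L)) ∧
  (∀ x ∈ Icc (0:ℝ) L, ContDiffOn ℝ 1 (fun s => z s x) (Icc (0:ℝ) T)) ∧
  ContinuousOn (fun p : ℝ × ℝ => z p.1 p.2) (Icc (0:ℝ) T ×ˢ Icc (0:ℝ) L) ∧
  (∀ t ∈ Ioo (0:ℝ) T, ∀ x ∈ Ioo (0:ℝ) L,
    derivWithin (fun s => z s x) (Icc (0:ℝ) T) t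
      + derivWithin (z t) (Icc (0:ℝ) L) x
      + iteratedDerivWithin 3 (z t) (Icc (0:ℝ) L) x = 0) ∧
  (∀ t ∈ Icc (0:ℝ) T,
    z t 0 = 0 ∧ z t L = 0 ∧ derivWithin (z t) (Icc (0:ℝ) L) L = 0)

open Filter Topology

/-- A Fatou lemma for continuous functions on a compact interval. -/
lemma kdv_fatou {L : ℝ} (hL : 0 < L) {F : ℕ → ℝ → ℝ} {G : ℝ → ℝ} {B : ℝ}
    (hF : ∀ k, ContinuousOn (F k) (Icc 0 L)) (hF0 : ∀ k, ∀ x ∈ Icc 0 L, 0 ≤ F k x)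
    (hG : ContinuousOn G (Icc 0 L))
    (hlim : ∀ x ∈ Ioo 0 L, ∃ l, Tendsto (fun k => F k x) atTop (𝓝 l) ∧ G x ≤ l)
    (hB : ∀ k, ∫ x in (0:ℝ)..L, F k x ≤ B) :
    ∫ x in (0:ℝ)..L, G x ≤ B := by
  have hB0 : 0 ≤ B := le_trans
    (intervalIntegral.integral_nonneg hL.le (fun x hx => hF0 0 x hx)) (hB 0)
  set μ := (volume : Measure ℝ).restrict (Ioo 0 L) with hμ
  have hIntg : ∀ {g : ℝ → ℝ}, ContinuousOn g (Icc 0 L) → Integrable g μ := fun {g} hg =>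
    (hg.integrableOn_compact isCompact_Icc).mono_set Ioo_subset_Icc_self
  have heq : ∀ g : ℝ → ℝ, ∫ x in (0:ℝ)..L, g x = ∫ x, g x ∂μ := fun g => by
    rw [intervalIntegral.integral_of_le hL.le, integral_Ioc_eq_integral_Ioo]
  have hmem : ∀ᵐ x ∂μ, x ∈ Ioo 0 L := ae_restrict_mem measurableSet_Ioo
  rw [heq]
  have h1 : ∫⁻ x, ENNReal.ofReal (G x) ∂μ ≤ ENNReal.ofReal B := by
    calc ∫⁻ x, ENNReal.ofReal (G x) ∂μ
        ≤ ∫⁻ x, liminf (fun k => ENNReal.ofReal (F k x)) atTop ∂μ := by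
          apply lintegral_mono_ae
          filter_upwards [hmem] with x hx
          obtain ⟨l, hl, hGl⟩ := hlim x hx
          rw [(ENNReal.tendsto_ofReal hl).liminf_eq]
          exact ENNReal.ofReal_le_ofReal hGl
      _ ≤ liminf (fun k => ∫⁻ x, ENNReal.ofReal (F k x) ∂μ) atTop :=
          lintegral_liminf_le' fun k => (hIntg (hF k)).aemeasurable.ennreal_ofReal
      _ ≤ liminf (fun k : ℕ => ENNReal.ofReal B) atTop := by
          refine liminf_le_liminf (Eventually.of_forall fun k => ?_)
          rw [← ofReal_integral_eq_lintegral_ofReal (hIntg (hF k))]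
          · rw [← heq]
            exact ENNReal.ofReal_le_ofReal (hB k)
          · filter_upwards [hmem] with x hx using hF0 k x (Ioo_subset_Icc_self hx)
      _ = ENNReal.ofReal B := by simp
  have h2 : ∫ x, G x ∂μ ≤ (∫⁻ x, ENNReal.ofReal (G x) ∂μ).toReal := by
    rw [integral_eq_lintegral_pos_part_sub_lintegral_neg_part (hIntg hG)]
    have := ENNReal.toReal_nonneg (a := ∫⁻ x, ENNReal.ofReal (-G x) ∂μ)
    linarith
  calc _ ≤ _ := h2
    _ ≤ (ENNReal.ofReal B).toReal := ENNReal.toReal_mono ENNReal.ofReal_ne_top h1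
    _ = B := ENNReal.toReal_ofReal hB0

lemma kdv_ii {L : ℝ} (hL : 0 < L) {g : ℝ → ℝ} (hg : ContinuousOn g (Icc 0 L)) :
    IntervalIntegrable g volume 0 L :=
  hg.intervalIntegrable_of_Icc hL.le

/-- Pointwise convergence and boundedness in `L²` imply weak convergence. -/
lemma kdv_weak {L : ℝ} (hL : 0 < L) {q : ℕ → ℝ → ℝ} {φ g : ℝ → ℝ} {D r : ℝ}
    (hq : ∀ k, ContinuousOn (q k) (Icc 0 L)) (hφ : ContinuousOn φ (Icc 0 L))
    (hg : ContinuousOn g (Icc 0 L))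
    (hlim : ∀ x ∈ Ioo 0 L, Tendsto (fun k => q k x) atTop (𝓝 (φ x)))
    (hD : ∀ k, ∫ x in (0:ℝ)..L, (q k x) ^ 2 ≤ D)
    (hr : ∀ k, r ≤ ∫ x in (0:ℝ)..L, q k x * g x) :
    r ≤ ∫ x in (0:ℝ)..L, φ x * g x := by
  have hexp : ∀ (η : ℝ) (p : ℝ → ℝ), ContinuousOn p (Icc 0 L) →
      ∫ x in (0:ℝ)..L, (η * (p x) ^ 2 - p x * g x + (g x) ^ 2 / (4 * η))
        = η * (∫ x in (0:ℝ)..L, (p x) ^ 2) - (∫ x in (0:ℝ)..L, p x * g x)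
          + (∫ x in (0:ℝ)..L, (g x) ^ 2 / (4 * η)) := by
    intro η p hp
    rw [intervalIntegral.integral_add, intervalIntegral.integral_sub,
      intervalIntegral.integral_const_mul]
    · exact kdv_ii hL (by fun_prop)
    · exact kdv_ii hL (by fun_prop)
    · exact kdv_ii hL (by fun_prop)
    · exact kdv_ii hL (by fun_prop)
  have key : ∀ η > 0, r ≤ (∫ x in (0:ℝ)..L, φ x * g x) + η * D := by
    intro η hη
    have h := kdv_fatou hL (F := fun k x => η * (q k x) ^ 2 - q k x * g x + (g x) ^ 2 / (4 * η))
      (G := fun x => η * (φ x) ^ 2 - φ x * g x + (g x) ^ 2 / (4 * η))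
      (B := η * D - r + ∫ x in (0:ℝ)..L, (g x) ^ 2 / (4 * η))
      (fun k => by have := hq k; fun_prop)
      (fun k x _ => by
        have : η * (q k x) ^ 2 - q k x * g x + (g x) ^ 2 / (4 * η)
          = η * (q k x - g x / (2 * η)) ^ 2 := by field_simp; ring
        rw [this]; positivity)
      (by fun_prop)
      (fun x hx => ⟨_, (((hlim x hx).pow 2).const_mul η |>.sub
        ((hlim x hx).mul_const (g x))).add_const _, le_rfl⟩)
      (fun k => by
        rw [hexp η _ (hq k)]
        have := mul_le_mul_of_nonneg_left (hD k) hη.le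
        linarith [hr k])
    rw [hexp η _ hφ] at h
    have : 0 ≤ ∫ x in (0:ℝ)..L, (φ x) ^ 2 :=
      intervalIntegral.integral_nonneg hL.le (fun x _ => sq_nonneg _)
    nlinarith [mul_nonneg hη.le this]
  have ht : Tendsto (fun η : ℝ => (∫ x in (0:ℝ)..L, φ x * g x) + η * D) (𝓝[>] 0)
      (𝓝 ((∫ x in (0:ℝ)..L, φ x * g x) + 0 * D)) := by
    apply Tendsto.mono_left _ nhdsWithin_le_nhds
    exact (Continuous.tendsto (by fun_prop) 0)
  simpa using ge_of_tendsto ht (by filter_upwards [self_mem_nhdsWithin] with η hη using key η hη)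

/-- The Minkowski inequality in squared form. -/
lemma kdv_minkowski {L : ℝ} (hL : 0 < L) {u v : ℝ → ℝ} {α β : ℝ} (hα : 0 ≤ α) (hβ : 0 < β)
    (hu : ContinuousOn u (Icc 0 L)) (hv : ContinuousOn v (Icc 0 L))
    (hu2 : ∫ x in (0:ℝ)..L, (u x) ^ 2 ≤ α ^ 2) (hv2 : ∫ x in (0:ℝ)..L, (v x) ^ 2 ≤ β ^ 2) :
    ∫ x in (0:ℝ)..L, (u x + v x) ^ 2 ≤ (α + β) ^ 2 := by
  have key : ∀ η > 0, ∫ x in (0:ℝ)..L, (u x + v x) ^ 2 ≤ (α + η + β) ^ 2 := by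
    intro η hη
    set a := α + η with ha
    have ha0 : 0 < a := by positivity
    have h1 : ∫ x in (0:ℝ)..L, (u x + v x) ^ 2
        ≤ ∫ x in (0:ℝ)..L, ((1 + β / a) * (u x) ^ 2 + (1 + a / β) * (v x) ^ 2) := by
      apply intervalIntegral.integral_mono_on hL.le
      · exact kdv_ii hL (by fun_prop)
      · exact kdv_ii hL (by fun_prop)
      · intro x _
        have : (1 + β / a) * (u x) ^ 2 + (1 + a / β) * (v x) ^ 2 - (u x + v x) ^ 2
          = (β * u x - a * v x) ^ 2 / (a * β) := by field_simp; ring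
        have h2 : 0 ≤ (β * u x - a * v x) ^ 2 / (a * β) := by positivity
        linarith
    rw [intervalIntegral.integral_add (kdv_ii hL (by fun_prop)) (kdv_ii hL (by fun_prop)),
      intervalIntegral.integral_const_mul, intervalIntegral.integral_const_mul] at h1
    have h3 : ∫ x in (0:ℝ)..L, (u x) ^ 2 ≤ a ^ 2 := hu2.trans (by
      apply pow_le_pow_left₀ hα; linarith)
    have h4 : (1 + β / a) * (∫ x in (0:ℝ)..L, (u x) ^ 2) ≤ (1 + β / a) * a ^ 2 :=
      mul_le_mul_of_nonneg_left h3 (by positivity)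
    have h5 : (1 + a / β) * (∫ x in (0:ℝ)..L, (v x) ^ 2) ≤ (1 + a / β) * β ^ 2 :=
      mul_le_mul_of_nonneg_left hv2 (by positivity)
    have h6 : (1 + β / a) * a ^ 2 + (1 + a / β) * β ^ 2 = (a + β) ^ 2 := by field_simp; ring
    linarith
  have ht : Tendsto (fun η : ℝ => (α + η + β) ^ 2) (𝓝[>] 0) (𝓝 ((α + 0 + β) ^ 2)) := by
    apply Tendsto.mono_left _ nhdsWithin_le_nhds
    exact (Continuous.tendsto (by fun_prop) 0)
  simpa using ge_of_tendsto ht (by filter_upwards [self_mem_nhdsWithin] with η hη using key η hη)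

/-- Solutions of `y_t + y_x + y_xxx + c(t) y y_x = 0`, with the derivatives made explicit. -/
structure KSol (L T : ℝ) (c : ℝ → ℝ) (y y1 y2 y3 f : ℝ → ℝ → ℝ) : Prop where
  cont : ContinuousOn (fun p : ℝ × ℝ => y p.1 p.2) (Icc 0 T ×ˢ Icc 0 L)
  d1 : ∀ t ∈ Ioo 0 T, ∀ x ∈ Icc 0 L, HasDerivWithinAt (y t) (y1 t x) (Icc 0 L) x
  d2 : ∀ t ∈ Ioo 0 T, ∀ x ∈ Icc 0 L, HasDerivWithinAt (y1 t) (y2 t x) (Icc 0 L) x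
  d3 : ∀ t ∈ Ioo 0 T, ∀ x ∈ Icc 0 L, HasDerivWithinAt (y2 t) (y3 t x) (Icc 0 L) x
  c3 : ∀ t ∈ Ioo 0 T, ContinuousOn (y3 t) (Icc 0 L)
  dt : ∀ x ∈ Ioo 0 L, ∀ t ∈ Ioo 0 T, HasDerivAt (fun s => y s x) (f t x) t
  cf : ∀ x ∈ Ioo 0 L, ContinuousOn (fun s => f s x) (Ioo 0 T)
  eq : ∀ t ∈ Ioo 0 T, ∀ x ∈ Ioo 0 L,
    f t x = -(y1 t x + y3 t x + c t * (y t x * y1 t x))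
  bc : ∀ t ∈ Ioo 0 T, y t 0 = 0 ∧ y t L = 0 ∧ y1 t L = 0
  hc : ∀ t ∈ Ioo 0 T, 0 ≤ c t ∧ c t ≤ 1

namespace KSol

variable {L T : ℝ} {c : ℝ → ℝ} {y y1 y2 y3 f : ℝ → ℝ → ℝ}

lemma c0 (h : KSol L T c y y1 y2 y3 f) {t : ℝ} (ht : t ∈ Icc 0 T) :
    ContinuousOn (y t) (Icc 0 L) := by
  have h2 : ContinuousOn (fun x : ℝ => (t, x)) (Icc 0 L) := by fun_prop
  exact h.cont.comp h2 (fun x hx => ⟨ht, hx⟩)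

lemma c1 (h : KSol L T c y y1 y2 y3 f) {t : ℝ} (ht : t ∈ Ioo 0 T) :
    ContinuousOn (y1 t) (Icc 0 L) := fun x hx => (h.d2 t ht x hx).continuousWithinAt

lemma c2 (h : KSol L T c y y1 y2 y3 f) {t : ℝ} (ht : t ∈ Ioo 0 T) :
    ContinuousOn (y2 t) (Icc 0 L) := fun x hx => (h.d3 t ht x hx).continuousWithinAt

lemma ct (h : KSol L T c y y1 y2 y3 f) {x : ℝ} (hx : x ∈ Icc 0 L) :
    ContinuousOn (fun t => y t x) (Icc 0 T) := by
  have h2 : ContinuousOn (fun t : ℝ => (t, x)) (Icc 0 T) := by fun_prop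
  exact h.cont.comp h2 (fun t ht => ⟨ht, hx⟩)

/-- Continuity in time of squared distances. -/
lemma contN (h : KSol L T c y y1 y2 y3 f) (hL : 0 < L) {v : ℝ → ℝ}
    (hv : ContinuousOn v (Icc 0 L)) :
    ContinuousOn (fun s => ∫ x in (0:ℝ)..L, (y s x - v x) ^ 2) (Icc 0 T) := by
  have hj : ContinuousOn (fun p : ℝ × ℝ => (y p.1 p.2 - v p.2) ^ 2) (Icc 0 T ×ˢ Icc 0 L) := by
    have : ContinuousOn (fun p : ℝ × ℝ => v p.2) (Icc 0 T ×ˢ Icc 0 L) :=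
      hv.comp (by fun_prop) (fun p hp => hp.2)
    exact (h.cont.sub this).pow 2
  obtain ⟨K, hK⟩ := (isCompact_Icc.prod isCompact_Icc).exists_bound_of_continuousOn hj
  intro s hs
  apply intervalIntegral.continuousWithinAt_of_dominated_interval (bound := fun _ => K)
  · filter_upwards [self_mem_nhdsWithin] with r hr
    have h1 : ContinuousOn (fun x => (y r x - v x) ^ 2) (Icc 0 L) :=
      ((h.c0 hr).sub hv).pow 2
    rw [uIoc_of_le hL.le]
    exact (h1.mono Ioc_subset_Icc_self).aestronglyMeasurable measurableSet_Ioc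
  · filter_upwards [self_mem_nhdsWithin] with r hr
    refine Eventually.of_forall fun x hx => ?_
    rw [uIoc_of_le hL.le] at hx
    exact hK (r, x) ⟨hr, Ioc_subset_Icc_self hx⟩
  · exact intervalIntegrable_const
  · refine Eventually.of_forall fun x hx => ?_
    rw [uIoc_of_le hL.le] at hx
    exact ((h.ct (Ioc_subset_Icc_self hx)).sub continuousOn_const).pow 2 s hs

/-- The right-hand side as a function continuous up to the boundary. -/
def rhs (_h : KSol L T c y y1 y2 y3 f) (t x : ℝ) : ℝ :=
  -(y1 t x + y3 t x + c t * (y t x * y1 t x))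

lemma cont_rhs (h : KSol L T c y y1 y2 y3 f) {t : ℝ} (ht : t ∈ Ioo 0 T) :
    ContinuousOn (h.rhs t) (Icc 0 L) := by
  have := h.c0 (Ioo_subset_Icc_self ht)
  have := h.c1 ht
  have := h.c3 t ht
  unfold rhs
  fun_prop

/-- Energy computation against a fixed profile `v = y a`. -/
lemma energy (h : KSol L T c y y1 y2 y3 f) (hL : 0 < L) {t a : ℝ} (ht : t ∈ Ioo 0 T)
    (ha : a ∈ Ioo 0 T) :
    ∫ x in (0:ℝ)..L, (h.rhs t x) * (y t x - y a x) ≤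
      - ∫ x in (0:ℝ)..L, ((y t x - y a x) * (y1 a x + y3 a x)
        + c t * ((y t x - y a x) ^ 2 * y1 a x / 2 + (y t x - y a x) * (y a x * y1 a x))) := by
  have t0 := h.c0 (Ioo_subset_Icc_self ht)
  have t1 := h.c1 ht
  have t2 := h.c2 ht
  have t3 := h.c3 t ht
  have a0 := h.c0 (Ioo_subset_Icc_self ha)
  have a1 := h.c1 ha
  have a2 := h.c2 ha
  have a3 := h.c3 a ha
  set H : ℝ → ℝ := fun x => (y t x - y a x) * (y2 t x - y2 a x) - (y1 t x - y1 a x) ^ 2 / 2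
    + (y t x - y a x) ^ 2 / 2
    + c t * ((y t x - y a x) ^ 3 / 3 + (y t x - y a x) ^ 2 * y a x / 2) with hH
  set H' : ℝ → ℝ := fun x => -(h.rhs t x) * (y t x - y a x)
    - ((y t x - y a x) * (y1 a x + y3 a x)
        + c t * ((y t x - y a x) ^ 2 * y1 a x / 2 + (y t x - y a x) * (y a x * y1 a x))) with hH'
  have hr := h.cont_rhs ht
  have hd : ∀ x ∈ Ioo 0 L, HasDerivAt H (H' x) x := by
    intro x hx
    have hn : Icc 0 L ∈ 𝓝 x := Icc_mem_nhds hx.1 hx.2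
    have hx' := Ioo_subset_Icc_self hx
    have e0 := ((h.d1 t ht x hx').hasDerivAt hn).sub ((h.d1 a ha x hx').hasDerivAt hn)
    have e1 := ((h.d2 t ht x hx').hasDerivAt hn).sub ((h.d2 a ha x hx').hasDerivAt hn)
    have e2 := ((h.d3 t ht x hx').hasDerivAt hn).sub ((h.d3 a ha x hx').hasDerivAt hn)
    have ea := (h.d1 a ha x hx').hasDerivAt hn
    have := ((((e0.mul e2).sub ((e1.pow 2).div_const 2)).add ((e0.pow 2).div_const 2)).add
      ((((e0.pow 3).div_const 3).add (((e0.pow 2).mul ea).div_const 2)).const_mul (c t)))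
    refine HasDerivAt.congr_deriv (show HasDerivAt H _ x from this) ?_
    simp only [hH', rhs, Pi.sub_apply, Pi.pow_apply]
    push_cast
    ring
  have hft := intervalIntegral.integral_eq_sub_of_hasDerivAt_of_le hL.le
    (f := H) (f' := H') (by rw [hH]; fun_prop) hd (kdv_ii hL (by rw [hH']; fun_prop))
  obtain ⟨b1, b2, b3⟩ := h.bc t ht
  obtain ⟨b4, b5, b6⟩ := h.bc a ha
  have hHL : 0 ≤ H L - H 0 := by
    simp only [hH, b1, b2, b3, b4, b5, b6]
    ring_nf
    nlinarith [sq_nonneg (y1 t 0 - y1 a 0)]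
  rw [← hft, hH', intervalIntegral.integral_sub (kdv_ii hL (by fun_prop))
    (kdv_ii hL (by fun_prop))] at hHL
  have hneg : ∫ x in (0:ℝ)..L, -(h.rhs t x) * (y t x - y a x)
      = -∫ x in (0:ℝ)..L, (h.rhs t x) * (y t x - y a x) := by
    rw [← intervalIntegral.integral_neg]
    congr 1; ext x; ring
  rw [hneg] at hHL
  linarith

/-- Energy dissipation. -/
lemma energy0 (h : KSol L T c y y1 y2 y3 f) (hL : 0 < L) {t : ℝ} (ht : t ∈ Ioo 0 T) :
    ∫ x in (0:ℝ)..L, (h.rhs t x) * (y t x) ≤ 0 := by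
  have t0 := h.c0 (Ioo_subset_Icc_self ht)
  have t1 := h.c1 ht
  have t2 := h.c2 ht
  have t3 := h.c3 t ht
  set H : ℝ → ℝ := fun x => (y t x) * (y2 t x) - (y1 t x) ^ 2 / 2
    + (y t x) ^ 2 / 2 + c t * ((y t x) ^ 3 / 3) with hH
  set H' : ℝ → ℝ := fun x => -((h.rhs t x) * (y t x)) with hH'
  have hr := h.cont_rhs ht
  have hd : ∀ x ∈ Ioo 0 L, HasDerivAt H (H' x) x := by
    intro x hx
    have hn : Icc 0 L ∈ 𝓝 x := Icc_mem_nhds hx.1 hx.2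
    have hx' := Ioo_subset_Icc_self hx
    have e0 := ((h.d1 t ht x hx').hasDerivAt hn)
    have e1 := ((h.d2 t ht x hx').hasDerivAt hn)
    have e2 := ((h.d3 t ht x hx').hasDerivAt hn)
    have := ((((e0.mul e2).sub ((e1.pow 2).div_const 2)).add ((e0.pow 2).div_const 2)).add
      (((e0.pow 3).div_const 3).const_mul (c t)))
    refine HasDerivAt.congr_deriv (show HasDerivAt H _ x from this) ?_
    simp only [hH', rhs]
    push_cast
    ring
  have hft := intervalIntegral.integral_eq_sub_of_hasDerivAt_of_le hL.le
    (f := H) (f' := H') (by rw [hH]; fun_prop) hd (kdv_ii hL (by rw [hH']; fun_prop))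
  obtain ⟨b1, b2, b3⟩ := h.bc t ht
  have hHL : 0 ≤ H L - H 0 := by
    simp only [hH, b1, b2, b3]
    ring_nf
    nlinarith [sq_nonneg (y1 t 0)]
  rw [← hft, hH', intervalIntegral.integral_neg] at hHL
  linarith

/-- Local right-Lipschitz property in `L²` at time `t`. -/
def RL (L : ℝ) (y : ℝ → ℝ → ℝ) (t : ℝ) : Prop :=
  ∃ C : ℝ, ∀ᶠ s in 𝓝[>] t, ∫ x in (0:ℝ)..L, (y s x - y t x) ^ 2 ≤ C * (s - t) ^ 2

lemma slope_bound (h : KSol L T c y y1 y2 y3 f) (hL : 0 < L) {t : ℝ} (ht : t ∈ Ioo 0 T)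
    (hR : RL L y t) {v : ℝ → ℝ} (hv : ContinuousOn v (Icc 0 L)) {r : ℝ}
    (hr : 2 * ∫ x in (0:ℝ)..L, (h.rhs t x) * (y t x - v x) < r) :
    ∃ᶠ s in 𝓝[>] t, slope (fun s => ∫ x in (0:ℝ)..L, (y s x - v x) ^ 2) t s < r := by
  by_contra hcon
  rw [not_frequently] at hcon
  obtain ⟨C, hC⟩ := hR
  obtain ⟨r', hr1, hr2⟩ := exists_between hr
  have hsmall : ∀ᶠ s in 𝓝[>] t, (s - t) * C < r - r' := by
    have : Tendsto (fun s : ℝ => (s - t) * C) (𝓝[>] t) (𝓝 ((t - t) * C)) :=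
      Tendsto.mono_left (Continuous.tendsto (by fun_prop) t) nhdsWithin_le_nhds
    apply this.eventually_lt_const
    simpa using hr2
  have hin : ∀ᶠ s in 𝓝[>] t, s ∈ Ioo t T := Ioo_mem_nhdsGT ht.2
  have hall := hcon.and (hC.and (hsmall.and hin))
  -- choose a sequence
  obtain ⟨u, -, hu1, hu2⟩ := exists_seq_strictAnti_tendsto' (show t < t + 1 by linarith)
  have hu3 : Tendsto u atTop (𝓝[>] t) :=
    tendsto_nhdsWithin_iff.2 ⟨hu2, Eventually.of_forall fun n => (hu1 n).1⟩
  obtain ⟨N, hN⟩ := (hu3.eventually hall).exists_forall_of_atTop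
  set s : ℕ → ℝ := fun k => u (k + N) with hs
  have hs3 : Tendsto s atTop (𝓝[>] t) := hu3.comp (tendsto_add_atTop_nat N)
  have hsk := fun k => hN (k + N) (by omega)
  have tt := Ioo_subset_Icc_self ht
  have y0 := h.c0 tt
  have hsI : ∀ k, s k ∈ Icc 0 T := fun k =>
    ⟨by have := (hsk k).2.2.2.1; simp only [hs]; linarith [ht.1], (hsk k).2.2.2.2.le⟩
  have hpos : ∀ k, 0 < s k - t := fun k => sub_pos.2 (hsk k).2.2.2.1
  have key := kdv_weak hL (q := fun k x => (s k - t)⁻¹ * (y (s k) x - y t x)) (φ := h.rhs t)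
    (g := fun x => y t x - v x) (D := C) (r := r' / 2)
    (fun k => by have := h.c0 (hsI k); fun_prop)
    (h.cont_rhs ht) (y0.sub hv)
    (fun x hx => by
      have hd := h.dt x hx t ht
      rw [h.eq t ht x hx] at hd
      have := (hasDerivAt_iff_tendsto_slope.1 hd).comp
        (hs3.mono_right (nhdsWithin_mono _ (fun z hz => ne_of_gt hz)))
      refine this.congr fun k => ?_
      simp [slope_def_field, div_eq_inv_mul])
    (fun k => by
      have hk := (hsk k).2.1
      have : ∫ x in (0:ℝ)..L, ((s k - t)⁻¹ * (y (s k) x - y t x)) ^ 2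
          = ((s k - t) ^ 2)⁻¹ * ∫ x in (0:ℝ)..L, (y (s k) x - y t x) ^ 2 := by
        rw [← intervalIntegral.integral_const_mul]
        congr 1; ext x; rw [mul_pow, inv_pow]
      rw [this, inv_mul_le_iff₀ (by have := hpos k; positivity)]
      linarith)
    (fun k => by
      have hk := (hsk k).2.1
      have hk1 := (hsk k).1
      have hk2 := (hsk k).2.2.1
      have hp := hpos k
      change ¬ slope _ t (s k) < r at hk1
      change ∫ x in (0:ℝ)..L, (y (s k) x - y t x) ^ 2 ≤ C * (s k - t) ^ 2 at hk
      change (s k - t) * C < r - r' at hk2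
      rw [not_lt, slope_def_field, le_div_iff₀ hp] at hk1
      have ys := h.c0 (hsI k)
      have e1 : (∫ x in (0:ℝ)..L, (y (s k) x - v x) ^ 2) - ∫ x in (0:ℝ)..L, (y t x - v x) ^ 2
          = (s k - t) * 2 * (∫ x in (0:ℝ)..L, (s k - t)⁻¹ * (y (s k) x - y t x) * (y t x - v x))
            + ∫ x in (0:ℝ)..L, (y (s k) x - y t x) ^ 2 := by
        rw [← intervalIntegral.integral_sub (kdv_ii hL (by fun_prop)) (kdv_ii hL (by fun_prop)),
          ← intervalIntegral.integral_const_mul,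
          ← intervalIntegral.integral_add (kdv_ii hL (by fun_prop)) (kdv_ii hL (by fun_prop))]
        congr 1; ext x; field_simp; ring
      rw [e1] at hk1
      set Q := ∫ x in (0:ℝ)..L, (s k - t)⁻¹ * (y (s k) x - y t x) * (y t x - v x)
      have : r * (s k - t) ≤ (2 * Q + (s k - t) * C) * (s k - t) := by nlinarith
      have := le_of_mul_le_mul_right this hp
      linarith)
  linarith

end KSol

namespace KSol

variable {L T : ℝ} {c : ℝ → ℝ} {y y1 y2 y3 f : ℝ → ℝ → ℝ}

/-- Quantitative regularity of a time slice. -/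
def Good (L : ℝ) (y f : ℝ → ℝ → ℝ) (n t : ℝ) : Prop :=
  (∀ x ∈ Icc 0 L, ∀ x' ∈ Icc 0 L, |y t x - y t x'| ≤ n * |x - x'|) ∧
    ∀ x ∈ Ioo 0 L, |f t x| ≤ n

lemma good_bounds (h : KSol L T c y y1 y2 y3 f) {n a : ℝ} (hn : 0 < n)
    (ha : a ∈ Ioo 0 T) (hg : Good L y f n a) {x : ℝ} (hx : x ∈ Ioo 0 L) :
    |y1 a x| ≤ n ∧ |y a x * y1 a x| ≤ n ^ 2 * L ∧ |y1 a x + y3 a x| ≤ n + n ^ 2 * L := by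
  have hx' := Ioo_subset_Icc_self hx
  have hL : 0 < L := hx.1.trans hx.2
  have hnn : Icc 0 L ∈ 𝓝 x := Icc_mem_nhds hx.1 hx.2
  have h1 : |y1 a x| ≤ n := by
    have := ((h.d1 a ha x hx').hasDerivAt hnn).le_of_lip' hn.le (by
      filter_upwards [hnn] with z hz
      simpa [Real.norm_eq_abs] using hg.1 z hz x hx')
    simpa using this
  have h0 : |y a x| ≤ n * L := by
    have := hg.1 x hx' 0 ⟨le_rfl, hL.le⟩
    rw [(h.bc a ha).1, sub_zero, sub_zero, abs_of_pos hx.1] at this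
    exact this.trans (mul_le_mul_of_nonneg_left hx'.2 hn.le)
  have h2 : |y a x * y1 a x| ≤ n ^ 2 * L := by
    rw [abs_mul]
    calc |y a x| * |y1 a x| ≤ (n * L) * n :=
          mul_le_mul h0 h1 (abs_nonneg _) (by positivity)
      _ = n ^ 2 * L := by ring
  refine ⟨h1, h2, ?_⟩
  have e := h.eq a ha x hx
  have hf := hg.2 x hx
  obtain ⟨c0, c1⟩ := h.hc a ha
  have h3 : |c a * (y a x * y1 a x)| ≤ n ^ 2 * L := by
    rw [abs_mul, abs_of_nonneg c0]
    nlinarith [abs_nonneg (y a x * y1 a x)]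
  have : y1 a x + y3 a x = -f a x - c a * (y a x * y1 a x) := by rw [e]; ring
  rw [this]
  calc |-f a x - c a * (y a x * y1 a x)| ≤ |-f a x| + |c a * (y a x * y1 a x)| := abs_sub _ _
    _ ≤ _ := by rw [abs_neg]; exact add_le_add hf h3

/-- The constant of the anchored estimate. -/
def cK (L n : ℝ) : ℝ := (n + 2 * n ^ 2 * L) * (L + 1) + 1

set_option maxHeartbeats 1000000 in
lemma anchored (h : KSol L T c y y1 y2 y3 f) (hL : 0 < L) {n a b : ℝ} (hn : 1 ≤ n)
    (ha : a ∈ Ioo 0 T) (hb : b < T) (hg : Good L y f n a)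
    (hR : ∀ t ∈ Ioo a b, RL L y t) (hlen : n * (b - a) ≤ 1 / 2) {s : ℝ} (hs : s ∈ Ioc a b) :
    ∫ x in (0:ℝ)..L, (y s x - y a x) ^ 2 ≤ (cK L n * (s - a)) ^ 2 := by
  have hn0 : 0 < n := by linarith
  set K1 := n + 2 * n ^ 2 * L with hK1
  have hK10 : 0 < K1 := by positivity
  set K := cK L n with hK
  have hKe : K = K1 * (L + 1) + 1 := rfl
  have hK0 : 0 < K := by rw [hKe]; positivity
  have a0 := h.c0 (Ioo_subset_Icc_self ha)
  have a1 := h.c1 ha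
  have a3 := h.c3 a ha
  have hcN := h.contN hL a0
  set N : ℝ → ℝ := fun s => ∫ x in (0:ℝ)..L, (y s x - y a x) ^ 2 with hN
  have main : ∀ δ > 0, n * δ ≤ 1 / 2 → N s ≤ (K * (s - a) + δ) ^ 2 := by
    intro δ hδ hnδ
    have hNa : N a = 0 := by simp [hN]
    have hev : ∀ᶠ r in 𝓝[>] a, N r < δ ^ 2 := by
      have h1 : ContinuousWithinAt N (Icc 0 T) a := hcN a (Ioo_subset_Icc_self ha)
      have h2 : Tendsto N (𝓝 a) (𝓝 (N a)) :=
        h1.continuousAt (Icc_mem_nhds ha.1 ha.2)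
      apply (h2.mono_left nhdsWithin_le_nhds).eventually_lt_const
      rw [hNa]; positivity
    obtain ⟨a', ha'1, ha'2⟩ := (hev.and (Ioo_mem_nhdsGT hs.1)).exists
    have hsub : Icc a' s ⊆ Icc 0 T := fun r hr =>
      ⟨by linarith [ha.1, ha'2.1, hr.1], by linarith [hr.2, hs.2]⟩
    have := image_le_of_liminf_slope_right_lt_deriv_boundary (f := N)
      (f' := fun t => 2 * ∫ x in (0:ℝ)..L, (h.rhs t x) * (y t x - y a x)) (a := a') (b := s)
      (hcN.mono hsub)
      (fun t ht r hr => by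
        have htT : t ∈ Ioo 0 T :=
          ⟨by linarith [ha.1, ha'2.1, ht.1], by linarith [ht.2, hs.2]⟩
        exact h.slope_bound hL htT
          (hR t ⟨by linarith [ha'2.1, ht.1], by linarith [ht.2, hs.2]⟩) a0 hr)
      (B := fun r => (K * (r - a) + δ) ^ 2) (B' := fun r => 2 * K * (K * (r - a) + δ))
      (by
        refine ha'1.le.trans (pow_le_pow_left₀ hδ.le ?_ 2)
        have : 0 < K * (a' - a) := mul_pos hK0 (by linarith [ha'2.1])
        linarith)
      (fun r => by
        have := (((((hasDerivAt_id r).sub_const a).const_mul K).add_const δ).pow 2)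
        refine HasDerivAt.congr_deriv (show HasDerivAt (fun r => (K * (r - a) + δ) ^ 2) _ r from this) ?_
        simp
        ring)
      (fun t ht hNt => by
        have htT : t ∈ Ioo 0 T :=
          ⟨by linarith [ha.1, ha'2.1, ht.1], by linarith [ht.2, hs.2]⟩
        have hta : 0 < t - a := by linarith [ha'2.1, ht.1]
        have t0 := h.c0 (Ioo_subset_Icc_self htT)
        set β := K * (t - a) + δ with hβ
        have hβ0 : 0 < β := by positivity
        have hen := h.energy hL htT ha
        obtain ⟨c0, c1⟩ := h.hc t htT
        have hle : - ∫ x in (0:ℝ)..L, ((y t x - y a x) * (y1 a x + y3 a x)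
            + c t * ((y t x - y a x) ^ 2 * y1 a x / 2 + (y t x - y a x) * (y a x * y1 a x)))
            ≤ ∫ x in (0:ℝ)..L,
              (K1 * β / 2 + (K1 / β / 2 + n / 2) * (y t x - y a x) ^ 2) := by
          rw [← intervalIntegral.integral_neg]
          apply intervalIntegral.integral_mono_on_of_le_Ioo hL.le
          · exact kdv_ii hL (by fun_prop)
          · exact kdv_ii hL (by fun_prop)
          · intro x hx
            obtain ⟨g1, g2, g3⟩ := h.good_bounds hn0 ha hg hx
            set w := y t x - y a x
            have k1 : -(w * (y1 a x + y3 a x)) ≤ |w| * (n + n ^ 2 * L) := by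
              refine (neg_le_abs _).trans ?_
              rw [abs_mul]
              exact mul_le_mul_of_nonneg_left g3 (abs_nonneg _)
            have k2 : -(w * (y a x * y1 a x)) ≤ |w| * (n ^ 2 * L) := by
              refine (neg_le_abs _).trans ?_
              rw [abs_mul]
              exact mul_le_mul_of_nonneg_left g2 (abs_nonneg _)
            have k3 : -(w ^ 2 * y1 a x / 2) ≤ n / 2 * w ^ 2 := by
              have := (abs_le.1 g1).1
              nlinarith [sq_nonneg w]
            have k4 : c t * (-(w ^ 2 * y1 a x / 2) + -(w * (y a x * y1 a x)))
                ≤ n / 2 * w ^ 2 + |w| * (n ^ 2 * L) := by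
              have p1 : 0 ≤ n / 2 * w ^ 2 + |w| * (n ^ 2 * L) := by positivity
              calc _ ≤ c t * (n / 2 * w ^ 2 + |w| * (n ^ 2 * L)) :=
                    mul_le_mul_of_nonneg_left (add_le_add k3 k2) c0
                _ ≤ _ := by nlinarith
            have k5 : |w| * K1 ≤ K1 * β / 2 + K1 / β / 2 * w ^ 2 := by
              have e : K1 * β / 2 + K1 / β / 2 * w ^ 2 - |w| * K1
                = K1 / (2 * β) * (|w| - β) ^ 2 := by
                rw [← sq_abs w]; field_simp; ring
              have : 0 ≤ K1 / (2 * β) * (|w| - β) ^ 2 := by positivity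
              linarith
            have k6 : |w| * K1 = |w| * (n + n ^ 2 * L) + |w| * (n ^ 2 * L) := by
              rw [hK1]; ring
            have k7 : -(w * (y1 a x + y3 a x)
                + c t * (w ^ 2 * y1 a x / 2 + w * (y a x * y1 a x)))
                = -(w * (y1 a x + y3 a x))
                  + c t * (-(w ^ 2 * y1 a x / 2) + -(w * (y a x * y1 a x))) := by ring
            have k8 : K1 * β / 2 + (K1 / β / 2 + n / 2) * w ^ 2
              = K1 * β / 2 + K1 / β / 2 * w ^ 2 + n / 2 * w ^ 2 := by ring
            refine k7.le.trans (le_trans ?_ k8.ge)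
            linarith only [k1, k4, k5, k6]
        replace hle := hen.trans hle
        rw [intervalIntegral.integral_add (kdv_ii hL (by fun_prop)) (kdv_ii hL (by fun_prop)),
          intervalIntegral.integral_const_mul, intervalIntegral.integral_const] at hle
        change N t = β ^ 2 at hNt
        change _ ≤ (L - 0) • (K1 * β / 2) + (K1 / β / 2 + n / 2) * N t at hle
        rw [hNt, smul_eq_mul, sub_zero] at hle
        have e1 : L * (K1 * β / 2) + (K1 / β / 2 + n / 2) * β ^ 2
            = (K1 * (L + 1) + n * β) * β / 2 := by field_simp; ring
        rw [e1] at hle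
        have hnβ : n * β ≤ K / 2 + 1 / 2 := by
          have : n * (t - a) ≤ 1 / 2 := by
            refine le_trans ?_ hlen
            apply mul_le_mul_of_nonneg_left _ hn0.le
            linarith [ht.2, hs.2]
          have : n * β = K * (n * (t - a)) + n * δ := by rw [hβ]; ring
          nlinarith
        have : (K1 * (L + 1) + n * β) * β < 2 * K * β := by
          apply mul_lt_mul_of_pos_right _ hβ0
          nlinarith [mul_pos hK10 hL]
        change 2 * (∫ x in (0:ℝ)..L, (h.rhs t x) * (y t x - y a x)) < 2 * K * β
        linarith)
    exact this ⟨ha'2.2.le, le_rfl⟩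
  have ht : Tendsto (fun δ : ℝ => (K * (s - a) + δ) ^ 2) (𝓝[>] 0)
      (𝓝 ((K * (s - a) + 0) ^ 2)) := by
    apply Tendsto.mono_left _ nhdsWithin_le_nhds
    exact (Continuous.tendsto (by fun_prop) 0)
  have hpos : (0:ℝ) < 1 / (2 * n) := by positivity
  have := ge_of_tendsto ht (b := N s) (by
    filter_upwards [Ioo_mem_nhdsGT hpos] with δ hδ
    refine main δ hδ.1 ?_
    have := mul_le_mul_of_nonneg_left hδ.2.le hn0.le
    refine this.trans_eq ?_
    field_simp)
  simpa using this

end KSol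

/-- `(a,b)` is a complementary gap of `P` in `(t,s)`. -/
def KGap (P : Set ℝ) (t s a b : ℝ) : Prop :=
  a ∈ P ∧ t ≤ a ∧ a < b ∧ b ≤ s ∧ (b ∈ P ∨ b = s) ∧ ∀ r ∈ Ioo a b, r ∉ P

lemma kgap_exists {P : Set ℝ} (hP : IsClosed P) {t s q : ℝ} (ht : t ∈ P)
    (hq : q ∈ Ioo t s) (hqP : q ∉ P) : ∃ a b, KGap P t s a b ∧ q ∈ Ioo a b := by
  have hA : IsCompact (P ∩ Icc t q) := isCompact_Icc.inter_left hP
  have hB : IsCompact ((P ∪ {s}) ∩ Icc q s) :=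
    isCompact_Icc.inter_left (hP.union isClosed_singleton)
  obtain ⟨a, ⟨haP, ha1, ha2⟩, hamax⟩ := hA.exists_isGreatest ⟨t, ht, le_rfl, hq.1.le⟩
  obtain ⟨b, ⟨hbP, hb1, hb2⟩, hbmin⟩ :=
    hB.exists_isLeast ⟨s, Or.inr rfl, hq.2.le, le_rfl⟩
  have haq : a < q := lt_of_le_of_ne ha2 (fun e => hqP (e ▸ haP))
  have hqb : q < b := by
    refine lt_of_le_of_ne hb1 (fun e => ?_)
    rcases hbP with hbP | hbP
    · exact hqP (e ▸ hbP)
    · have : b = s := hbP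
      linarith [hq.2]
  refine ⟨a, b, ⟨haP, ha1, haq.trans hqb, hb2, hbP, ?_⟩, haq, hqb⟩
  intro r hr hrP
  rcases le_total r q with hrq | hrq
  · have := hamax ⟨hrP, by linarith [hr.1], hrq⟩
    linarith [hr.1]
  · have := hbmin ⟨Or.inl hrP, hrq, by linarith [hr.2]⟩
    linarith [hr.2]

lemma kgap_eq {P : Set ℝ} {t s a b a' b' r : ℝ} (h : KGap P t s a b) (h' : KGap P t s a' b')
    (hr : r ∈ Ioo a b) (hr' : r ∈ Ioo a' b') : a = a' ∧ b = b' := by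
  obtain ⟨p1, p2, p3, p4, p5, p6⟩ := h
  obtain ⟨q1, q2, q3, q4, q5, q6⟩ := h'
  constructor
  · rcases lt_trichotomy a a' with e | e | e
    · exact absurd q1 (p6 _ ⟨e, hr'.1.trans hr.2⟩)
    · exact e
    · exact absurd p1 (q6 _ ⟨e, hr.1.trans hr'.2⟩)
  · rcases lt_trichotomy b b' with e | e | e
    · rcases p5 with p5 | p5
      · exact absurd p5 (q6 _ ⟨hr'.1.trans hr.2, e⟩)
      · linarith
    · exact e
    · rcases q5 with q5 | q5
      · exact absurd q5 (p6 _ ⟨hr.1.trans hr'.2, e⟩)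
      · linarith

lemma kgap_enum {P : Set ℝ} (hP : IsClosed P) {t s : ℝ} (ht : t ∈ P) :
    ∃ g : ℕ → Set ℝ, (∀ k, g k = ∅ ∨ ∃ a b, KGap P t s a b ∧ g k = Ioo a b) ∧
      ⋃ k, g k = Ioo t s \ P := by
  have h1 : ∀ q : ℚ, ∃ S : Set ℝ, (S = ∅ ∨ ∃ a b, KGap P t s a b ∧ S = Ioo a b) ∧
      ((q : ℝ) ∈ Ioo t s \ P → (q : ℝ) ∈ S) := by
    intro q
    by_cases hq : (q : ℝ) ∈ Ioo t s \ P
    · obtain ⟨a, b, hg, hqg⟩ := kgap_exists hP ht hq.1 hq.2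
      exact ⟨Ioo a b, Or.inr ⟨a, b, hg, rfl⟩, fun _ => hqg⟩
    · exact ⟨∅, Or.inl rfl, fun h => absurd h hq⟩
  choose S hS1 hS2 using h1
  obtain ⟨e, he⟩ := exists_surjective_nat ℚ
  refine ⟨fun k => S (e k), fun k => hS1 (e k), ?_⟩
  have hsub : ∀ a b, KGap P t s a b → Ioo a b ⊆ Ioo t s \ P := by
    rintro a b ⟨p1, p2, p3, p4, p5, p6⟩ r hr
    exact ⟨⟨by linarith [hr.1], by linarith [hr.2]⟩, p6 r hr⟩
  apply Subset.antisymm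
  · apply iUnion_subset
    intro k
    rcases hS1 (e k) with h | ⟨a, b, hg, h⟩
    · rw [h]; exact empty_subset _
    · rw [h]; exact hsub a b hg
  · intro r hr
    obtain ⟨a, b, hg, hrg⟩ := kgap_exists hP ht hr.1 hr.2
    obtain ⟨q, hq1, hq2⟩ := exists_rat_btwn (hrg.1.trans hrg.2)
    have hqW := hsub a b hg ⟨hq1, hq2⟩
    have hqS := hS2 q hqW
    obtain ⟨k, hk⟩ := he q
    rw [mem_iUnion]
    refine ⟨k, ?_⟩
    rw [hk]
    rcases hS1 q with h | ⟨a', b', hg', h⟩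
    · rw [h] at hqS; exact absurd hqS (notMem_empty _)
    · rw [h] at hqS ⊢
      obtain ⟨e1, e2⟩ := kgap_eq hg hg' ⟨hq1, hq2⟩ hqS
      rw [← e1, ← e2]; exact hrg

namespace KSol

variable {L T : ℝ} {c : ℝ → ℝ} {y y1 y2 y3 f : ℝ → ℝ → ℝ}

lemma ftc (h : KSol L T c y y1 y2 y3 f) {a b x : ℝ} (ha : 0 < a) (hab : a ≤ b) (hb : b < T)
    (hx : x ∈ Ioo 0 L) : ∫ τ in Ioo a b, f τ x = y b x - y a x := by
  have hsub : Icc a b ⊆ Ioo 0 T := fun r hr => ⟨by linarith [hr.1], by linarith [hr.2]⟩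
  rw [← integral_Ioc_eq_integral_Ioo, ← intervalIntegral.integral_of_le hab]
  apply intervalIntegral.integral_eq_sub_of_hasDerivAt (f := fun s => y s x)
  · intro r hr
    rw [uIcc_of_le hab] at hr
    exact h.dt x hx r (hsub hr)
  · apply ContinuousOn.intervalIntegrable
    rw [uIcc_of_le hab]
    exact (h.cf x hx).mono hsub

lemma portion_fin (h : KSol L T c y y1 y2 y3 f) (hL : 0 < L) {n t s : ℝ} (hn : 1 ≤ n)
    {P : Set ℝ} (ht0 : 0 < t) (hsT : s < T)
    (hlen : n * (s - t) ≤ 1 / 2) (hG : ∀ r ∈ P, r ∈ Ico t s → Good L y f n r)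
    (hR : ∀ r ∈ Ioo t s, r ∉ P → RL L y r)
    {g : ℕ → Set ℝ} (hg : ∀ k, g k = ∅ ∨ ∃ a b, KGap P t s a b ∧ g k = Ioo a b) (m : ℕ) :
    ∃ B : ℝ → ℝ, ContinuousOn B (Icc 0 L) ∧
      (∀ x ∈ Ioo 0 L, B x = ∫ τ in (⋃ i ∈ Finset.range m, g i), f τ x) ∧
      ∫ x in (0:ℝ)..L, (B x) ^ 2 ≤
        (cK L n * volume.real (⋃ i ∈ Finset.range m, g i)) ^ 2 := by
  have hn0 : 0 < n := by linarith
  have hK0 : 0 < cK L n := by unfold cK; positivity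
  induction m with
  | zero => exact ⟨fun _ => 0, continuousOn_const, by simp, by simp⟩
  | succ m ih =>
    rw [Finset.range_add_one, Finset.set_biUnion_insert, union_comm]
    set W := ⋃ i ∈ Finset.range m, g i with hW
    obtain ⟨B, hB1, hB2, hB3⟩ := ih
    rcases hg m with hm | ⟨a, b, hgap, hm⟩
    · rw [hm, union_empty]; exact ⟨B, hB1, hB2, hB3⟩
    · by_cases hd : g m ⊆ W
      · rw [union_eq_self_of_subset_right hd]; exact ⟨B, hB1, hB2, hB3⟩
      have hdis : Disjoint W (g m) := by
        rw [Set.disjoint_left]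
        intro r hrW hrm
        apply hd
        rw [hW] at hrW ⊢
        simp only [mem_iUnion] at hrW
        obtain ⟨i, hi, hri⟩ := hrW
        have : g m = g i := by
          rcases hg i with hi' | ⟨a', b', hgap', hi'⟩
          · rw [hi'] at hri; exact absurd hri (notMem_empty _)
          · rw [hi'] at hri
            rw [hm] at hrm
            obtain ⟨e1, e2⟩ := kgap_eq hgap hgap' hrm hri
            rw [hm, hi', e1, e2]
        rw [this]
        exact subset_biUnion_of_mem (u := fun i => g i) hi
      obtain ⟨p1, p2, p3, p4, p5, p6⟩ := hgap
      have hgi : ∀ i, MeasurableSet (g i) ∧ g i ⊆ Icc t s := by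
        intro i
        rcases hg i with hi' | ⟨a', b', hgap', hi'⟩
        · rw [hi']; exact ⟨MeasurableSet.empty, empty_subset _⟩
        · rw [hi']
          exact ⟨measurableSet_Ioo, fun r hr =>
            ⟨by linarith [hgap'.2.1, hr.1], by linarith [hgap'.2.2.2.1, hr.2]⟩⟩
      have hWs : W ⊆ Icc t s := iUnion₂_subset fun i _ => (hgi i).2
      have hsub : Icc t s ⊆ Ioo 0 T := fun r hr => ⟨by linarith [hr.1], by linarith [hr.2]⟩
      have hIntg : ∀ x ∈ Ioo 0 L, IntegrableOn (fun τ => f τ x) (Icc t s) := fun x hx =>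
        ((h.cf x hx).mono hsub).integrableOn_Icc
      have haT : a ∈ Ioo 0 T := ⟨by linarith, by linarith⟩
      have hbT : b ∈ Ioo 0 T := ⟨by linarith, by linarith⟩
      have ca := h.c0 (Ioo_subset_Icc_self haT)
      have cb := h.c0 (Ioo_subset_Icc_self hbT)
      have hanch := h.anchored hL hn haT hbT.2 (hG a p1 ⟨p2, by linarith⟩)
        (fun r hr => hR r ⟨by linarith [hr.1], by linarith [hr.2]⟩ (p6 r hr))
        (le_trans (mul_le_mul_of_nonneg_left (by linarith) hn0.le) hlen) ⟨p3, le_rfl⟩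
      have hvol : volume.real (W ∪ g m) = volume.real W + (b - a) := by
        rw [measureReal_union hdis (hgi m).1
          ((measure_mono hWs).trans_lt measure_Icc_lt_top).ne
          ((measure_mono (hgi m).2).trans_lt measure_Icc_lt_top).ne, hm, Real.volume_real_Ioo_of_le p3.le]
      refine ⟨fun x => B x + (y b x - y a x), hB1.add (cb.sub ca), ?_, ?_⟩
      · intro x hx
        rw [setIntegral_union hdis (hgi m).1 ((hIntg x hx).mono_set hWs)
          ((hIntg x hx).mono_set (hgi m).2), ← hB2 x hx, hm, h.ftc haT.1 p3.le hbT.2 hx]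
      · rw [hvol, mul_add]
        exact kdv_minkowski hL (by positivity) (mul_pos hK0 (by linarith)) hB1 (cb.sub ca)
          hB3 hanch

lemma portion (h : KSol L T c y y1 y2 y3 f) (hL : 0 < L) {n t s : ℝ} (hn : 1 ≤ n)
    {P : Set ℝ} (hP : IsClosed P) (ht0 : 0 < t) (hst : t < s) (hsT : s < T) (htP : t ∈ P)
    (hlen : n * (s - t) ≤ 1 / 2) (hG : ∀ r ∈ P, r ∈ Ico t s → Good L y f n r)
    (hR : ∀ r ∈ Ioo t s, r ∉ P → RL L y r) :
    ∫ x in (0:ℝ)..L, (y s x - y t x) ^ 2 ≤ 2 * ((cK L n) ^ 2 + n ^ 2 * L) * (s - t) ^ 2 := by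
  have hn0 : 0 < n := by linarith
  have hK0 : 0 < cK L n := by unfold cK; positivity
  obtain ⟨g, hg, hgU⟩ := kgap_enum (s := s) hP htP
  choose B hB1 hB2 hB3 using h.portion_fin hL hn ht0 hsT hlen hG hR hg
  have hgi : ∀ i, MeasurableSet (g i) := by
    intro i
    rcases hg i with hi' | ⟨a', b', hgap', hi'⟩
    · rw [hi']; exact MeasurableSet.empty
    · rw [hi']; exact measurableSet_Ioo
  set W : ℕ → Set ℝ := fun m => ⋃ i ∈ Finset.range m, g i with hW
  have hWU : ⋃ m, W m = Ioo t s \ P := by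
    rw [← hgU]
    apply Subset.antisymm
    · exact iUnion_subset fun m => iUnion₂_subset fun i _ => subset_iUnion g i
    · refine iUnion_subset fun i => ?_
      refine subset_trans ?_ (subset_iUnion W (i + 1))
      exact subset_biUnion_of_mem (u := fun i => g i) (by simp)
  have hWmono : Monotone W := by
    intro m m' hmm
    exact biUnion_subset_biUnion_left (fun i hi => by
      have := Finset.mem_range.1 hi
      exact Finset.mem_range.2 (by omega))
  have hWm : ∀ m, MeasurableSet (W m) := fun m =>
    Finset.measurableSet_biUnion _ (fun i _ => hgi i)
  have hWs : ∀ m, W m ⊆ Ioo t s := fun m =>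
    (subset_iUnion W m).trans (hWU ▸ sdiff_subset)
  have hsub : Icc t s ⊆ Ioo 0 T := fun r hr => ⟨by linarith [hr.1], by linarith [hr.2]⟩
  have hIntg : ∀ x ∈ Ioo 0 L, IntegrableOn (fun τ => f τ x) (Icc t s) := fun x hx =>
    ((h.cf x hx).mono hsub).integrableOn_Icc
  have ct := h.c0 (Ioo_subset_Icc_self (hsub ⟨le_rfl, hst.le⟩))
  have cs := h.c0 (Ioo_subset_Icc_self (hsub ⟨hst.le, le_rfl⟩))
  have key := kdv_fatou hL (F := fun m x => (B m x) ^ 2)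
    (G := fun x => (y s x - y t x) ^ 2 / 2 - n ^ 2 * (s - t) ^ 2) (B := (cK L n * (s - t)) ^ 2)
    (fun m => (hB1 m).pow 2) (fun m x _ => sq_nonneg _) (by fun_prop)
    (fun x hx => by
      refine ⟨(∫ τ in Ioo t s \ P, f τ x) ^ 2, ?_, ?_⟩
      · have := tendsto_setIntegral_of_monotone (μ := volume) (f := fun τ => f τ x) hWm hWmono
          ((hIntg x hx).mono_set (by rw [hWU]; exact sdiff_subset.trans Ioo_subset_Icc_self))
        rw [hWU] at this
        refine (this.pow 2).congr fun m => ?_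
        rw [hB2 m x hx]
      · have e := h.ftc ht0 hst.le hsT hx
        have e2 := integral_inter_add_sdiff (μ := volume) (f := fun τ => f τ x) (s := Ioo t s)
          hP.measurableSet ((hIntg x hx).mono_set Ioo_subset_Icc_self)
        have e3 : |∫ τ in Ioo t s ∩ P, f τ x| ≤ n * (s - t) := by
          have h1 := norm_setIntegral_le_of_norm_le_const (μ := volume) (s := Ioo t s ∩ P)
            (f := fun τ => f τ x) (C := n)
            ((measure_mono inter_subset_left).trans_lt measure_Ioo_lt_top)
            (fun r hr => (hG r hr.2 (Ioo_subset_Ico_self hr.1)).2 x hx)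
          refine h1.trans (mul_le_mul_of_nonneg_left ?_ hn0.le)
          refine (measureReal_mono inter_subset_left measure_Ioo_lt_top.ne).trans_eq ?_
          rw [Real.volume_real_Ioo_of_le hst.le]
        rw [e] at e2
        have e4 : (∫ τ in Ioo t s ∩ P, f τ x) ^ 2 ≤ (n * (s - t)) ^ 2 := sq_le_sq' (abs_le.1 e3).1 (abs_le.1 e3).2
        change (y s x - y t x) ^ 2 / 2 - n ^ 2 * (s - t) ^ 2 ≤ _
        rw [← e2]
        set A := ∫ τ in Ioo t s ∩ P, f τ x
        set D := ∫ τ in Ioo t s \ P, f τ x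
        nlinarith [sq_nonneg (A - D)])
    (fun m => by
      refine (hB3 m).trans (pow_le_pow_left₀ (by positivity) ?_ 2)
      refine mul_le_mul_of_nonneg_left ?_ hK0.le
      refine (measureReal_mono (hWs m) measure_Ioo_lt_top.ne).trans_eq ?_
      rw [Real.volume_real_Ioo_of_le hst.le])
  rw [intervalIntegral.integral_sub (kdv_ii hL (by fun_prop)) (kdv_ii hL (by fun_prop)),
    intervalIntegral.integral_div, intervalIntegral.integral_const, smul_eq_mul] at key
  nlinarith

end KSol

namespace KSol

variable {L T : ℝ} {c : ℝ → ℝ} {y y1 y2 y3 f : ℝ → ℝ → ℝ}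

lemma good_exists (h : KSol L T c y y1 y2 y3 f) {t : ℝ} (ht : t ∈ Ioo 0 T) :
    ∃ n : ℕ, Good L y f ((n : ℝ) + 1) t := by
  obtain ⟨M1, hM1⟩ := isCompact_Icc.exists_bound_of_continuousOn (h.c1 ht)
  obtain ⟨M2, hM2⟩ := isCompact_Icc.exists_bound_of_continuousOn (h.cont_rhs ht)
  obtain ⟨n, hn⟩ := exists_nat_ge (max M1 M2)
  have h1 : M1 ≤ (n : ℝ) + 1 := by linarith [le_max_left M1 M2]
  have h2 : M2 ≤ (n : ℝ) + 1 := by linarith [le_max_right M1 M2]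
  refine ⟨n, ?_, ?_⟩
  · intro x hx x' hx'
    have := (convex_Icc (0:ℝ) L).norm_image_sub_le_of_norm_hasDerivWithin_le
      (fun z hz => h.d1 t ht z hz) (fun z hz => (hM1 z hz).trans h1) hx' hx
    simpa [Real.norm_eq_abs] using this
  · intro x hx
    rw [h.eq t ht x hx]
    exact (hM2 x (Ioo_subset_Icc_self hx)).trans h2

lemma allR (h : KSol L T c y y1 y2 y3 f) (hL : 0 < L) :
    ∀ t ∈ Ioo 0 T, RL L y t := by
  set S : Set ℝ := {t | RL L y t} with hS
  set P : Set ℝ := (interior S)ᶜ with hPdef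
  have hP : IsClosed P := isOpen_interior.isClosed_compl
  have hIntg : ∀ t, t ∈ interior S → RL L y t := fun t ht =>
    (show t ∈ S from interior_subset ht)
  by_contra! hcon
  obtain ⟨t1, ht1, ht1R⟩ := hcon
  set P0 : Set ℝ := Ioo 0 T ∩ P with hP0
  have ht1P : t1 ∈ P0 := ⟨ht1, fun hi => ht1R (hIntg _ hi)⟩
  have hGδ : IsGδ P0 := isOpen_Ioo.isGδ.inter hP.isGδ
  have : BaireSpace P0 := hGδ.baireSpace_of_t2Space_locallyCompactSpace
  have : Nonempty P0 := ⟨⟨t1, ht1P⟩⟩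
  set A : ℕ → Set P0 := fun n => {t | Good L y f ((n : ℝ) + 1) t} with hA
  have hAc : ∀ n, IsClosed (A n) := by
    intro n
    have e : A n = (⋂ x ∈ Icc 0 L, ⋂ x' ∈ Icc 0 L,
        {t : P0 | |y t x - y t x'| ≤ ((n : ℝ) + 1) * |x - x'|}) ∩
        ⋂ x ∈ Ioo 0 L, {t : P0 | |f t x| ≤ (n : ℝ) + 1} := by
      ext t
      simp only [hA, Good, mem_inter_iff, mem_iInter, mem_ofPred_eq]
    have cy : ∀ x ∈ Icc 0 L, Continuous (fun t : P0 => y t x) := fun x hx =>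
      (h.ct hx).comp_continuous continuous_subtype_val
        (fun t => Ioo_subset_Icc_self t.2.1)
    rw [e]
    apply IsClosed.inter
    · refine isClosed_biInter fun x hx => isClosed_biInter fun x' hx' => ?_
      exact isClosed_le ((cy x hx).sub (cy x' hx')).abs continuous_const
    · refine isClosed_biInter fun x hx => ?_
      have : Continuous (fun t : P0 => f t x) :=
        (h.cf x hx).comp_continuous continuous_subtype_val (fun t => t.2.1)
      exact isClosed_le this.abs continuous_const
  have hAU : ⋃ n, A n = univ := by
    rw [eq_univ_iff_forall]
    intro t
    obtain ⟨n, hn⟩ := h.good_exists t.2.1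
    exact mem_iUnion.2 ⟨n, hn⟩
  obtain ⟨n, ⟨t0, ht0P⟩, ht0⟩ := nonempty_interior_of_iUnion_of_closed hAc hAU
  rw [mem_interior_iff_mem_nhds, nhds_subtype_eq_comap] at ht0
  obtain ⟨U, hU, hUA⟩ := ht0
  have ht0T : t0 ∈ Ioo 0 T := ht0P.1
  set N : ℝ := (n : ℝ) + 1 with hN
  have hN1 : 1 ≤ N := by rw [hN]; linarith [(Nat.cast_nonneg n : (0:ℝ) ≤ n)]
  have hN0 : 0 < N := by linarith
  obtain ⟨ρ1, hρ1, hball⟩ := Metric.mem_nhds_iff.1 (inter_mem hU (Ioo_mem_nhds ht0T.1 ht0T.2))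
  set ρ := min ρ1 (1 / (4 * N)) with hρdef
  have hρ : 0 < ρ := lt_min hρ1 (by positivity)
  have hρN : N * (2 * ρ) ≤ 1 / 2 := by
    have : ρ ≤ 1 / (4 * N) := min_le_right _ _
    calc N * (2 * ρ) ≤ N * (2 * (1 / (4 * N))) := by gcongr
      _ = 1 / 2 := by field_simp; norm_num
  have hI : ∀ r ∈ Ioo (t0 - ρ) (t0 + ρ), r ∈ U ∧ r ∈ Ioo 0 T := by
    intro r hr
    apply hball
    rw [Metric.mem_ball, Real.dist_eq, abs_lt]
    have : ρ ≤ ρ1 := min_le_left _ _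
    exact ⟨by linarith [hr.1], by linarith [hr.2]⟩
  have hGood : ∀ r ∈ P, r ∈ Ioo (t0 - ρ) (t0 + ρ) → Good L y f N r := by
    intro r hrP hr
    exact hUA (show (⟨r, (hI r hr).2, hrP⟩ : P0) ∈ Subtype.val ⁻¹' U from (hI r hr).1)
  have hIS : Ioo (t0 - ρ) (t0 + ρ) ⊆ S := by
    intro t ht
    by_cases htP : t ∈ P
    · refine ⟨2 * ((cK L N) ^ 2 + N ^ 2 * L), ?_⟩
      filter_upwards [Ioo_mem_nhdsGT ht.2] with s hs
      have hsI : s ∈ Ioo (t0 - ρ) (t0 + ρ) := ⟨ht.1.trans hs.1, hs.2⟩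
      apply h.portion hL hN1 hP (hI t ht).2.1 hs.1 (hI s hsI).2.2 htP
      · refine le_trans (mul_le_mul_of_nonneg_left ?_ hN0.le) hρN
        linarith [ht.1, hs.2]
      · intro r hrP hr
        exact hGood r hrP ⟨by linarith [ht.1, hr.1], by linarith [hs.2, hr.2]⟩
      · intro r hr hrP
        exact hIntg _ (not_not.1 hrP)
    · exact hIntg _ (not_not.1 htP)
  exact ht0P.2 (mem_interior.2 ⟨_, hIS, isOpen_Ioo, ⟨by linarith, by linarith⟩⟩)

lemma antitone (h : KSol L T c y y1 y2 y3 f) (hL : 0 < L) {a b : ℝ} (ha : 0 ≤ a)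
    (hab : a ≤ b) (hb : b ≤ T) :
    ∫ x in (0:ℝ)..L, (y b x) ^ 2 ≤ ∫ x in (0:ℝ)..L, (y a x) ^ 2 := by
  have hR := h.allR hL
  have hcN := h.contN hL (v := fun _ => 0) continuousOn_const
  have hpos : ∀ a, 0 < a → a ≤ b → ∫ x in (0:ℝ)..L, (y b x - 0) ^ 2 ≤
      ∫ x in (0:ℝ)..L, (y a x - 0) ^ 2 := by
    intro a ha hab
    have := image_le_of_liminf_slope_right_le_deriv_boundary
      (f := fun s => ∫ x in (0:ℝ)..L, (y s x - 0) ^ 2) (a := a) (b := b)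
      (hcN.mono (Icc_subset_Icc ha.le hb))
      (B := fun _ => ∫ x in (0:ℝ)..L, (y a x - 0) ^ 2) (B' := fun _ => 0) le_rfl
      continuousOn_const (fun x _ => hasDerivWithinAt_const _ _ _)
      (fun t ht r hr => by
        have htT : t ∈ Ioo 0 T := ⟨by linarith [ht.1], by linarith [ht.2]⟩
        refine h.slope_bound hL htT (hR t htT) (v := fun _ => 0) continuousOn_const ?_
        have := h.energy0 hL htT
        simp only [sub_zero]
        linarith)
    exact this ⟨hab, le_rfl⟩
  simp only [sub_zero] at hpos hcN
  rcases ha.eq_or_lt with rfl | ha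
  · rcases hab.eq_or_lt with rfl | hab
    · exact le_rfl
    have hT : 0 < T := by linarith
    have hc0 : ContinuousWithinAt _ (Icc 0 T) 0 := hcN 0 ⟨le_rfl, hT.le⟩
    have h2 : Tendsto (fun s => ∫ x in (0:ℝ)..L, (y s x) ^ 2) (𝓝[>] 0)
        (𝓝 (∫ x in (0:ℝ)..L, (y 0 x) ^ 2)) :=
      hc0.mono_left (nhdsWithin_le_of_mem (mem_of_superset (Ioo_mem_nhdsGT hT)
        Ioo_subset_Icc_self))
    apply ge_of_tendsto h2
    filter_upwards [Ioo_mem_nhdsGT hab] with s hs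
    exact hpos s hs.1 hs.2.le
  · exact hpos a ha hab

end KSol

lemma ksol_of {L T : ℝ} (hL : 0 < L) (hT : 0 < T) {c : ℝ → ℝ} {y : ℝ → ℝ → ℝ}
    (h1 : ∀ t ∈ Icc (0:ℝ) T, ContDiffOn ℝ 3 (y t) (Icc (0:ℝ) L))
    (h2 : ∀ x ∈ Icc (0:ℝ) L, ContDiffOn ℝ 1 (fun s => y s x) (Icc (0:ℝ) T))
    (h3 : ContinuousOn (fun p : ℝ × ℝ => y p.1 p.2) (Icc (0:ℝ) T ×ˢ Icc (0:ℝ) L))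
    (h4 : ∀ t ∈ Ioo (0:ℝ) T, ∀ x ∈ Ioo (0:ℝ) L,
      derivWithin (fun s => y s x) (Icc (0:ℝ) T) t
      + derivWithin (y t) (Icc (0:ℝ) L) x
      + iteratedDerivWithin 3 (y t) (Icc (0:ℝ) L) x
      + c t * (y t x * derivWithin (y t) (Icc (0:ℝ) L) x) = 0)
    (h5 : ∀ t ∈ Icc (0:ℝ) T,
      y t 0 = 0 ∧ y t L = 0 ∧ derivWithin (y t) (Icc (0:ℝ) L) L = 0)
    (h6 : ∀ t, 0 ≤ c t ∧ c t ≤ 1) :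
    KSol L T c y (fun t => derivWithin (y t) (Icc 0 L))
      (fun t => iteratedDerivWithin 2 (y t) (Icc 0 L))
      (fun t => iteratedDerivWithin 3 (y t) (Icc 0 L))
      (fun t x => derivWithin (fun s => y s x) (Icc 0 T) t) := by
  have uL := uniqueDiffOn_Icc hL
  have uT := uniqueDiffOn_Icc hT
  have e1 : ∀ g : ℝ → ℝ, iteratedDerivWithin 1 g (Icc 0 L) = derivWithin g (Icc 0 L) := by
    intro g; ext x; simp [iteratedDerivWithin_one]
  refine ⟨h3, ?_, ?_, ?_, ?_, ?_, ?_, ?_, ?_, fun t _ => h6 t⟩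
  · intro t ht x hx
    exact ((h1 t (Ioo_subset_Icc_self ht)).differentiableOn (by norm_num) x hx).hasDerivWithinAt
  · intro t ht x hx
    have := ((h1 t (Ioo_subset_Icc_self ht)).differentiableOn_iteratedDerivWithin
      (m := 1) (by norm_num) uL x hx).hasDerivWithinAt
    rw [← iteratedDerivWithin_succ, e1] at this
    exact this
  · intro t ht x hx
    have := ((h1 t (Ioo_subset_Icc_self ht)).differentiableOn_iteratedDerivWithin
      (m := 2) (by norm_num) uL x hx).hasDerivWithinAt
    rw [← iteratedDerivWithin_succ] at this
    exact this
  · intro t ht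
    exact (h1 t (Ioo_subset_Icc_self ht)).continuousOn_iteratedDerivWithin le_rfl uL
  · intro x hx t ht
    exact (((h2 x (Ioo_subset_Icc_self hx)).differentiableOn (by norm_num) t
      (Ioo_subset_Icc_self ht)).hasDerivWithinAt).hasDerivAt (Icc_mem_nhds ht.1 ht.2)
  · intro x hx
    exact ((h2 x (Ioo_subset_Icc_self hx)).continuousOn_derivWithin uT le_rfl).mono
      Ioo_subset_Icc_self
  · intro t ht x hx
    have := h4 t ht x hx
    linarith
  · intro t ht
    exact h5 t (Ioo_subset_Icc_self ht)

lemma ksol_sub {L T τ : ℝ} {c c' : ℝ → ℝ} {y y1 y2 y3 f z z1 z2 z3 g : ℝ → ℝ → ℝ}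
    (h : KSol L T c y y1 y2 y3 f) (h' : KSol L T c' z z1 z2 z3 g) (hτ : τ ≤ T)
    (hc : ∀ t ∈ Ioo 0 τ, c t = 0) (hc' : ∀ t ∈ Ioo 0 τ, c' t = 0) :
    KSol L τ (fun _ => 0) (fun t x => y t x - z t x) (fun t x => y1 t x - z1 t x)
      (fun t x => y2 t x - z2 t x) (fun t x => y3 t x - z3 t x)
      (fun t x => f t x - g t x) := by
  have hs : Ioo 0 τ ⊆ Ioo 0 T := Ioo_subset_Ioo_right hτ
  refine ⟨?_, ?_, ?_, ?_, ?_, ?_, ?_, ?_, ?_, fun t _ => ⟨le_rfl, zero_le_one⟩⟩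
  · exact (h.cont.sub h'.cont).mono (prod_mono (Icc_subset_Icc_right hτ) le_rfl)
  · exact fun t ht x hx => (h.d1 t (hs ht) x hx).sub (h'.d1 t (hs ht) x hx)
  · exact fun t ht x hx => (h.d2 t (hs ht) x hx).sub (h'.d2 t (hs ht) x hx)
  · exact fun t ht x hx => (h.d3 t (hs ht) x hx).sub (h'.d3 t (hs ht) x hx)
  · exact fun t ht => (h.c3 t (hs ht)).sub (h'.c3 t (hs ht))
  · exact fun x hx t ht => (h.dt x hx t (hs ht)).sub (h'.dt x hx t (hs ht))
  · exact fun x hx => ((h.cf x hx).sub (h'.cf x hx)).mono hs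
  · intro t ht x hx
    rw [h.eq t (hs ht) x hx, h'.eq t (hs ht) x hx, hc t ht, hc' t ht]
    ring
  · intro t ht
    obtain ⟨a1, a2, a3⟩ := h.bc t (hs ht)
    obtain ⟨b1, b2, b3⟩ := h'.bc t (hs ht)
    simp [a1, a2, a3, b1, b2, b3]

lemma kdv_sq_sub {L : ℝ} (hL : 0 < L) {u v : ℝ → ℝ} (hu : ContinuousOn u (Icc 0 L))
    (hv : ContinuousOn v (Icc 0 L)) :
    ∫ x in (0:ℝ)..L, (u x - v x) ^ 2 ≤
      2 * (∫ x in (0:ℝ)..L, (u x) ^ 2) + 2 * ∫ x in (0:ℝ)..L, (v x) ^ 2 := by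
  rw [← intervalIntegral.integral_const_mul, ← intervalIntegral.integral_const_mul,
    ← intervalIntegral.integral_add (kdv_ii hL (by fun_prop)) (kdv_ii hL (by fun_prop))]
  apply intervalIntegral.integral_mono_on hL.le (kdv_ii hL (by fun_prop))
    (kdv_ii hL (by fun_prop))
  intro x _
  nlinarith [sq_nonneg (u x + v x)]

lemma kdv_pair {L T : ℝ} (hL : 0 < L)
    {c c' : ℝ → ℝ} {y y1 y2 y3 f z z1 z2 z3 g : ℝ → ℝ → ℝ}
    (h : KSol L T c y y1 y2 y3 f) (h' : KSol L T c' z z1 z2 z3 g)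
    (hc : ∀ t, 1 ≤ ∫ x in (0:ℝ)..L, (y t x) ^ 2 → c t = 0) (hc' : ∀ t, c' t = 0)
    (h0 : ∀ x ∈ Icc 0 L, y 0 x = z 0 x) {t : ℝ} (ht : t ∈ Icc 0 T) :
    ∫ x in (0:ℝ)..L, (y t x - z t x) ^ 2 ≤ 6 := by
  have hA : ∀ τ ∈ Icc 0 T, 1 ≤ ∫ x in (0:ℝ)..L, (y τ x) ^ 2 →
      ∫ x in (0:ℝ)..L, (y τ x - z τ x) ^ 2 ≤ 0 := by
    intro τ hτ h1
    have hw := ksol_sub h h' hτ.2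
      (fun s hs => hc s (h1.trans (h.antitone hL hs.1.le hs.2.le hτ.2))) (fun s _ => hc' s)
    refine (hw.antitone hL le_rfl hτ.1 le_rfl).trans_eq ?_
    rw [intervalIntegral.integral_congr (g := fun _ => (0:ℝ)), intervalIntegral.integral_zero]
    intro x hx
    rw [uIcc_of_le hL.le] at hx
    simp [h0 x hx]
  by_cases h1 : 1 ≤ ∫ x in (0:ℝ)..L, (y t x) ^ 2
  · linarith [hA t ht h1]
  rw [not_le] at h1
  have hz : ∫ x in (0:ℝ)..L, (z t x) ^ 2 ≤ 2 := by
    by_cases h2 : ∫ x in (0:ℝ)..L, (y 0 x) ^ 2 ≤ 1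
    · have e : ∫ x in (0:ℝ)..L, (z 0 x) ^ 2 = ∫ x in (0:ℝ)..L, (y 0 x) ^ 2 := by
        apply intervalIntegral.integral_congr
        intro x hx
        rw [uIcc_of_le hL.le] at hx
        simp [h0 x hx]
      linarith [h'.antitone hL le_rfl ht.1 ht.2]
    · rw [not_le] at h2
      have hcN := h.contN hL (v := fun _ => 0) continuousOn_const
      simp only [sub_zero] at hcN
      obtain ⟨τ, hτ, hτ1⟩ := intermediate_value_Icc' ht.1
        (hcN.mono (Icc_subset_Icc_right ht.2)) ⟨h1.le, h2.le⟩
      have hτT : τ ∈ Icc 0 T := ⟨hτ.1, hτ.2.trans ht.2⟩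
      have a1 := hA τ hτT hτ1.ge
      have a2 := kdv_sq_sub hL (h.c0 hτT) ((h.c0 hτT).sub (h'.c0 hτT))
      simp only [Pi.sub_apply, sub_sub_cancel] at a2
      have a3 := h'.antitone hL hτ.1 hτ.2 ht.2
      change ∫ x in (0:ℝ)..L, (y τ x) ^ 2 = 1 at hτ1
      linarith
  have := kdv_sq_sub hL (h.c0 ht) (h'.c0 ht)
  linarith

/-- uniform boundedness of the difference of nonlinear remainders.
For solutions `y, ȳ` of the modified KdV system and `z, z̄` of the linearized KdV
system with respective initial data `y₀, ȳ₀`, setting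
`Δ(t,·) = (y(t,·) − z(t,·)) − (ȳ(t,·) − z̄(t,·))`, there is a constant `C > 0`
independent of `ε ∈ (0,1]` and of the data such that `‖Δ(t,·)‖_{L²(0,L)} ≤ C` for
all `t ∈ [0,T]`. -/
theorem modifiedKdV_remainder_difference_bounded (L T : ℝ) (hL : 0 < L) (hT : 0 < T)
    (Φ : ℝ → ℝ) (hΦ : IsCutoff Φ) :
    ∃ C > 0, ∀ ε ∈ Ioc (0:ℝ) 1, ∀ y₀ ybar₀ : ℝ → ℝ,
      ∀ y ybar z zbar : ℝ → ℝ → ℝ,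
      IsModifiedKdVSol L T ε Φ y → IsModifiedKdVSol L T ε Φ ybar →
      IsLinearKdVSol L T z → IsLinearKdVSol L T zbar →
      (∀ x ∈ Icc (0:ℝ) L, y 0 x = y₀ x) →
      (∀ x ∈ Icc (0:ℝ) L, ybar 0 x = ybar₀ x) →
      (∀ x ∈ Icc (0:ℝ) L, z 0 x = y₀ x) →
      (∀ x ∈ Icc (0:ℝ) L, zbar 0 x = ybar₀ x) →
      ∀ t ∈ Icc (0:ℝ) T,
        L2norm L (fun x => (y t x - z t x) - (ybar t x - zbar t x)) ≤ C := by
  refine ⟨5, by norm_num, ?_⟩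
  intro ε hε y₀ ybar₀ y ybar z zbar hy hyb hz hzb i1 i2 i3 i4 t ht
  have key : ∀ y z : ℝ → ℝ → ℝ, IsModifiedKdVSol L T ε Φ y → IsLinearKdVSol L T z →
      (∀ x ∈ Icc 0 L, y 0 x = z 0 x) → ∫ x in (0:ℝ)..L, (y t x - z t x) ^ 2 ≤ 6 := by
    intro y z hy hz h0
    obtain ⟨a1, a2, a3, a4, a5⟩ := hy
    obtain ⟨b1, b2, b3, b4, b5⟩ := hz
    have hΦ0 : ∀ s, 0 ≤ L2norm L (y s) / ε := fun s =>
      div_nonneg (Real.sqrt_nonneg _) hε.1.le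
    have k1 := ksol_of hL hT (c := fun s => Φ (L2norm L (y s) / ε)) a1 a2 a3 a4 a5
      (fun s => hΦ.2.1 _ (hΦ0 s))
    have k2 := ksol_of hL hT (c := fun _ => 0) b1 b2 b3
      (fun s hs x hx => by simpa using b4 s hs x hx) b5 (fun s => ⟨le_rfl, zero_le_one⟩)
    refine kdv_pair hL k1 k2 ?_ (fun _ => rfl) h0 ht
    intro s hs
    apply hΦ.2.2.2.1
    change 1 ≤ L2norm L (y s) / ε
    rw [le_div_iff₀ hε.1, one_mul]
    refine hε.2.trans ?_
    unfold L2norm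
    exact Real.one_le_sqrt.2 hs
  have e1 := key y z hy hz (fun x hx => by rw [i1 x hx, i3 x hx])
  have e2 := key ybar zbar hyb hzb (fun x hx => by rw [i2 x hx, i4 x hx])
  have cc : ∀ u : ℝ → ℝ → ℝ, ContinuousOn (fun p : ℝ × ℝ => u p.1 p.2)
      (Icc (0:ℝ) T ×ˢ Icc (0:ℝ) L) → ContinuousOn (u t) (Icc 0 L) := by
    intro u hu
    have h2 : ContinuousOn (fun x : ℝ => (t, x)) (Icc 0 L) := by fun_prop
    exact hu.comp h2 (fun x hx => ⟨ht, hx⟩)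
  have e3 := kdv_sq_sub hL ((cc y hy.2.2.1).sub (cc z hz.2.2.1))
    ((cc ybar hyb.2.2.1).sub (cc zbar hzb.2.2.1))
  unfold L2norm
  rw [Real.sqrt_le_left (by norm_num)]
  simp only [Pi.sub_apply] at e3
  linarith
end

section
/- Let L > 0 and T > 0. There exist ε₀ ∈ (0,1] and a function C̃ : (0,ε₀] → (0,∞) with C̃(ε) → 0 as ε → 0⁺, such that for every ε ∈ (0,ε₀], every pair of initial data y₀, ȳ₀ ∈ L²(0,L), every pair of classical solutions y, ȳ of the modified KdV system (with cutoff Φ_ε) on [0,T] with y(0,·) = y₀, ȳ(0,·) = ȳ₀, and every pair of classical solutions z, z̄ of the linearized KdV system on [0,T] with z(0,·) = y₀, z̄(0,·) = ȳ₀, one has, for all t ∈ [0,T], ‖(y(t,·) − z(t,·)) − (ȳ(t,·) − z̄(t,·))‖_{L²(0,L)} ≤ C̃(ε) ‖y₀ − ȳ₀‖_{L²(0,L)}. (I.e. the nonlinear remainder map R(t) : y₀ ↦ y(t,·) − z(t,·) is globally Lipschitz with a Lipschitz constant tending to 0 as ε → 0⁺.) -/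
open Set Real MeasureTheory Filter

open Topology

namespace KdVAux

/-- `f` is three times continuously differentiable on `[0,L]`, with explicit derivatives. -/
structure D3 (L : ℝ) (f f1 f2 f3 : ℝ → ℝ) : Prop where
  c0 : ContinuousOn f (Icc 0 L)
  c1 : ContinuousOn f1 (Icc 0 L)
  c2 : ContinuousOn f2 (Icc 0 L)
  c3 : ContinuousOn f3 (Icc 0 L)
  d0 : ∀ x ∈ Ioo 0 L, HasDerivAt f (f1 x) x
  d1 : ∀ x ∈ Ioo 0 L, HasDerivAt f1 (f2 x) x
  d2 : ∀ x ∈ Ioo 0 L, HasDerivAt f2 (f3 x) x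

lemma D3.sub {L : ℝ} {f f1 f2 f3 g g1 g2 g3 : ℝ → ℝ} (hf : D3 L f f1 f2 f3)
    (hg : D3 L g g1 g2 g3) :
    D3 L (fun x => f x - g x) (fun x => f1 x - g1 x) (fun x => f2 x - g2 x)
      (fun x => f3 x - g3 x) :=
  ⟨hf.c0.sub hg.c0, hf.c1.sub hg.c1, hf.c2.sub hg.c2, hf.c3.sub hg.c3,
    fun x hx => (hf.d0 x hx).sub (hg.d0 x hx), fun x hx => (hf.d1 x hx).sub (hg.d1 x hx),
    fun x hx => (hf.d2 x hx).sub (hg.d2 x hx)⟩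

lemma ii {L : ℝ} (hL : 0 ≤ L) {f : ℝ → ℝ} (hf : ContinuousOn f (Icc 0 L)) :
    IntervalIntegrable f volume 0 L :=
  hf.intervalIntegrable_of_Icc hL

lemma D3.of_contDiffOn {L : ℝ} (hL : 0 < L) {f : ℝ → ℝ} (hf : ContDiffOn ℝ 3 f (Icc 0 L)) :
    D3 L f (derivWithin f (Icc 0 L)) (iteratedDerivWithin 2 f (Icc 0 L))
      (iteratedDerivWithin 3 f (Icc 0 L)) := by
  have hu : UniqueDiffOn ℝ (Icc 0 L) := uniqueDiffOn_Icc hL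
  have h1 : iteratedDerivWithin 1 f (Icc 0 L) = derivWithin f (Icc 0 L) := by
    funext x; simp
  have key : ∀ m : ℕ, (m : ℕ) < 3 → ∀ x ∈ Ioo 0 L,
      HasDerivAt (iteratedDerivWithin m f (Icc 0 L))
        (iteratedDerivWithin (m+1) f (Icc 0 L) x) x := by
    intro m hm x hx
    have hd := (hf.differentiableOn_iteratedDerivWithin (m := m)
      (by exact_mod_cast hm) hu) x (Ioo_subset_Icc_self hx)
    have := hd.hasDerivWithinAt
    rw [iteratedDerivWithin_succ]
    exact this.hasDerivAt (Icc_mem_nhds hx.1 hx.2)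
  have kc : ∀ m : ℕ, m ≤ 3 → ContinuousOn (iteratedDerivWithin m f (Icc 0 L)) (Icc 0 L) := by
    intro m hm
    exact hf.continuousOn_iteratedDerivWithin (by exact_mod_cast hm) hu
  refine ⟨hf.continuousOn, ?_, kc 2 (by norm_num), kc 3 le_rfl, ?_, ?_, ?_⟩
  · rw [← h1]; exact kc 1 (by norm_num)
  · have := key 0 (by norm_num)
    simpa [h1] using this
  · have := key 1 (by norm_num)
    simpa [h1] using this
  · exact key 2 (by norm_num)

/-- Static energy inequality with weight `1 + x`. -/
lemma static_energy {L : ℝ} (hL : 0 < L) {u u1 u2 u3 q q1 : ℝ → ℝ} (hu : D3 L u u1 u2 u3)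
    (h0 : u 0 = 0) (h1 : u L = 0) (h2 : u1 L = 0)
    (hq : ContinuousOn q (Icc 0 L)) (hq1 : ContinuousOn q1 (Icc 0 L))
    (hqd : ∀ x ∈ Ioo 0 L, HasDerivAt q (q1 x) x) :
    ∫ x in (0:ℝ)..L, 2 * (1 + x) * u x * (-(u1 x + u3 x) - q1 x) ≤
      2 * (∫ x in (0:ℝ)..L, u x ^ 2) - 2 * (∫ x in (0:ℝ)..L, u1 x ^ 2)
        + (1 + (1 + L) ^ 2) * ∫ x in (0:ℝ)..L, q x ^ 2 := by
  have c0 := hu.c0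
  have c1 := hu.c1
  have c2 := hu.c2
  have c3 := hu.c3
  have hF := intervalIntegral.integral_eq_sub_of_hasDerivAt_of_le (a := 0) (b := L) hL.le
    (f := fun x => (1 + x) * u x ^ 2 + 2 * (1 + x) * u x * u2 x - 2 * u x * u1 x
      - (1 + x) * u1 x ^ 2 + 2 * (1 + x) * u x * q x)
    (f' := fun x => u x ^ 2 - 3 * u1 x ^ 2 + 2 * u x * q x + 2 * (1 + x) * u1 x * q x
      - 2 * (1 + x) * u x * (-(u1 x + u3 x) - q1 x))
    (by fun_prop)
    (by
      intro x hx
      have e0 := hu.d0 x hx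
      have e1 := hu.d1 x hx
      have e2 := hu.d2 x hx
      have eq := hqd x hx
      have ex : HasDerivAt (fun x : ℝ => 1 + x) 1 x := by
        simpa using (hasDerivAt_id x).const_add 1
      have := ((((ex.mul (e0.pow 2)).add (((ex.const_mul 2).mul e0).mul e2)).sub
        ((e0.const_mul 2).mul e1)).sub (ex.mul (e1.pow 2))).add
        (((ex.const_mul 2).mul e0).mul eq)
      refine this.congr_deriv ?_
      simp only [Pi.mul_apply, Pi.pow_apply]
      push_cast
      ring)
    (ii hL.le (by fun_prop))
  rw [intervalIntegral.integral_sub (ii hL.le (by fun_prop)) (ii hL.le (by fun_prop))] at hF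
  have hb : ∫ x in (0:ℝ)..L, (u x ^ 2 - 3 * u1 x ^ 2 + 2 * u x * q x + 2 * (1 + x) * u1 x * q x)
      ≤ ∫ x in (0:ℝ)..L, (2 * u x ^ 2 - 2 * u1 x ^ 2 + (1 + (1 + L) ^ 2) * q x ^ 2) := by
    apply intervalIntegral.integral_mono_on hL.le (ii hL.le (by fun_prop)) (ii hL.le (by fun_prop))
    intro x hx
    have hx1 : (1 + x) ^ 2 ≤ (1 + L) ^ 2 := by
      apply pow_le_pow_left₀ <;> linarith [hx.1, hx.2]
    nlinarith [sq_nonneg (u x - q x), sq_nonneg (u1 x - (1 + x) * q x),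
      mul_le_mul_of_nonneg_right hx1 (sq_nonneg (q x))]
  have hb2 : ∫ x in (0:ℝ)..L, (2 * u x ^ 2 - 2 * u1 x ^ 2 + (1 + (1 + L) ^ 2) * q x ^ 2) =
      2 * (∫ x in (0:ℝ)..L, u x ^ 2) - 2 * (∫ x in (0:ℝ)..L, u1 x ^ 2)
        + (1 + (1 + L) ^ 2) * ∫ x in (0:ℝ)..L, q x ^ 2 := by
    rw [intervalIntegral.integral_add (ii hL.le (by fun_prop)) (ii hL.le (by fun_prop)),
      intervalIntegral.integral_sub (ii hL.le (by fun_prop)) (ii hL.le (by fun_prop)),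
      intervalIntegral.integral_const_mul, intervalIntegral.integral_const_mul,
      intervalIntegral.integral_const_mul]
  rw [hb2] at hb
  simp only [h0, h1, h2] at hF
  nlinarith [sq_nonneg (u1 0)]

lemma cauchy_schwarz {a b : ℝ} (hab : a ≤ b) {f g : ℝ → ℝ} (hf : ContinuousOn f (Icc a b))
    (hg : ContinuousOn g (Icc a b)) :
    (∫ x in a..b, f x * g x) ^ 2 ≤ (∫ x in a..b, f x ^ 2) * ∫ x in a..b, g x ^ 2 := by
  have I : ∀ {h : ℝ → ℝ}, ContinuousOn h (Icc a b) → IntervalIntegrable h volume a b :=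
    fun h => h.intervalIntegrable_of_Icc hab
  have key : ∀ l : ℝ, 0 ≤ (∫ x in a..b, g x ^ 2) * (l * l) + (2 * ∫ x in a..b, f x * g x) * l
      + ∫ x in a..b, f x ^ 2 := by
    intro l
    have h1 : 0 ≤ ∫ x in a..b, ((l * l) * g x ^ 2 + (2 * l) * (f x * g x) + f x ^ 2) := by
      apply intervalIntegral.integral_nonneg hab
      intro x _
      nlinarith [sq_nonneg (l * g x + f x)]
    rw [intervalIntegral.integral_add (I (by fun_prop)) (I (by fun_prop)),
      intervalIntegral.integral_add (I (by fun_prop)) (I (by fun_prop)),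
      intervalIntegral.integral_const_mul, intervalIntegral.integral_const_mul] at h1
    linarith
  have := discrim_le_zero key
  unfold discrim at this
  nlinarith

lemma sq_int_nonneg {L : ℝ} (hL : 0 ≤ L) (f : ℝ → ℝ) : 0 ≤ ∫ x in (0:ℝ)..L, f x ^ 2 :=
  intervalIntegral.integral_nonneg hL (fun x _ => sq_nonneg _)

lemma L2norm_sq {L : ℝ} (hL : 0 ≤ L) (f : ℝ → ℝ) :
    L2norm L f ^ 2 = ∫ x in (0:ℝ)..L, f x ^ 2 := Real.sq_sqrt (sq_int_nonneg hL f)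

lemma L2norm_nonneg (L : ℝ) (f : ℝ → ℝ) : 0 ≤ L2norm L f := Real.sqrt_nonneg _

lemma L2norm_add_le {L : ℝ} (hL : 0 ≤ L) {f g : ℝ → ℝ} (hf : ContinuousOn f (Icc 0 L))
    (hg : ContinuousOn g (Icc 0 L)) :
    L2norm L (fun x => f x + g x) ≤ L2norm L f + L2norm L g := by
  have h1 := cauchy_schwarz hL hf hg
  rw [← L2norm_sq hL, ← L2norm_sq hL, ← mul_pow] at h1
  have h2 := abs_le_of_sq_le_sq h1 (mul_nonneg (L2norm_nonneg _ _) (L2norm_nonneg _ _))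
  have h3 : L2norm L (fun x => f x + g x) ^ 2 = L2norm L f ^ 2
      + 2 * (∫ x in (0:ℝ)..L, f x * g x) + L2norm L g ^ 2 := by
    rw [L2norm_sq hL, L2norm_sq hL, L2norm_sq hL, ← intervalIntegral.integral_const_mul,
      ← intervalIntegral.integral_add (ii hL (by fun_prop)) (ii hL (by fun_prop)),
      ← intervalIntegral.integral_add (ii hL (by fun_prop)) (ii hL (by fun_prop))]
    congr 1; ext x; ring
  apply le_of_sq_le_sq _ (add_nonneg (L2norm_nonneg _ _) (L2norm_nonneg _ _))
  rw [h3]; nlinarith [le_abs_self (∫ x in (0:ℝ)..L, f x * g x)]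

lemma L2norm_sub_comm (L : ℝ) (f g : ℝ → ℝ) :
    L2norm L (fun x => f x - g x) = L2norm L (fun x => g x - f x) := by
  unfold L2norm; congr 2; ext x; ring

lemma abs_L2norm_sub_le {L : ℝ} (hL : 0 ≤ L) {f g : ℝ → ℝ} (hf : ContinuousOn f (Icc 0 L))
    (hg : ContinuousOn g (Icc 0 L)) :
    |L2norm L f - L2norm L g| ≤ L2norm L (fun x => f x - g x) := by
  have h1 := L2norm_add_le hL (hf.sub hg) hg
  have h2 := L2norm_add_le hL (hg.sub hf) hf
  simp only [Pi.sub_apply, sub_add_cancel] at h1 h2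
  rw [show (g - f) = fun x => g x - f x from rfl, L2norm_sub_comm L g f] at h2
  rw [show (f - g) = fun x => f x - g x from rfl] at h1
  rw [abs_le]; constructor <;> linarith

lemma sup_bound {L : ℝ} {u u1 : ℝ → ℝ} (hu : ContinuousOn u (Icc 0 L))
    (hu1 : ContinuousOn u1 (Icc 0 L)) (hd : ∀ x ∈ Ioo 0 L, HasDerivAt u (u1 x) x)
    (h0 : u 0 = 0) {x : ℝ} (hx : x ∈ Icc 0 L) :
    u x ^ 2 ≤ L * ∫ s in (0:ℝ)..L, u1 s ^ 2 := by
  have hsub : Icc 0 x ⊆ Icc 0 L := Icc_subset_Icc le_rfl hx.2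
  have hL : 0 ≤ L := hx.1.trans hx.2
  have h1 := intervalIntegral.integral_eq_sub_of_hasDerivAt_of_le hx.1 (hu.mono hsub)
    (fun s hs => hd s ⟨hs.1, hs.2.trans_le hx.2⟩)
    ((hu1.mono hsub).intervalIntegrable_of_Icc hx.1)
  have h2 := cauchy_schwarz hx.1 (hu1.mono hsub) (continuousOn_const (c := (1:ℝ)))
  simp only [mul_one, one_pow, intervalIntegral.integral_const, sub_zero, smul_eq_mul] at h2
  rw [h1, h0, sub_zero] at h2
  have h3 : ∫ s in (0:ℝ)..x, u1 s ^ 2 ≤ ∫ s in (0:ℝ)..L, u1 s ^ 2 := by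
    apply intervalIntegral.integral_mono_interval le_rfl hx.1 hx.2
    · exact Eventually.of_forall fun s => sq_nonneg _
    · exact ii hL (by fun_prop)
  have h4 : 0 ≤ ∫ s in (0:ℝ)..x, u1 s ^ 2 := sq_int_nonneg hx.1 _
  calc u x ^ 2 ≤ _ := h2
    _ ≤ (∫ s in (0:ℝ)..L, u1 s ^ 2) * L := mul_le_mul h3 hx.2 hx.1 (h4.trans h3)
    _ = _ := mul_comm _ _

/-- A continuous function with nonpositive right derivative in the interior is decreasing. -/
lemma anti_of_right_deriv {f f' : ℝ → ℝ} {a b : ℝ} (hab : a ≤ b) (hc : ContinuousOn f (Icc a b))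
    (hd : ∀ x ∈ Ioo a b, HasDerivWithinAt f (f' x) (Ici x) x) (hn : ∀ x ∈ Ioo a b, f' x ≤ 0) :
    f b ≤ f a := by
  rcases hab.eq_or_lt with rfl | hab
  · exact le_rfl
  have h1 : ∀ c ∈ Ioo a b, f b ≤ f c := by
    intro c hc'
    have := image_le_of_deriv_right_le_deriv_boundary (f := f) (f' := f') (a := c) (b := b)
      (B := fun _ => f c) (B' := fun _ => 0)
      (hc.mono (Icc_subset_Icc hc'.1.le le_rfl))
      (fun x hx => hd x ⟨hc'.1.trans_le hx.1, hx.2⟩) le_rfl continuousOn_const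
      (fun x _ => hasDerivWithinAt_const _ _ _)
      (fun x hx => hn x ⟨hc'.1.trans_le hx.1, hx.2⟩)
    exact this (right_mem_Icc.2 hc'.2.le)
  have h2 : Tendsto f (𝓝[>] a) (𝓝 (f a)) := by
    have := hc a (left_mem_Icc.2 hab.le)
    have h3 : 𝓝[Ioo a b] a ≤ 𝓝[Icc a b] a := nhdsWithin_mono _ Ioo_subset_Icc_self
    rw [nhdsWithin_Ioo_eq_nhdsGT hab] at h3
    exact this.mono_left h3
  apply ge_of_tendsto h2
  filter_upwards [Ioo_mem_nhdsGT hab] with c hc'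
  exact h1 c hc'

lemma tendsto_L1 {L : ℝ} (hL : 0 < L) {l : Filter ℝ} [l.IsCountablyGenerated]
    {g : ℝ → ℝ → ℝ} {C : ℝ}
    (hc : ∀ᶠ s in l, ContinuousOn (g s) (Icc 0 L))
    (hp : ∀ x ∈ Ioo 0 L, Tendsto (fun s => g s x) l (𝓝 0))
    (hC : ∀ᶠ s in l, ∫ x in (0:ℝ)..L, g s x ^ 2 ≤ C) :
    Tendsto (fun s => ∫ x in (0:ℝ)..L, |g s x|) l (𝓝 0) := by
  refine tendsto_order.2 ⟨fun a ha => ?_, fun a ha => ?_⟩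
  · refine Eventually.of_forall fun s => ha.trans_le ?_
    exact intervalIntegral.integral_nonneg hL.le fun x _ => abs_nonneg _
  · set K : ℝ := 2 * (|C| + 1) / a with hK
    have hK0 : 0 < K := by positivity
    have h1 : Tendsto (fun s => ∫ x in (0:ℝ)..L, min |g s x| K) l
        (𝓝 (∫ _ in (0:ℝ)..L, (0:ℝ))) := by
      apply intervalIntegral.tendsto_integral_filter_of_dominated_convergence (fun _ => K)
      · filter_upwards [hc] with s hs
        rw [uIoc_of_le hL.le]
        have : ContinuousOn (fun x => min |g s x| K) (Icc 0 L) := by fun_prop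
        exact (this.mono Ioc_subset_Icc_self).aestronglyMeasurable measurableSet_Ioc
      · refine Eventually.of_forall fun s => Eventually.of_forall fun x _ => ?_
        rw [Real.norm_eq_abs, abs_of_nonneg (le_min (abs_nonneg _) hK0.le)]
        exact min_le_right _ _
      · exact intervalIntegrable_const
      · have : ∀ᵐ x : ℝ, x ≠ L := by simp [ae_iff]
        filter_upwards [this] with x hx hx2
        rw [uIoc_of_le hL.le] at hx2
        have h := (hp x ⟨hx2.1, lt_of_le_of_ne hx2.2 hx⟩).abs.min (tendsto_const_nhds (x := K))
        simpa [hK0.le] using h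
    simp only [intervalIntegral.integral_zero] at h1
    filter_upwards [hc, hC, (tendsto_order.1 h1).2 (a / 2) (by positivity)] with s hs hCs h2
    have h3 : ∫ x in (0:ℝ)..L, |g s x| ≤ ∫ x in (0:ℝ)..L, (min |g s x| K + K⁻¹ * g s x ^ 2) := by
      apply intervalIntegral.integral_mono_on hL.le (ii hL.le (by fun_prop))
        (ii hL.le (by fun_prop))
      intro x _
      rcases le_total |g s x| K with h | h
      · rw [min_eq_left h]; have : 0 ≤ K⁻¹ * g s x ^ 2 := by positivity
        linarith
      · rw [min_eq_right h, ← sq_abs]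
        have : |g s x| ≤ K⁻¹ * |g s x| ^ 2 := by
          rw [inv_mul_eq_div, le_div_iff₀ hK0]; nlinarith [abs_nonneg (g s x)]
        linarith
    rw [intervalIntegral.integral_add (ii hL.le (by fun_prop)) (ii hL.le (by fun_prop)),
      intervalIntegral.integral_const_mul] at h3
    have h4 : K⁻¹ * (∫ x in (0:ℝ)..L, g s x ^ 2) ≤ K⁻¹ * |C| :=
      mul_le_mul_of_nonneg_left (hCs.trans (le_abs_self C)) (by positivity)
    have h5 : K⁻¹ * |C| < a / 2 := by
      rw [inv_mul_eq_div, div_lt_iff₀ hK0, hK]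
      have : a / 2 * (2 * (|C| + 1) / a) = |C| + 1 := by field_simp
      rw [this]; linarith
    linarith

/-- `u` is `L²`-Lipschitz to the right at time `t`. -/
def RL (L : ℝ) (u : ℝ → ℝ → ℝ) (t : ℝ) : Prop :=
  ∃ C, ∀ᶠ s in 𝓝[>] t, ∫ x in (0:ℝ)..L, (u s x - u t x) ^ 2 ≤ C * (s - t) ^ 2

lemma RL.sub {L T t : ℝ} (hL : 0 < L) {u v : ℝ → ℝ → ℝ} (ht : t ∈ Ioo 0 T)
    (hu : ∀ s ∈ Icc 0 T, ContinuousOn (u s) (Icc 0 L))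
    (hv : ∀ s ∈ Icc 0 T, ContinuousOn (v s) (Icc 0 L))
    (h1 : RL L u t) (h2 : RL L v t) : RL L (fun s x => u s x - v s x) t := by
  obtain ⟨C1, h1⟩ := h1
  obtain ⟨C2, h2⟩ := h2
  refine ⟨2 * C1 + 2 * C2, ?_⟩
  filter_upwards [h1, h2, Ioo_mem_nhdsGT ht.2] with s h1 h2 hs
  have a1 := hu s ⟨ht.1.le.trans hs.1.le, hs.2.le⟩
  have a2 := hu t ⟨ht.1.le, ht.2.le⟩
  have a3 := hv s ⟨ht.1.le.trans hs.1.le, hs.2.le⟩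
  have a4 := hv t ⟨ht.1.le, ht.2.le⟩
  have h3 : ∫ x in (0:ℝ)..L, (u s x - v s x - (u t x - v t x)) ^ 2 ≤
      ∫ x in (0:ℝ)..L, (2 * (u s x - u t x) ^ 2 + 2 * (v s x - v t x) ^ 2) := by
    apply intervalIntegral.integral_mono_on hL.le (ii hL.le (by fun_prop)) (ii hL.le (by fun_prop))
    intro x _
    nlinarith [sq_nonneg (u s x - u t x + (v s x - v t x))]
  rw [intervalIntegral.integral_add (ii hL.le (by fun_prop)) (ii hL.le (by fun_prop)),
      intervalIntegral.integral_const_mul, intervalIntegral.integral_const_mul] at h3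
  linarith

/-- Right differentiation of the weighted energy. -/
lemma energy_deriv {L T t : ℝ} (hL : 0 < L) {u : ℝ → ℝ → ℝ} {u' : ℝ → ℝ} (ht : t ∈ Ioo 0 T)
    (hu : ∀ s ∈ Icc 0 T, ContinuousOn (u s) (Icc 0 L))
    (hu' : ContinuousOn u' (Icc 0 L))
    (hd : ∀ x ∈ Ioo 0 L, HasDerivAt (fun s => u s x) (u' x) t)
    (hRL : RL L u t) :
    HasDerivWithinAt (fun s => ∫ x in (0:ℝ)..L, (1 + x) * u s x ^ 2)
      (∫ x in (0:ℝ)..L, 2 * (1 + x) * u t x * u' x) (Ici t) t := by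
  obtain ⟨C, hC⟩ := hRL
  have hut := hu t ⟨ht.1.le, ht.2.le⟩
  have hin : ∀ᶠ s in 𝓝[>] t, t < s ∧ ContinuousOn (u s) (Icc 0 L) := by
    filter_upwards [Ioo_mem_nhdsGT ht.2] with s hs
    exact ⟨hs.1, hu s ⟨ht.1.le.trans hs.1.le, hs.2.le⟩⟩
  rw [← hasDerivWithinAt_Ioi_iff_Ici, hasDerivWithinAt_iff_tendsto_slope' self_notMem_Ioi]
  set g : ℝ → ℝ → ℝ := fun s x => (u s x - u t x) / (s - t) - u' x with hg
  have hgc : ∀ᶠ s in 𝓝[>] t, ContinuousOn (g s) (Icc 0 L) := by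
    filter_upwards [hin] with s hs
    have := hs.2
    exact ((this.sub hut).div_const _).sub hu'
  have hgp : ∀ x ∈ Ioo 0 L, Tendsto (fun s => g s x) (𝓝[>] t) (𝓝 0) := by
    intro x hx
    have h1 := (hd x hx).hasDerivWithinAt (s := Ioi t)
    rw [hasDerivWithinAt_iff_tendsto_slope' self_notMem_Ioi] at h1
    have h2 := h1.sub_const (u' x)
    rw [sub_self] at h2
    refine h2.congr fun s => ?_
    simp [hg, slope_def_field]
  have hg2 : ∀ᶠ s in 𝓝[>] t, ∫ x in (0:ℝ)..L, g s x ^ 2 ≤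
      2 * C + 2 * ∫ x in (0:ℝ)..L, u' x ^ 2 := by
    filter_upwards [hin, hC] with s hs hCs
    have hsc := hs.2
    have hst : 0 < s - t := sub_pos.2 hs.1
    have h3 : ∫ x in (0:ℝ)..L, g s x ^ 2 ≤
        ∫ x in (0:ℝ)..L, (2 * ((s - t) ^ 2)⁻¹ * (u s x - u t x) ^ 2 + 2 * u' x ^ 2) := by
      apply intervalIntegral.integral_mono_on hL.le
        (ii hL.le ((((hsc.sub hut).div_const _).sub hu').pow 2)) (ii hL.le (by fun_prop))
      intro x _
      have e : ((s - t) ^ 2)⁻¹ * (u s x - u t x) ^ 2 = ((u s x - u t x) / (s - t)) ^ 2 := by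
        rw [div_pow]; ring
      rw [mul_assoc, e]
      change ((u s x - u t x) / (s - t) - u' x) ^ 2 ≤ _
      nlinarith [sq_nonneg ((u s x - u t x) / (s - t) + u' x)]
    rw [intervalIntegral.integral_add (ii hL.le (by fun_prop)) (ii hL.le (by fun_prop)),
      intervalIntegral.integral_const_mul, intervalIntegral.integral_const_mul] at h3
    have h4 : ((s - t) ^ 2)⁻¹ * (∫ x in (0:ℝ)..L, (u s x - u t x) ^ 2) ≤ C := by
      rw [inv_mul_le_iff₀ (by positivity)]; linarith
    linarith
  have hlim := tendsto_L1 hL hgc hgp hg2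
  obtain ⟨K, hK⟩ := isCompact_Icc.exists_bound_of_continuousOn hut
  -- the error term
  have herr : Tendsto (fun s => 2 * (1 + L) * K * (∫ x in (0:ℝ)..L, |g s x|)
      + (1 + L) * C * (s - t)) (𝓝[>] t) (𝓝 0) := by
    have h1 : Tendsto (fun s => s - t) (𝓝[>] t) (𝓝 0) := by
      have : Tendsto (fun s => s - t) (𝓝 t) (𝓝 (t - t)) := (continuous_sub_right t).tendsto t
      rw [sub_self] at this
      exact this.mono_left nhdsWithin_le_nhds
    simpa using (hlim.const_mul (2 * (1 + L) * K)).add (h1.const_mul ((1 + L) * C))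
  rw [tendsto_iff_dist_tendsto_zero]
  refine squeeze_zero' (Eventually.of_forall fun _ => dist_nonneg) ?_ herr
  filter_upwards [hin, hC, hgc] with s hs hCs hgs
  have hsc := hs.2
  have hst : 0 < s - t := sub_pos.2 hs.1
  have hne := hst.ne'
  have e1 : slope (fun s => ∫ x in (0:ℝ)..L, (1 + x) * u s x ^ 2) t s
      - (∫ x in (0:ℝ)..L, 2 * (1 + x) * u t x * u' x) =
      (∫ x in (0:ℝ)..L, 2 * (1 + x) * u t x * g s x) +
      (s - t)⁻¹ * ∫ x in (0:ℝ)..L, (1 + x) * (u s x - u t x) ^ 2 := by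
    rw [slope_def_field, ← intervalIntegral.integral_sub (ii hL.le (by fun_prop))
      (ii hL.le (by fun_prop)), div_eq_inv_mul, ← intervalIntegral.integral_const_mul,
      ← intervalIntegral.integral_const_mul,
      ← intervalIntegral.integral_sub (ii hL.le (by fun_prop)) (ii hL.le (by fun_prop)),
      ← intervalIntegral.integral_add (ii hL.le (by fun_prop)) (ii hL.le (by fun_prop))]
    congr 1; ext x
    simp only [hg]
    field_simp
    ring
  rw [Real.dist_eq, e1]
  have b1 : |∫ x in (0:ℝ)..L, 2 * (1 + x) * u t x * g s x| ≤
      2 * (1 + L) * K * (∫ x in (0:ℝ)..L, |g s x|) := by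
    refine (intervalIntegral.abs_integral_le_integral_abs hL.le).trans ?_
    rw [← intervalIntegral.integral_const_mul]
    apply intervalIntegral.integral_mono_on hL.le (ii hL.le (by fun_prop)) (ii hL.le (by fun_prop))
    intro x hx
    rw [abs_mul, abs_mul, abs_of_nonneg (by linarith [hx.1] : 0 ≤ 2 * (1 + x))]
    have := hK x hx
    rw [Real.norm_eq_abs] at this
    have h0 : 0 ≤ 1 + x := by linarith [hx.1]
    have h2 : 1 + x ≤ 1 + L := by linarith [hx.2]
    gcongr
  have b2 : (∫ x in (0:ℝ)..L, (1 + x) * (u s x - u t x) ^ 2) ≤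
      (1 + L) * (C * (s - t) ^ 2) := by
    refine le_trans ?_ (mul_le_mul_of_nonneg_left hCs (by linarith))
    rw [← intervalIntegral.integral_const_mul]
    apply intervalIntegral.integral_mono_on hL.le (ii hL.le (by fun_prop)) (ii hL.le (by fun_prop))
    intro x hx
    exact mul_le_mul_of_nonneg_right (by linarith [hx.2]) (sq_nonneg _)
  have b3 : 0 ≤ (∫ x in (0:ℝ)..L, (1 + x) * (u s x - u t x) ^ 2) :=
    intervalIntegral.integral_nonneg hL.le fun x hx =>
      mul_nonneg (by linarith [hx.1]) (sq_nonneg _)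
  refine (abs_add_le _ _).trans (add_le_add b1 ?_)
  rw [abs_of_nonneg (mul_nonneg (by positivity) b3), inv_mul_le_iff₀ hst]
  linarith

/-- Continuity in time of the weighted energy. -/
lemma energy_cont {L T : ℝ} (hL : 0 < L) {u : ℝ → ℝ → ℝ}
    (hu : ContinuousOn (fun p : ℝ × ℝ => u p.1 p.2) (Icc 0 T ×ˢ Icc 0 L)) :
    ContinuousOn (fun s => ∫ x in (0:ℝ)..L, (1 + x) * u s x ^ 2) (Icc 0 T) := by
  obtain ⟨K, hK⟩ := (isCompact_Icc.prod isCompact_Icc).exists_bound_of_continuousOn hu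
  intro t ht
  apply intervalIntegral.tendsto_integral_filter_of_dominated_convergence
    (fun _ => (1 + L) * K ^ 2)
  · filter_upwards [self_mem_nhdsWithin] with s hs
    rw [uIoc_of_le hL.le]
    have h1 : ContinuousOn (u s) (Icc 0 L) :=
      hu.comp (f := fun x => (s, x)) (by fun_prop) (fun x hx => ⟨hs, hx⟩)
    have : ContinuousOn (fun x => (1 + x) * u s x ^ 2) (Icc 0 L) := by fun_prop
    exact (this.mono Ioc_subset_Icc_self).aestronglyMeasurable measurableSet_Ioc
  · filter_upwards [self_mem_nhdsWithin] with s hs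
    refine Eventually.of_forall fun x hx => ?_
    rw [uIoc_of_le hL.le] at hx
    have := hK (s, x) ⟨hs, hx.1.le, hx.2⟩
    rw [Real.norm_eq_abs] at this
    have h0 : 0 ≤ 1 + x := by linarith [hx.1]
    rw [Real.norm_eq_abs, abs_of_nonneg (by positivity), ← sq_abs]
    have h2 : 1 + x ≤ 1 + L := by linarith [hx.2]
    simp only at this
    gcongr
  · exact intervalIntegrable_const
  · refine Eventually.of_forall fun x hx => ?_
    rw [uIoc_of_le hL.le] at hx
    have h1 : ContinuousOn (fun s => u s x) (Icc 0 T) :=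
      hu.comp (f := fun s => (s, x)) (by fun_prop) (fun s hs => ⟨hs, hx.1.le, hx.2⟩)
    exact ((h1 t ht).pow 2).const_mul (1 + x)

/-- Repackaged classical solution, with explicit derivatives. -/
structure Sol (L T ε : ℝ) (Φ : ℝ → ℝ) (y y1 y2 y3 yt : ℝ → ℝ → ℝ) : Prop where
  d3 : ∀ t ∈ Icc 0 T, D3 L (y t) (y1 t) (y2 t) (y3 t)
  dt : ∀ x ∈ Icc 0 L, ∀ t ∈ Ioo 0 T, HasDerivAt (fun s => y s x) (yt t x) t
  ct : ∀ x ∈ Icc 0 L, ContinuousOn (fun s => yt s x) (Icc 0 T)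
  cont : ContinuousOn (fun p : ℝ × ℝ => y p.1 p.2) (Icc 0 T ×ˢ Icc 0 L)
  pde : ∀ t ∈ Ioo 0 T, ∀ x ∈ Ioo 0 L,
    yt t x = -(y1 t x + y3 t x) - Φ (L2norm L (y t) / ε) * (y t x * y1 t x)
  b0 : ∀ t ∈ Icc 0 T, y t 0 = 0
  bL : ∀ t ∈ Icc 0 T, y t L = 0
  bL1 : ∀ t ∈ Icc 0 T, y1 t L = 0

lemma Sol.of {L T ε : ℝ} {Φ : ℝ → ℝ} {y : ℝ → ℝ → ℝ} (hL : 0 < L) (hT : 0 < T)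
    (h : IsModifiedKdVSol L T ε Φ y) : ∃ y1 y2 y3 yt, Sol L T ε Φ y y1 y2 y3 yt := by
  obtain ⟨h1, h2, h3, h4, h5⟩ := h
  refine ⟨fun t => derivWithin (y t) (Icc 0 L), fun t => iteratedDerivWithin 2 (y t) (Icc 0 L),
    fun t => iteratedDerivWithin 3 (y t) (Icc 0 L),
    fun t x => derivWithin (fun s => y s x) (Icc 0 T) t,
    fun t ht => D3.of_contDiffOn hL (h1 t ht), ?_, ?_, h3, ?_, fun t ht => (h5 t ht).1,
    fun t ht => (h5 t ht).2.1, fun t ht => (h5 t ht).2.2⟩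
  · intro x hx t ht
    have := (h2 x hx).differentiableOn one_ne_zero t (Ioo_subset_Icc_self ht)
    exact this.hasDerivWithinAt.hasDerivAt (Icc_mem_nhds ht.1 ht.2)
  · intro x hx
    exact (h2 x hx).continuousOn_derivWithin (uniqueDiffOn_Icc hT) le_rfl
  · intro t ht x hx
    have := h4 t ht x hx
    linarith

lemma linear_to_modified {L T ε : ℝ} {z : ℝ → ℝ → ℝ} (h : IsLinearKdVSol L T z) :
    IsModifiedKdVSol L T ε (fun _ => 0) z := by
  obtain ⟨h1, h2, h3, h4, h5⟩ := h
  refine ⟨h1, h2, h3, ?_, h5⟩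
  intro t ht x hx
  have := h4 t ht x hx
  simpa using this

section
variable {L T ε : ℝ} {Φ : ℝ → ℝ} {y y1 y2 y3 yt : ℝ → ℝ → ℝ}

lemma Sol.rhs_cont (S : Sol L T ε Φ y y1 y2 y3 yt) {t : ℝ} (ht : t ∈ Icc 0 T) :
    ContinuousOn (fun x => -(y1 t x + y3 t x) - Φ (L2norm L (y t) / ε) * (y t x * y1 t x))
      (Icc 0 L) := by
  have h := S.d3 t ht
  have c0 := h.c0
  have c1 := h.c1
  have c3 := h.c3
  fun_prop

lemma phi_diff_sq {Λ : ℝ} (hε : 0 < ε) (hL : 0 ≤ L)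
    (hΦL : ∀ r s, 0 ≤ r → 0 ≤ s → |Φ r - Φ s| ≤ Λ * |r - s|)
    {f g : ℝ → ℝ} (hf : ContinuousOn f (Icc 0 L)) (hg : ContinuousOn g (Icc 0 L)) :
    (Φ (L2norm L f / ε) - Φ (L2norm L g / ε)) ^ 2 ≤
      (Λ / ε) ^ 2 * ∫ x in (0:ℝ)..L, (f x - g x) ^ 2 := by
  have h1 := hΦL (L2norm L f / ε) (L2norm L g / ε) (div_nonneg (L2norm_nonneg _ _) hε.le)
    (div_nonneg (L2norm_nonneg _ _) hε.le)
  have hΛ : 0 ≤ Λ := by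
    have := hΦL 1 0 zero_le_one le_rfl
    simp only [sub_zero, abs_one, mul_one] at this
    exact (abs_nonneg _).trans this
  rw [← sub_div, abs_div, abs_of_pos hε] at h1
  have h2 : |Φ (L2norm L f / ε) - Φ (L2norm L g / ε)| ≤
      Λ / ε * L2norm L (fun x => f x - g x) := by
    refine h1.trans ?_
    have := abs_L2norm_sub_le hL hf hg
    calc Λ * (|L2norm L f - L2norm L g| / ε) = Λ / ε * |L2norm L f - L2norm L g| := by ring
      _ ≤ _ := mul_le_mul_of_nonneg_left this (by positivity)
  rw [← L2norm_sq hL, ← mul_pow, ← sq_abs]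
  exact pow_le_pow_left₀ (abs_nonneg _) h2 2

lemma qderiv {c c' x a1 b1 : ℝ} {a b : ℝ → ℝ} (ha : HasDerivAt a a1 x) (hb : HasDerivAt b b1 x) :
    HasDerivAt (fun x => (c * a x ^ 2 - c' * b x ^ 2) / 2)
      (c * (a x * a1) - c' * (b x * b1)) x := by
  have := ((((ha.pow 2).const_mul c).sub ((hb.pow 2).const_mul c')).div_const 2)
  refine this.congr_deriv ?_
  push_cast
  ring

set_option maxHeartbeats 1600000 in
lemma Sol.gap {Λ : ℝ} (hL : 0 < L) (hε : 0 < ε) (S : Sol L T ε Φ y y1 y2 y3 yt)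
    (hΦ1 : ∀ r, 0 ≤ r → |Φ r| ≤ 1)
    (hΦL : ∀ r s, 0 ≤ r → 0 ≤ s → |Φ r - Φ s| ≤ Λ * |r - s|) :
    ∃ C0 : ℝ, 0 ≤ C0 ∧ ∀ a b n : ℝ, 0 < a → a < b → b < T → (∀ t ∈ Ioo a b, RL L y t) →
      (∀ x ∈ Ioo 0 L, |yt a x| ≤ n) →
      ∫ x in (0:ℝ)..L, (y b x - y a x) ^ 2 ≤ C0 * n ^ 2 * (b - a) ^ 2 := by
  obtain ⟨K, hK⟩ := (isCompact_Icc.prod isCompact_Icc).exists_bound_of_continuousOn S.cont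
  set W : ℝ := (4 * K ^ 2 + L * K ^ 4 * (Λ / ε) ^ 2) / 2 with hW
  have hW0 : 0 ≤ W := by positivity
  set ω : ℝ := 2 + (1 + (1 + L) ^ 2) * W with hω
  have hω0 : 0 ≤ ω := by positivity
  refine ⟨Real.exp (ω * T + 1) * (L * (1 + L)), by positivity, ?_⟩
  intro a b n ha hab hbT hRL hn
  have haT : a ∈ Ioo 0 T := ⟨ha, hab.trans hbT⟩
  have haT' : a ∈ Icc 0 T := Ioo_subset_Icc_self haT
  set τ : ℝ := b - a with hτ
  have hτ0 : 0 < τ := sub_pos.2 hab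
  have hn0 : 0 ≤ n := (abs_nonneg _).trans (hn (L / 2) ⟨by linarith, by linarith⟩)
  set D : ℝ → ℝ := fun s => ∫ x in (0:ℝ)..L, (1 + x) * (y s x - y a x) ^ 2 with hD
  set u' : ℝ → ℝ → ℝ := fun s x =>
    -(y1 s x + y3 s x) - Φ (L2norm L (y s) / ε) * (y s x * y1 s x) with hu'
  set e : ℝ := τ * n ^ 2 * (L * (1 + L)) with he
  have hDa : D a = 0 := by simp [hD]
  have hDc : ContinuousOn D (Icc a b) := by
    have hcont : ContinuousOn (fun p : ℝ × ℝ => y p.1 p.2 - y a p.2) (Icc 0 T ×ˢ Icc 0 L) := by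
      refine S.cont.sub ?_
      exact (S.d3 a haT').c0.comp continuousOn_snd (fun p hp => hp.2)
    exact (energy_cont hL hcont (u := fun s x => y s x - y a x)).mono
      (Icc_subset_Icc ha.le hbT.le)
  have hsT : ∀ s ∈ Ioo a b, s ∈ Ioo 0 T := fun s hs => ⟨ha.trans hs.1, hs.2.trans hbT⟩
  have hDd : ∀ s ∈ Ioo a b, HasDerivWithinAt D
      (∫ x in (0:ℝ)..L, 2 * (1 + x) * (y s x - y a x) * u' s x) (Ici s) s := by
    intro s hs
    have hs' := hsT s hs
    refine energy_deriv (u := fun s x => y s x - y a x) (T := T) hL hs' ?_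
      (S.rhs_cont (Ioo_subset_Icc_self hs')) ?_ ?_
    · intro r hr
      exact (S.d3 r hr).c0.sub (S.d3 a haT').c0
    · intro x hx
      have := (S.dt x (Ioo_subset_Icc_self hx) s hs').sub_const (y a x)
      rwa [S.pde s hs' x hx] at this
    · obtain ⟨C, hC⟩ := hRL s hs
      refine ⟨C, ?_⟩
      filter_upwards [hC] with r hr
      simpa using hr
  have hDle : ∀ s ∈ Ioo a b, (∫ x in (0:ℝ)..L, 2 * (1 + x) * (y s x - y a x) * u' s x) ≤
      (ω + 1 / τ) * D s + e := by
    intro s hs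
    have hs' := hsT s hs
    have hs'' := Ioo_subset_Icc_self hs'
    have ds := S.d3 s hs''
    have da := S.d3 a haT'
    have du := ds.sub da
    have s0 := ds.c0
    have s1 := ds.c1
    have s3 := ds.c3
    have a0 := da.c0
    have a1 := da.c1
    have a3 := da.c3
    set c := Φ (L2norm L (y s) / ε) with hc
    set c' := Φ (L2norm L (y a) / ε) with hc'
    have hcc : (c - c') ^ 2 ≤ (Λ / ε) ^ 2 * ∫ x in (0:ℝ)..L, (y s x - y a x) ^ 2 :=
      phi_diff_sq hε hL.le hΦL s0 a0
    have hc1 : |c| ≤ 1 := hΦ1 _ (div_nonneg (L2norm_nonneg _ _) hε.le)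
    have key := static_energy hL du (by simp [S.b0 s hs'', S.b0 a haT'])
      (by simp [S.bL s hs'', S.bL a haT']) (by simp [S.bL1 s hs'', S.bL1 a haT'])
      (q := fun x => (c * y s x ^ 2 - c' * y a x ^ 2) / 2)
      (q1 := fun x => c * (y s x * y1 s x) - c' * (y a x * y1 a x))
      (by fun_prop) (by fun_prop)
      (fun x hx => qderiv (ds.d0 x hx) (da.d0 x hx))
    -- bound of q
    have hq : ∫ x in (0:ℝ)..L, ((c * y s x ^ 2 - c' * y a x ^ 2) / 2) ^ 2 ≤
        W * ∫ x in (0:ℝ)..L, (y s x - y a x) ^ 2 := by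
      have h1 : ∫ x in (0:ℝ)..L, ((c * y s x ^ 2 - c' * y a x ^ 2) / 2) ^ 2 ≤
          ∫ x in (0:ℝ)..L, (2 * K ^ 2 * (y s x - y a x) ^ 2 + K ^ 4 / 2 * (c - c') ^ 2) := by
        apply intervalIntegral.integral_mono_on hL.le (ii hL.le (by fun_prop))
          (ii hL.le (by fun_prop))
        intro x hx
        have k1 := hK (s, x) ⟨hs'', hx⟩
        have k2 := hK (a, x) ⟨haT', hx⟩
        rw [Real.norm_eq_abs] at k1 k2
        simp only at k1 k2
        have e1 : (c * y s x ^ 2 - c' * y a x ^ 2) / 2 =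
          (c * (y s x + y a x) * (y s x - y a x) + (c - c') * y a x ^ 2) / 2 := by ring
        have e2 : (c * (y s x + y a x)) ^ 2 ≤ 4 * K ^ 2 := by
          rw [← sq_abs, abs_mul]
          have : |c| * |y s x + y a x| ≤ 1 * (2 * K) := by
            apply mul_le_mul hc1 _ (abs_nonneg _) zero_le_one
            exact (abs_add_le _ _).trans (by linarith)
          calc (|c| * |y s x + y a x|) ^ 2 ≤ (1 * (2 * K)) ^ 2 :=
                pow_le_pow_left₀ (by positivity) this 2
            _ = _ := by ring
        have e3 : (y a x ^ 2) ^ 2 ≤ K ^ 4 := by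
          rw [← pow_mul, show 2 * 2 = 4 from rfl, ← (by decide : Even 4).pow_abs]
          exact pow_le_pow_left₀ (abs_nonneg _) k2 4
        have e4 := mul_le_mul_of_nonneg_right e2 (sq_nonneg (y s x - y a x))
        have e5 := mul_le_mul_of_nonneg_left e3 (sq_nonneg (c - c'))
        rw [e1]
        nlinarith [sq_nonneg (c * (y s x + y a x) * (y s x - y a x) - (c - c') * y a x ^ 2)]
      rw [intervalIntegral.integral_add (ii hL.le (by fun_prop)) (ii hL.le (by fun_prop)),
        intervalIntegral.integral_const_mul, intervalIntegral.integral_const] at h1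
      simp only [sub_zero, smul_eq_mul] at h1
      have h2 := mul_le_mul_of_nonneg_left hcc (by positivity : 0 ≤ L * (K ^ 4 / 2))
      rw [hW]
      linarith
    -- the forcing term
    set p : ℝ → ℝ := u' a with hp
    have hpc : ContinuousOn p (Icc 0 L) := S.rhs_cont haT'
    have hf : ∫ x in (0:ℝ)..L, 2 * (1 + x) * (y s x - y a x) * p x ≤ 1 / τ * D s + e := by
      have h1 : ∫ x in (0:ℝ)..L, 2 * (1 + x) * (y s x - y a x) * p x ≤
          ∫ x in (0:ℝ)..L, (1 / τ * ((1 + x) * (y s x - y a x) ^ 2) + (1 + L) * (τ * n ^ 2)) := by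
        apply intervalIntegral.integral_mono_on_of_le_Ioo hL.le (ii hL.le (by fun_prop))
          (ii hL.le (by fun_prop))
        intro x hx
        have hpx : |p x| ≤ n := by
          have := hn x hx
          rwa [S.pde a haT x hx] at this
        have hp2 : p x ^ 2 ≤ n ^ 2 := by
          rw [← sq_abs]; exact pow_le_pow_left₀ (abs_nonneg _) hpx 2
        have g1 : 2 * ((y s x - y a x) * p x) ≤ 1 / τ * (y s x - y a x) ^ 2 + τ * n ^ 2 := by
          have : 0 ≤ 1 / τ * (y s x - y a x - τ * p x) ^ 2 := by positivity
          have e1 : 1 / τ * (y s x - y a x - τ * p x) ^ 2 = 1 / τ * (y s x - y a x) ^ 2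
            - 2 * ((y s x - y a x) * p x) + τ * p x ^ 2 := by
            field_simp
            ring
          have e2 := mul_le_mul_of_nonneg_left hp2 hτ0.le
          linarith
        have g2 := mul_le_mul_of_nonneg_left g1 (by linarith [hx.1] : 0 ≤ 1 + x)
        have g3 : (1 + x) * (τ * n ^ 2) ≤ (1 + L) * (τ * n ^ 2) :=
          mul_le_mul_of_nonneg_right (by linarith [hx.2]) (by positivity)
        linarith
      rw [intervalIntegral.integral_add (ii hL.le (by fun_prop)) (ii hL.le (by fun_prop)),
        intervalIntegral.integral_const_mul, intervalIntegral.integral_const] at h1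
      simp only [sub_zero, smul_eq_mul] at h1
      rw [he]
      simp only [hD]
      linarith
    have hsplit : ∫ x in (0:ℝ)..L, 2 * (1 + x) * (y s x - y a x) * u' s x =
        (∫ x in (0:ℝ)..L, 2 * (1 + x) * (y s x - y a x) * (-((y1 s x - y1 a x) +
          (y3 s x - y3 a x)) - (c * (y s x * y1 s x) - c' * (y a x * y1 a x)))) +
        ∫ x in (0:ℝ)..L, 2 * (1 + x) * (y s x - y a x) * p x := by
      rw [← intervalIntegral.integral_add (ii hL.le (by fun_prop)) (ii hL.le (by fun_prop))]
      congr 1; ext x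
      simp only [hp, hu', ← hc, ← hc']
      ring
    have hnD : ∫ x in (0:ℝ)..L, (y s x - y a x) ^ 2 ≤ D s := by
      apply intervalIntegral.integral_mono_on hL.le (ii hL.le (by fun_prop))
        (ii hL.le (by fun_prop))
      intro x hx
      nlinarith [sq_nonneg (y s x - y a x), hx.1, mul_nonneg hx.1 (sq_nonneg (y s x - y a x))]
    have hneg := sq_int_nonneg hL.le (fun x => y1 s x - y1 a x)
    have h6 := mul_le_mul_of_nonneg_left hq (by positivity : 0 ≤ 1 + (1 + L) ^ 2)
    have h7 := mul_le_mul_of_nonneg_left hnD hω0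
    have h8 : ω * (∫ x in (0:ℝ)..L, (y s x - y a x) ^ 2) =
        2 * (∫ x in (0:ℝ)..L, (y s x - y a x) ^ 2) +
        (1 + (1 + L) ^ 2) * (W * ∫ x in (0:ℝ)..L, (y s x - y a x) ^ 2) := by rw [hω]; ring
    rw [hsplit]
    linarith
  -- Gronwall
  set k : ℝ := ω + 1 / τ with hk
  have hk0 : 0 ≤ k := by positivity
  have he0 : 0 ≤ e := by positivity
  have hfin := anti_of_right_deriv hab.le
    (f := fun s => Real.exp (-k * (s - a)) * D s - e * (s - a))
    (f' := fun s => Real.exp (-k * (s - a)) * (-k) * D s + Real.exp (-k * (s - a)) *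
      (∫ x in (0:ℝ)..L, 2 * (1 + x) * (y s x - y a x) * u' s x) - e)
    (by fun_prop)
    (by
      intro s hs
      have h1 : HasDerivAt (fun s => s - a) 1 s := (hasDerivAt_id s).sub_const a
      have h2 := ((h1.const_mul (-k)).exp).hasDerivWithinAt (s := Ici s)
      have h3 := ((h2.mul (hDd s hs)).sub ((h1.const_mul e).hasDerivWithinAt (s := Ici s)))
      refine h3.congr_deriv ?_
      ring)
    (by
      intro s hs
      have h1 := hDle s hs
      have h2 : Real.exp (-k * (s - a)) ≤ 1 := by
        rw [Real.exp_le_one_iff]; nlinarith [hs.1]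
      have h3 := Real.exp_pos (-k * (s - a))
      have h4 := mul_le_mul_of_nonneg_left h1 h3.le
      nlinarith)
  simp only [sub_self, hDa, mul_zero] at hfin
  have hDb : D b ≤ Real.exp (k * τ) * (e * τ) := by
    have h1 : Real.exp (-k * τ) * D b ≤ e * τ := by linarith
    have h2 := mul_le_mul_of_nonneg_left h1 (Real.exp_pos (k * τ)).le
    rw [← mul_assoc, ← Real.exp_add] at h2
    simpa using h2
  have hkτ : k * τ ≤ ω * T + 1 := by
    have : k * τ = ω * τ + 1 := by rw [hk]; field_simp
    rw [this]
    have : τ ≤ T := by linarith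
    nlinarith
  have hfirst : ∫ x in (0:ℝ)..L, (y b x - y a x) ^ 2 ≤ D b := by
    have b0 := (S.d3 b ⟨by linarith, hbT.le⟩).c0
    have a0 := (S.d3 a haT').c0
    apply intervalIntegral.integral_mono_on hL.le (ii hL.le (by fun_prop)) (ii hL.le (by fun_prop))
    intro x hx
    nlinarith [sq_nonneg (y b x - y a x), mul_nonneg hx.1 (sq_nonneg (y b x - y a x))]
  calc _ ≤ _ := hfirst
    _ ≤ _ := hDb
    _ ≤ Real.exp (ω * T + 1) * (e * τ) :=
      mul_le_mul_of_nonneg_right (Real.exp_le_exp.2 hkτ) (by positivity)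
    _ = _ := by rw [he]; ring
end

lemma chain_order {Dec : ℝ → ℝ → Prop} {P : Set ℝ} {t t' δ : ℝ} (htt : t ≤ t') (hδ : 0 < δ)
    (hP : IsClosed (P ∩ Icc t t')) (htP : t ∈ P)
    (htrans : ∀ a b c, a ≤ b → b ≤ c → Dec a b → Dec b c → Dec a c)
    (hi : ∀ a b, a ∈ P → t ≤ a → a ≤ b → b ≤ t' → b ≤ a + δ → Dec a b)
    (hii : ∀ a b, a ∈ P → t ≤ a → a < b → b ≤ t' → (∀ s ∈ Ioo a b, s ∉ P) → Dec a b) :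
    Dec t t' := by
  by_contra hnot
  set A : Set ℝ := {r | r ∈ P ∩ Icc t t' ∧ Dec t r} with hA
  have htA : t ∈ A := ⟨⟨htP, le_rfl, htt⟩, hi t t htP le_rfl le_rfl htt (by linarith)⟩
  have hbdd : BddAbove A := ⟨t', fun r hr => hr.1.2.2⟩
  obtain ⟨r, hrA, hr⟩ := exists_lt_of_lt_csSup ⟨t, htA⟩ (sub_lt_self (sSup A) hδ)
  obtain ⟨⟨hrP, hrt, hrt'⟩, hDr⟩ := hrA
  -- the greatest point of `P` in `[r, r + δ]`
  have hcomp1 : IsCompact (P ∩ Icc t t' ∩ Icc r (r + δ)) := isCompact_Icc.inter_left hP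
  obtain ⟨q, ⟨⟨hqP, hqt⟩, hqr⟩, hqmax⟩ := hcomp1.exists_isGreatest
    ⟨r, ⟨hrP, hrt, hrt'⟩, le_rfl, by linarith⟩
  have hDq : Dec t q := htrans t r q hrt hqr.1 hDr (hi r q hrP hrt hqr.1 hqt.2 hqr.2)
  rcases hqt.2.eq_or_lt with hqe | hqlt
  · rw [hqe] at hDq; exact hnot hDq
  by_cases hne : (P ∩ Icc t t' ∩ Icc (r + δ) t' ∩ {s | q < s}).Nonempty
  · have hqd : q < r + δ ∨ q = r + δ := hqr.2.lt_or_eq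
    rcases hqd with hqd | hqd
    · have hcomp2 : IsCompact (P ∩ Icc t t' ∩ Icc (r + δ) t') := isCompact_Icc.inter_left hP
      obtain ⟨p, ⟨⟨hpP, hpt⟩, hpr⟩, hpmin⟩ := hcomp2.exists_isLeast (hne.mono inter_subset_left)
      have hqp : q < p := hqd.trans_le hpr.1
      have hDp : Dec t p := htrans t q p hqt.1 hqp.le hDq
        (hii q p hqP hqt.1 hqp hpt.2 (by
          intro s hs hsP
          have hst : s ∈ Icc t t' := ⟨hqt.1.trans hs.1.le, hs.2.le.trans hpt.2⟩
          rcases le_total s (r + δ) with h | h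
          · exact absurd (hqmax ⟨⟨hsP, hst⟩, hqr.1.trans hs.1.le, h⟩) (not_le.2 hs.1)
          · exact absurd (hpmin ⟨⟨hsP, hst⟩, h, hst.2⟩) (not_le.2 hs.2)))
      have := le_csSup hbdd (show p ∈ A from ⟨⟨hpP, hpt⟩, hDp⟩)
      linarith [hpr.1]
    · have := le_csSup hbdd (show q ∈ A from ⟨⟨hqP, hqt⟩, hDq⟩)
      linarith
  · apply hnot
    refine htrans t q t' hqt.1 hqlt.le hDq (hii q t' hqP hqt.1 hqlt le_rfl ?_)
    intro s hs hsP
    have hst : s ∈ Icc t t' := ⟨hqt.1.trans hs.1.le, hs.2.le⟩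
    rcases le_total s (r + δ) with h | h
    · exact absurd (hqmax ⟨⟨hsP, hst⟩, hqr.1.trans hs.1.le, h⟩) (not_le.2 hs.1)
    · exact hne ⟨s, ⟨⟨hsP, hst⟩, h, hst.2⟩, hs.1⟩

section
variable {L T ε : ℝ} {Φ : ℝ → ℝ} {y y1 y2 y3 yt : ℝ → ℝ → ℝ}

lemma Sol.chain (hL : 0 < L) (S : Sol L T ε Φ y y1 y2 y3 yt) {P : Set ℝ}
    {t t' n δ C1 : ℝ} (ht : 0 < t) (htt : t ≤ t') (htT : t' < T) (hδ : 0 < δ) (hn0 : 0 ≤ n)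
    (hC1 : 0 ≤ C1)
    (hP : IsClosed (P ∩ Icc t t')) (htP : t ∈ P)
    (hn : ∀ s ∈ P ∩ Icc t t', ∀ x ∈ Ioo 0 L, |yt s x| ≤ n)
    (hG : ∀ a b, a ∈ P → t ≤ a → a < b → b ≤ t' → (∀ s ∈ Ioo a b, s ∉ P) →
      L2norm L (fun x => y b x - y a x) ≤ C1 * (b - a)) :
    ∃ Γ : ℝ → ℝ, ContinuousOn Γ (Icc 0 L) ∧ L2norm L Γ ≤ C1 * (t' - t) ∧
      ∀ x ∈ Ioo 0 L, (∀ r ∈ Icc 0 T, ∀ r' ∈ Icc 0 T, |r - r'| ≤ δ → |yt r x - yt r' x| ≤ 1) →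
        |y t' x - y t x - Γ x| ≤ (t' - t) * (n + 1) := by
  refine chain_order (Dec := fun a b => ∃ Γ : ℝ → ℝ, ContinuousOn Γ (Icc 0 L) ∧
    L2norm L Γ ≤ C1 * (b - a) ∧
      ∀ x ∈ Ioo 0 L, (∀ r ∈ Icc 0 T, ∀ r' ∈ Icc 0 T, |r - r'| ≤ δ → |yt r x - yt r' x| ≤ 1) →
        |y b x - y a x - Γ x| ≤ (b - a) * (n + 1)) htt hδ hP htP ?_ ?_ ?_
  · rintro a b c hab hbc ⟨Γ1, g1, g2, g3⟩ ⟨Γ2, k1, k2, k3⟩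
    refine ⟨fun x => Γ1 x + Γ2 x, g1.add k1, ?_, ?_⟩
    · have := L2norm_add_le hL.le g1 k1
      linarith
    · intro x hx hm
      have e1 := g3 x hx hm
      have e2 := k3 x hx hm
      calc |y c x - y a x - (Γ1 x + Γ2 x)|
          = |(y b x - y a x - Γ1 x) + (y c x - y b x - Γ2 x)| := by ring_nf
        _ ≤ _ := abs_add_le _ _
        _ ≤ _ := by linarith
  · intro a b haP hta hab hbt hbδ
    refine ⟨fun _ => 0, continuousOn_const, ?_, ?_⟩
    · have : L2norm L (fun _ => 0) = 0 := by simp [L2norm]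
      rw [this]
      exact mul_nonneg hC1 (by linarith)
    · intro x hx hm
      have hx' := Ioo_subset_Icc_self hx
      have := Convex.norm_image_sub_le_of_norm_hasDerivWithin_le (𝕜 := ℝ)
        (f := fun s => y s x) (f' := fun s => yt s x) (s := Icc a b) (C := n + 1)
        (fun s hs => (S.dt x hx' s ⟨by linarith [hs.1], by linarith [hs.2]⟩).hasDerivWithinAt)
        (fun s hs => by
          have h1 := hm s ⟨by linarith [hs.1], by linarith [hs.2]⟩ a
            ⟨by linarith, by linarith⟩ (by
              rw [abs_of_nonneg (by linarith [hs.1])]; linarith [hs.2])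
          have h2 := hn a ⟨haP, hta, by linarith⟩ x hx
          rw [Real.norm_eq_abs]
          calc |yt s x| = |(yt s x - yt a x) + yt a x| := by ring_nf
            _ ≤ _ := abs_add_le _ _
            _ ≤ _ := by linarith)
        (convex_Icc a b) (left_mem_Icc.2 hab) (right_mem_Icc.2 hab)
      rw [Real.norm_eq_abs, Real.norm_eq_abs, abs_of_nonneg (by linarith : 0 ≤ b - a)] at this
      simp only [sub_zero]
      linarith
  · intro a b haP hta hab hbt hgap
    refine ⟨fun x => y b x - y a x, ?_, hG a b haP hta hab hbt hgap, ?_⟩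
    · exact (S.d3 b ⟨by linarith, by linarith⟩).c0.sub (S.d3 a ⟨by linarith, by linarith⟩).c0
    · intro x _ _
      simp only [sub_self, abs_zero]
      exact mul_nonneg (by linarith) (by linarith)

/-- Passing to the limit `δ → 0` in `Sol.chain`. -/
lemma Sol.chain_limit (hL : 0 < L) (S : Sol L T ε Φ y y1 y2 y3 yt)
    {t t' N C1 : ℝ} (ht : 0 < t) (htt : t ≤ t') (htT : t' < T)
    (hN : 0 ≤ N)
    (h : ∀ δ > 0, ∃ Γ : ℝ → ℝ, ContinuousOn Γ (Icc 0 L) ∧ L2norm L Γ ≤ C1 ∧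
      ∀ x ∈ Ioo 0 L, (∀ r ∈ Icc 0 T, ∀ r' ∈ Icc 0 T, |r - r'| ≤ δ → |yt r x - yt r' x| ≤ 1) →
        |y t' x - y t x - Γ x| ≤ N) :
    ∫ x in (0:ℝ)..L, (y t' x - y t x) ^ 2 ≤ 2 * C1 ^ 2 + 2 * L * N ^ 2 := by
  choose Γ hΓ using fun k : ℕ => h (1 / ((k : ℝ) + 1)) Nat.one_div_pos_of_nat
  have c0 := (S.d3 t ⟨by linarith, by linarith⟩).c0
  have c1 := (S.d3 t' ⟨by linarith, by linarith⟩).c0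
  set w : ℝ → ℝ := fun x => y t' x - y t x with hw
  have hwc : ContinuousOn w (Icc 0 L) := c1.sub c0
  obtain ⟨K, hK⟩ := isCompact_Icc.exists_bound_of_continuousOn hwc
  have hlim : Tendsto (fun k => ∫ x in (0:ℝ)..L, min (w x ^ 2) (2 * Γ k x ^ 2 + 2 * N ^ 2)) atTop
      (𝓝 (∫ x in (0:ℝ)..L, w x ^ 2)) := by
    apply intervalIntegral.tendsto_integral_filter_of_dominated_convergence (fun _ => K ^ 2)
    · refine Eventually.of_forall fun k => ?_
      rw [uIoc_of_le hL.le]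
      have hk := (hΓ k).1
      have : ContinuousOn (fun x => min (w x ^ 2) (2 * Γ k x ^ 2 + 2 * N ^ 2)) (Icc 0 L) := by
        fun_prop
      exact (this.mono Ioc_subset_Icc_self).aestronglyMeasurable measurableSet_Ioc
    · refine Eventually.of_forall fun k => Eventually.of_forall fun x hx => ?_
      rw [uIoc_of_le hL.le] at hx
      have h1 := hK x ⟨hx.1.le, hx.2⟩
      rw [Real.norm_eq_abs] at h1
      rw [Real.norm_eq_abs, abs_of_nonneg (le_min (sq_nonneg _) (by positivity))]
      refine (min_le_left _ _).trans ?_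
      rw [← sq_abs]
      exact pow_le_pow_left₀ (abs_nonneg _) h1 2
    · exact intervalIntegrable_const
    · have : ∀ᵐ x : ℝ, x ≠ L := by simp [ae_iff]
      filter_upwards [this] with x hx hx2
      rw [uIoc_of_le hL.le] at hx2
      have hxI : x ∈ Ioo 0 L := ⟨hx2.1, lt_of_le_of_ne hx2.2 hx⟩
      have huc := isCompact_Icc.uniformContinuousOn_of_continuous
        (S.ct x (Ioo_subset_Icc_self hxI))
      rw [Metric.uniformContinuousOn_iff_le] at huc
      obtain ⟨δ, hδ, hm⟩ := huc 1 one_pos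
      apply tendsto_nhds_of_eventually_eq
      obtain ⟨k0, hk0⟩ := exists_nat_one_div_lt hδ
      filter_upwards [eventually_ge_atTop k0] with k hk
      have hkδ : 1 / ((k : ℝ) + 1) ≤ δ := (Nat.one_div_le_one_div hk).trans hk0.le
      have hb := (hΓ k).2.2 x hxI (fun r hr r' hr' hrr => by
        have := hm r hr r' hr' (by rw [Real.dist_eq]; linarith)
        rwa [Real.dist_eq] at this)
      apply min_eq_left
      have hb2 : (y t' x - y t x - Γ k x) ^ 2 ≤ N ^ 2 := by
        rw [← sq_abs]; exact pow_le_pow_left₀ (abs_nonneg _) hb 2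
      simp only [hw]
      nlinarith [sq_nonneg (y t' x - y t x - 2 * Γ k x)]
  refine le_of_tendsto hlim (Eventually.of_forall fun k => ?_)
  have hk := (hΓ k).1
  have h1 : ∫ x in (0:ℝ)..L, min (w x ^ 2) (2 * Γ k x ^ 2 + 2 * N ^ 2) ≤
      ∫ x in (0:ℝ)..L, (2 * Γ k x ^ 2 + 2 * N ^ 2) :=
    intervalIntegral.integral_mono_on hL.le (ii hL.le (by fun_prop)) (ii hL.le (by fun_prop))
      (fun x _ => min_le_right _ _)
  rw [intervalIntegral.integral_add (ii hL.le (by fun_prop)) (ii hL.le (by fun_prop)),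
    intervalIntegral.integral_const_mul, intervalIntegral.integral_const, ← L2norm_sq hL.le] at h1
  simp only [sub_zero, smul_eq_mul] at h1
  have h2 := pow_le_pow_left₀ (L2norm_nonneg _ _) (hΓ k).2.1 2
  linarith

/-- Every classical solution is `L²`-Lipschitz to the right at every interior time. -/
lemma Sol.RL_all {Λ : ℝ} (hL : 0 < L) (hε : 0 < ε) (S : Sol L T ε Φ y y1 y2 y3 yt)
    (hΦ1 : ∀ r, 0 ≤ r → |Φ r| ≤ 1)
    (hΦL : ∀ r s, 0 ≤ r → 0 ≤ s → |Φ r - Φ s| ≤ Λ * |r - s|) :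
    ∀ t ∈ Ioo 0 T, RL L y t := by
  obtain ⟨C0, hC0, hgap⟩ := S.gap hL hε hΦ1 hΦL
  set R : Set ℝ := {t | RL L y t} with hR
  set P : Set ℝ := Ioo 0 T ∩ (interior R)ᶜ with hPdef
  suffices hPe : P = ∅ by
    intro t ht
    by_contra hcon
    have : t ∈ P := ⟨ht, fun hi => hcon (show t ∈ _ from interior_subset hi)⟩
    rw [hPe] at this
    exact this
  by_contra hPne
  have hPne : P.Nonempty := nonempty_iff_ne_empty.2 hPne
  have hlc : IsLocallyClosed P :=
    isOpen_Ioo.isLocallyClosed.inter isOpen_interior.isClosed_compl.isLocallyClosed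
  haveI : LocallyCompactSpace P := hlc.locallyCompactSpace
  haveI : Nonempty P := hPne.to_subtype
  obtain ⟨n, p, hp⟩ := nonempty_interior_of_iUnion_of_closed (X := P)
    (f := fun n : ℕ => {s : P | ∀ x ∈ Ioo 0 L, |yt s x| ≤ n})
    (by
      intro n
      simp only [setOf_forall]
      refine isClosed_iInter fun x => isClosed_iInter fun hx => ?_
      have h1 : Continuous fun s : P => yt s x := by
        have := S.ct x (Ioo_subset_Icc_self hx)
        exact (continuousOn_iff_continuous_restrict.1
          (this.mono (fun s hs => Ioo_subset_Icc_self hs.1) : ContinuousOn _ P))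
      exact isClosed_le h1.abs continuous_const)
    (by
      refine eq_univ_of_forall fun s => ?_
      rw [mem_iUnion]
      obtain ⟨K, hK⟩ := isCompact_Icc.exists_bound_of_continuousOn
        (S.rhs_cont (Ioo_subset_Icc_self s.2.1))
      obtain ⟨n, hn⟩ := exists_nat_ge K
      refine ⟨n, fun x hx => ?_⟩
      rw [S.pde s s.2.1 x hx]
      exact (hK x (Ioo_subset_Icc_self hx)).trans hn)
  rw [mem_interior_iff_mem_nhds, Metric.mem_nhds_iff] at hp
  obtain ⟨η, hη, hball⟩ := hp
  have hnb : ∀ s ∈ P, |s - p| < η → ∀ x ∈ Ioo 0 L, |yt s x| ≤ n := by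
    intro s hs hsp
    exact hball (show (⟨s, hs⟩ : P) ∈ Metric.ball p η by
      rw [Metric.mem_ball, Subtype.dist_eq, Real.dist_eq]; exact hsp)
  -- every time close to `p` is in `R`
  have hsub : Metric.ball (p : ℝ) η ∩ Ioo 0 T ⊆ R := by
    rintro t ⟨htb, ht⟩
    by_cases htP : t ∈ P
    swap
    · by_contra hcon
      exact htP ⟨ht, fun hi => hcon (interior_subset hi)⟩
    rw [Metric.mem_ball, Real.dist_eq, abs_lt] at htb
    refine ⟨2 * (C0 * n ^ 2) + 2 * L * ((n : ℝ) + 1) ^ 2, ?_⟩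
    have hlt : t < min (p + η) T := lt_min (by linarith) ht.2
    filter_upwards [Ioo_mem_nhdsGT hlt] with t' ht'
    have ht'1 : t' < p + η := ht'.2.trans_le (min_le_left _ _)
    have ht'2 : t' < T := ht'.2.trans_le (min_le_right _ _)
    have hb : ∀ s ∈ P ∩ Icc t t', ∀ x ∈ Ioo 0 L, |yt s x| ≤ n := by
      intro s hs
      refine hnb s hs.1 ?_
      rw [abs_lt]; constructor <;> linarith [hs.2.1, hs.2.2]
    have hcl : IsClosed (P ∩ Icc t t') := by
      have : P ∩ Icc t t' = Icc t t' ∩ (interior R)ᶜ := by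
        ext s
        constructor
        · rintro ⟨⟨_, h2⟩, h3⟩; exact ⟨h3, h2⟩
        · rintro ⟨h3, h2⟩
          exact ⟨⟨⟨ht.1.trans_le h3.1, h3.2.trans_lt ht'2⟩, h2⟩, h3⟩
      rw [this]
      exact isClosed_Icc.inter isOpen_interior.isClosed_compl
    have hsq : 0 ≤ C0 * (n : ℝ) ^ 2 := by positivity
    have hfin := S.chain_limit hL ht.1 ht'.1.le ht'2 (N := (t' - t) * ((n : ℝ) + 1))
      (C1 := Real.sqrt (C0 * (n : ℝ) ^ 2) * (t' - t))
      (mul_nonneg (by linarith [ht'.1]) (by positivity))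
      (fun δ hδ => S.chain hL (P := P) ht.1 ht'.1.le ht'2 hδ (Nat.cast_nonneg n)
        (Real.sqrt_nonneg _) hcl htP hb (by
          intro a b haP hta hab hbt hno
          have h1 := hgap a b n (ht.1.trans_le hta) hab (hbt.trans_lt ht'2) (by
            intro s hs
            by_contra hcon
            exact hno s hs ⟨⟨by linarith [ht.1, hs.1], by linarith [hs.2]⟩,
              fun hi => hcon (show _ ∈ _ from interior_subset hi)⟩)
            (hb a ⟨haP, hta, by linarith⟩)
          unfold L2norm
          refine (Real.sqrt_le_sqrt h1).trans ?_
          rw [Real.sqrt_mul hsq, Real.sqrt_sq (by linarith)]))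
    refine hfin.trans (le_of_eq ?_)
    rw [mul_pow, Real.sq_sqrt hsq]
    ring
  have hpi : (p : ℝ) ∈ interior R :=
    mem_interior.2 ⟨_, hsub, Metric.isOpen_ball.inter isOpen_Ioo,
      Metric.mem_ball_self hη, p.2.1⟩
  exact p.2.2 hpi
end

lemma cutoff_lip {Φ : ℝ → ℝ} (h : IsCutoff Φ) :
    ∃ Λ : ℝ, 0 ≤ Λ ∧ ∀ r s, 0 ≤ r → 0 ≤ s → |Φ r - Φ s| ≤ Λ * |r - s| := by
  obtain ⟨h1, -, -, h4, -⟩ := h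
  have hd : Continuous (deriv Φ) := h1.continuous_deriv (by norm_cast)
  have hdiff : Differentiable ℝ Φ := h1.differentiable (by simp)
  obtain ⟨K, hK⟩ := (isCompact_Icc (a := (0:ℝ)) (b := 1)).exists_bound_of_continuousOn
    hd.continuousOn
  have hK0 : 0 ≤ K := (norm_nonneg _).trans (hK 0 ⟨le_rfl, zero_le_one⟩)
  have hb : ∀ x ∈ Ici (0:ℝ), ‖deriv Φ x‖ ≤ K := by
    intro x hx
    rcases le_or_gt x 1 with hx1 | hx1
    · exact hK x ⟨hx, hx1⟩
    · have : Φ =ᶠ[𝓝 x] fun _ => 0 := by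
        filter_upwards [Ioi_mem_nhds hx1] with z hz
        exact h4 z (mem_Ici.2 (le_of_lt (mem_Ioi.1 hz)))
      rw [this.deriv_eq]
      simpa using hK0
  refine ⟨K, hK0, fun r s hr hs => ?_⟩
  have := (convex_Ici (0:ℝ)).norm_image_sub_le_of_norm_deriv_le (f := Φ) (C := K)
    (fun x _ => hdiff x) hb (show s ∈ Ici (0:ℝ) from hs) (show r ∈ Ici (0:ℝ) from hr)
  simpa [Real.norm_eq_abs] using this

lemma cutoff_small {Φ : ℝ → ℝ} (h : IsCutoff Φ) {L ε : ℝ} (hL : 0 ≤ L) (hε : 0 < ε)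
    (f : ℝ → ℝ) (hne : Φ (L2norm L f / ε) ≠ 0) : ∫ x in (0:ℝ)..L, f x ^ 2 ≤ ε ^ 2 := by
  obtain ⟨-, -, -, h4, -⟩ := h
  have h1 : L2norm L f / ε < 1 := by
    by_contra hc
    exact hne (h4 _ (not_lt.1 hc))
  rw [div_lt_one hε] at h1
  rw [← L2norm_sq hL]
  exact pow_le_pow_left₀ (L2norm_nonneg _ _) h1.le 2

lemma int_mul_sq_le {L K : ℝ} (hL : 0 ≤ L) {f g : ℝ → ℝ} (hf : ContinuousOn f (Icc 0 L))
    (hg : ContinuousOn g (Icc 0 L)) (hK : ∀ x ∈ Icc 0 L, f x ^ 2 ≤ K) :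
    ∫ x in (0:ℝ)..L, f x ^ 2 * g x ^ 2 ≤ K * ∫ x in (0:ℝ)..L, g x ^ 2 := by
  rw [← intervalIntegral.integral_const_mul]
  apply intervalIntegral.integral_mono_on hL (ii hL (by fun_prop)) (ii hL (by fun_prop))
  intro x hx
  exact mul_le_mul_of_nonneg_right (hK x hx) (sq_nonneg _)

lemma q_single {L c ε : ℝ} (hL : 0 < L) (hc0 : 0 ≤ c) (hc1 : c ≤ 1)
    {f f1 f2 f3 : ℝ → ℝ} (hf : D3 L f f1 f2 f3) (h0 : f 0 = 0)
    (hcf : c ≠ 0 → ∫ x in (0:ℝ)..L, f x ^ 2 ≤ ε ^ 2) :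
    ∫ x in (0:ℝ)..L, ((c * f x ^ 2 - 0 * f x ^ 2) / 2) ^ 2 ≤
      L * ε ^ 2 / 4 * ∫ x in (0:ℝ)..L, f1 x ^ 2 := by
  have c0 := hf.c0
  have hn1 := sq_int_nonneg hL.le f1
  have e1 : ∫ x in (0:ℝ)..L, ((c * f x ^ 2 - 0 * f x ^ 2) / 2) ^ 2 =
      c ^ 2 / 4 * ∫ x in (0:ℝ)..L, f x ^ 2 * f x ^ 2 := by
    rw [← intervalIntegral.integral_const_mul]
    congr 1; ext x; ring
  rw [e1]
  by_cases hc : c = 0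
  · rw [hc]
    have : 0 ≤ L * ε ^ 2 / 4 * ∫ x in (0:ℝ)..L, f1 x ^ 2 := by positivity
    simpa using this
  · have h1 := int_mul_sq_le hL.le c0 c0 (fun x hx => sup_bound hf.c0 hf.c1 hf.d0 h0 hx)
    have h2 := mul_le_mul_of_nonneg_left (hcf hc) (mul_nonneg hL.le hn1)
    have hc2 : c ^ 2 ≤ 1 := pow_le_one₀ hc0 hc1
    have h3 : 0 ≤ ∫ x in (0:ℝ)..L, f x ^ 2 * f x ^ 2 :=
      intervalIntegral.integral_nonneg hL.le (fun x _ => by positivity)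
    nlinarith [mul_le_mul_of_nonneg_right hc2 h3]

lemma q_ordered {L c c' ε Λ Mg : ℝ} (hL : 0 < L) (hε : 0 < ε)
    (hc0 : 0 ≤ c) (hc1 : c ≤ 1)
    {f f1 f2 f3 g g1 g2 g3 : ℝ → ℝ} (hf : D3 L f f1 f2 f3) (hf0 : f 0 = 0)
    (hg : D3 L g g1 g2 g3) (hg0 : g 0 = 0)
    (hcf : c ≠ 0 → ∫ x in (0:ℝ)..L, f x ^ 2 ≤ ε ^ 2)
    (hcg : c' ≠ 0 → ∫ x in (0:ℝ)..L, g x ^ 2 ≤ ε ^ 2)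
    (hcc : (c - c') ^ 2 ≤ (Λ / ε) ^ 2 * ∫ x in (0:ℝ)..L, (f x - g x) ^ 2)
    (hM0 : 0 ≤ Mg)
    (hM : ∫ x in (0:ℝ)..L, g x ^ 2 ≤ ε ^ 2 → ∫ x in (0:ℝ)..L, g1 x ^ 2 ≤ Mg)
    (hle : ∫ x in (0:ℝ)..L, g x ^ 2 ≤ ∫ x in (0:ℝ)..L, f x ^ 2) :
    ∫ x in (0:ℝ)..L, ((c * f x ^ 2 - c' * g x ^ 2) / 2) ^ 2 ≤
      (2 * L + Λ ^ 2 * L) * (ε ^ 2 * (∫ x in (0:ℝ)..L, (f1 x - g1 x) ^ 2) +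
        Mg * ∫ x in (0:ℝ)..L, (f x - g x) ^ 2) := by
  have f0 := hf.c0
  have g0 := hg.c0
  have hw := hf.sub hg
  set n0f := ∫ x in (0:ℝ)..L, f x ^ 2 with hn0f
  set n0g := ∫ x in (0:ℝ)..L, g x ^ 2 with hn0g
  set w0 := ∫ x in (0:ℝ)..L, (f x - g x) ^ 2 with hw0
  set w1 := ∫ x in (0:ℝ)..L, (f1 x - g1 x) ^ 2 with hw1
  have w0n : 0 ≤ w0 := sq_int_nonneg hL.le _
  have w1n : 0 ≤ w1 := sq_int_nonneg hL.le _
  have n0gn : 0 ≤ n0g := sq_int_nonneg hL.le _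
  have n0fn : 0 ≤ n0f := sq_int_nonneg hL.le _
  set I1 := ∫ x in (0:ℝ)..L, (f x - g x) ^ 2 * (f x + g x) ^ 2 with hI1
  set I2 := ∫ x in (0:ℝ)..L, g x ^ 2 * g x ^ 2 with hI2
  have I1n : 0 ≤ I1 := intervalIntegral.integral_nonneg hL.le (fun x _ => by positivity)
  have I2n : 0 ≤ I2 := intervalIntegral.integral_nonneg hL.le (fun x _ => by positivity)
  have hq : ∫ x in (0:ℝ)..L, ((c * f x ^ 2 - c' * g x ^ 2) / 2) ^ 2 ≤
      c ^ 2 / 2 * I1 + (c - c') ^ 2 / 2 * I2 := by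
    rw [hI1, hI2, ← intervalIntegral.integral_const_mul, ← intervalIntegral.integral_const_mul,
      ← intervalIntegral.integral_add (ii hL.le (by fun_prop)) (ii hL.le (by fun_prop))]
    apply intervalIntegral.integral_mono_on hL.le (ii hL.le (by fun_prop))
      (ii hL.le (by fun_prop))
    intro x hx
    nlinarith [sq_nonneg (c * (f x + g x) * (f x - g x) - (c - c') * g x ^ 2)]
  have hI1le : I1 ≤ L * w1 * (2 * n0f + 2 * n0g) := by
    have h1 := int_mul_sq_le hL.le hw.c0 (f0.add g0)
      (fun x hx => sup_bound hw.c0 hw.c1 hw.d0 (by simp [hf0, hg0]) hx)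
    refine h1.trans (mul_le_mul_of_nonneg_left ?_ (mul_nonneg hL.le w1n))
    rw [hn0f, hn0g, ← intervalIntegral.integral_const_mul, ← intervalIntegral.integral_const_mul,
      ← intervalIntegral.integral_add (ii hL.le (by fun_prop)) (ii hL.le (by fun_prop))]
    apply intervalIntegral.integral_mono_on hL.le (ii hL.le (by fun_prop))
      (ii hL.le (by fun_prop))
    intro x hx
    simp only [Pi.add_apply]
    nlinarith [sq_nonneg (f x - g x)]
  have hI2le : I2 ≤ L * (∫ x in (0:ℝ)..L, g1 x ^ 2) * n0g :=
    int_mul_sq_le hL.le g0 g0 (fun x hx => sup_bound hg.c0 hg.c1 hg.d0 hg0 hx)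
  have hterm1 : c ^ 2 / 2 * I1 ≤ 2 * L * (ε ^ 2 * w1) := by
    by_cases hc : c = 0
    · rw [hc]
      have : 0 ≤ 2 * L * (ε ^ 2 * w1) := by positivity
      simpa using this
    · have hc2 : c ^ 2 ≤ 1 := pow_le_one₀ hc0 hc1
      have a1 := hcf hc
      have a2 : I1 ≤ L * w1 * (4 * ε ^ 2) := hI1le.trans
        (mul_le_mul_of_nonneg_left (by linarith) (by positivity))
      nlinarith [mul_le_mul_of_nonneg_right hc2 I1n]
  have hterm2 : (c - c') ^ 2 / 2 * I2 ≤ Λ ^ 2 * L * (Mg * w0) := by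
    by_cases hs : n0g ≤ ε ^ 2
    · have a1 := hM hs
      have a2 : I2 ≤ L * Mg * ε ^ 2 := hI2le.trans
        (mul_le_mul (mul_le_mul_of_nonneg_left a1 hL.le) hs n0gn (by positivity))
      have a3 : (c - c') ^ 2 * I2 ≤ ((Λ / ε) ^ 2 * w0) * (L * Mg * ε ^ 2) :=
        mul_le_mul hcc a2 I2n (by positivity)
      have a4 : ((Λ / ε) ^ 2 * w0) * (L * Mg * ε ^ 2) = Λ ^ 2 * L * (Mg * w0) := by
        field_simp
      have a5 : 0 ≤ Λ ^ 2 * L * (Mg * w0) := by positivity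
      linarith
    · have b1 : c' = 0 := by
        by_contra h
        exact hs (hcg h)
      have b2 : c = 0 := by
        by_contra h
        exact hs (hle.trans (hcf h))
      have a5 : 0 ≤ Λ ^ 2 * L * (Mg * w0) := by positivity
      simpa [b1, b2] using a5
  have p1 : 0 ≤ 2 * L * (Mg * w0) := by positivity
  have p2 : 0 ≤ Λ ^ 2 * L * (ε ^ 2 * w1) := by positivity
  linarith

lemma q_pair {L c c' ε Λ Mf Mg : ℝ} (hL : 0 < L) (hε : 0 < ε)
    (hc0 : 0 ≤ c) (hc1 : c ≤ 1) (hc0' : 0 ≤ c') (hc1' : c' ≤ 1)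
    {f f1 f2 f3 g g1 g2 g3 : ℝ → ℝ} (hf : D3 L f f1 f2 f3) (hf0 : f 0 = 0)
    (hg : D3 L g g1 g2 g3) (hg0 : g 0 = 0)
    (hcf : c ≠ 0 → ∫ x in (0:ℝ)..L, f x ^ 2 ≤ ε ^ 2)
    (hcg : c' ≠ 0 → ∫ x in (0:ℝ)..L, g x ^ 2 ≤ ε ^ 2)
    (hcc : (c - c') ^ 2 ≤ (Λ / ε) ^ 2 * ∫ x in (0:ℝ)..L, (f x - g x) ^ 2)
    (hMf0 : 0 ≤ Mf) (hMg0 : 0 ≤ Mg)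
    (hMf : ∫ x in (0:ℝ)..L, f x ^ 2 ≤ ε ^ 2 → ∫ x in (0:ℝ)..L, f1 x ^ 2 ≤ Mf)
    (hMg : ∫ x in (0:ℝ)..L, g x ^ 2 ≤ ε ^ 2 → ∫ x in (0:ℝ)..L, g1 x ^ 2 ≤ Mg) :
    ∫ x in (0:ℝ)..L, ((c * f x ^ 2 - c' * g x ^ 2) / 2) ^ 2 ≤
      (2 * L + Λ ^ 2 * L) * (ε ^ 2 * (∫ x in (0:ℝ)..L, (f1 x - g1 x) ^ 2) +
        (Mf + Mg) * ∫ x in (0:ℝ)..L, (f x - g x) ^ 2) := by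
  have w0n : 0 ≤ ∫ x in (0:ℝ)..L, (f x - g x) ^ 2 := sq_int_nonneg hL.le _
  have hK : 0 ≤ 2 * L + Λ ^ 2 * L := by positivity
  rcases le_total (∫ x in (0:ℝ)..L, g x ^ 2) (∫ x in (0:ℝ)..L, f x ^ 2) with hle | hle
  · refine (q_ordered hL hε hc0 hc1 hf hf0 hg hg0 hcf hcg hcc hMg0 hMg hle).trans ?_
    apply mul_le_mul_of_nonneg_left _ hK
    nlinarith [mul_nonneg hMf0 w0n]
  · have s0 : ∫ x in (0:ℝ)..L, (g x - f x) ^ 2 = ∫ x in (0:ℝ)..L, (f x - g x) ^ 2 := by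
      congr 1; ext x; ring
    have s1 : ∫ x in (0:ℝ)..L, (g1 x - f1 x) ^ 2 = ∫ x in (0:ℝ)..L, (f1 x - g1 x) ^ 2 := by
      congr 1; ext x; ring
    have s2 : ∫ x in (0:ℝ)..L, ((c' * g x ^ 2 - c * f x ^ 2) / 2) ^ 2 =
        ∫ x in (0:ℝ)..L, ((c * f x ^ 2 - c' * g x ^ 2) / 2) ^ 2 := by
      congr 1; ext x; ring
    have := q_ordered hL hε hc0' hc1' hg hg0 hf hf0 hcg hcf (Λ := Λ)
      (by rw [s0, ← neg_sq, neg_sub]; exact hcc) hMf0 hMf hle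
    rw [s0, s1, s2] at this
    refine this.trans ?_
    apply mul_le_mul_of_nonneg_left _ hK
    nlinarith [mul_nonneg hMg0 w0n]

/-- The saturated energy `ε² r / (r + ε²)`, `r = e^{-2s} Y(s)`. -/
lemma sat_deriv {Y : ℝ → ℝ} {Y' n0 n1 L T ε t : ℝ} (hL : 0 < L) (hε : 0 < ε)
    (ht : t ∈ Ioo 0 T) (hY0 : 0 ≤ Y t) (hd : HasDerivWithinAt Y Y' (Ici t) t)
    (hn1 : 0 ≤ n1) (hle : Y' ≤ 2 * Y t - n1) (hYn : Y t ≤ (1 + L) * n0) :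
    ∃ H', HasDerivWithinAt (fun s => ε ^ 2 * (Real.exp (-2 * s) * Y s) /
        (Real.exp (-2 * s) * Y s + ε ^ 2)) H' (Ici t) t ∧ H' ≤ 0 ∧
      (n0 ≤ ε ^ 2 → H' ≤ -(Real.exp (-2 * T) / (2 + L) ^ 2) * n1) := by
  set r := Real.exp (-2 * t) * Y t with hr
  have hr0 : 0 ≤ r := by positivity
  have hpos : 0 < r + ε ^ 2 := by positivity
  have h1 : HasDerivWithinAt (fun s => Real.exp (-2 * s) * Y s)
      (Real.exp (-2 * t) * (Y' - 2 * Y t)) (Ici t) t := by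
    have e1 := (((hasDerivAt_id t).const_mul (-2)).exp).hasDerivWithinAt (s := Ici t)
    refine (e1.mul hd).congr_deriv ?_
    simp only [id]
    ring
  have h2 := (h1.const_mul (ε ^ 2)).div (h1.add_const (ε ^ 2)) hpos.ne'
  have hneg : Y' - 2 * Y t ≤ -n1 := by linarith
  have hval : (ε ^ 2 * (Real.exp (-2 * t) * (Y' - 2 * Y t)) * (r + ε ^ 2) -
      ε ^ 2 * r * (Real.exp (-2 * t) * (Y' - 2 * Y t))) / (r + ε ^ 2) ^ 2 =
      (ε ^ 2 / (r + ε ^ 2)) ^ 2 * (Real.exp (-2 * t) * (Y' - 2 * Y t)) := by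
    field_simp
    ring
  refine ⟨_, h2.congr_deriv hval, ?_, ?_⟩
  · exact mul_nonpos_of_nonneg_of_nonpos (sq_nonneg _)
      (mul_nonpos_of_nonneg_of_nonpos (Real.exp_pos _).le (by linarith))
  · intro hn0
    have hr1 : r ≤ (1 + L) * ε ^ 2 := by
      have a1 : Real.exp (-2 * t) ≤ 1 := by
        rw [Real.exp_le_one_iff]; linarith [ht.1]
      have a2 : r ≤ 1 * Y t := mul_le_mul_of_nonneg_right a1 hY0
      have a3 : (1 + L) * n0 ≤ (1 + L) * ε ^ 2 := mul_le_mul_of_nonneg_left hn0 (by linarith)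
      linarith
    have b1 : 1 / (2 + L) ≤ ε ^ 2 / (r + ε ^ 2) := by
      rw [div_le_div_iff₀ (by linarith) hpos]
      nlinarith
    have b2 := pow_le_pow_left₀ (by positivity) b1 2
    have b3 : Real.exp (-2 * T) ≤ Real.exp (-2 * t) := Real.exp_le_exp.2 (by linarith [ht.2])
    have b4 : Real.exp (-2 * T) / (2 + L) ^ 2 ≤
        (ε ^ 2 / (r + ε ^ 2)) ^ 2 * Real.exp (-2 * t) := by
      calc Real.exp (-2 * T) / (2 + L) ^ 2 = (1 / (2 + L)) ^ 2 * Real.exp (-2 * T) := by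
            field_simp
        _ ≤ _ := mul_le_mul b2 b3 (Real.exp_pos _).le (by positivity)
    have b5 := mul_le_mul_of_nonneg_right b4 hn1
    have b6 : 0 ≤ (ε ^ 2 / (r + ε ^ 2)) ^ 2 * Real.exp (-2 * t) := by positivity
    have b7 := mul_le_mul_of_nonneg_left hneg b6
    nlinarith

lemma sat_bounds {r ε : ℝ} (hε : 0 < ε) (hr : 0 ≤ r) :
    0 ≤ ε ^ 2 * r / (r + ε ^ 2) ∧ ε ^ 2 * r / (r + ε ^ 2) ≤ ε ^ 2 := by
  have hpos : 0 < r + ε ^ 2 := by positivity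
  refine ⟨by positivity, ?_⟩
  rw [div_le_iff₀ hpos]
  nlinarith [sq_nonneg (ε ^ 2), mul_pos (pow_pos hε 2) (pow_pos hε 2)]

lemma ode_core {A B G : ℝ → ℝ} {T t₀ ε c k : ℝ} (hc : 0 ≤ c) (hk : 0 < k)
    (hcε : c * ε ^ 2 ≤ 1) (ht₀ : t₀ ∈ Icc 0 T)
    (hA : ContinuousOn A (Icc 0 T)) (hB : ContinuousOn B (Icc 0 T))
    (hG : ContinuousOn G (Icc 0 T))
    (hA0 : ∀ t ∈ Icc 0 T, 0 ≤ A t)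
    (hG0 : ∀ t ∈ Icc 0 T, 0 ≤ G t) (hG1 : ∀ t ∈ Icc 0 T, G t ≤ 2 * ε ^ 2)
    (hBz : B 0 = 0)
    (hd : ∀ t ∈ Ioo 0 T, ∃ A' B' G' m n : ℝ, 0 ≤ m ∧ 0 ≤ n ∧
      HasDerivWithinAt A A' (Ici t) t ∧ HasDerivWithinAt B B' (Ici t) t ∧
      HasDerivWithinAt G G' (Ici t) t ∧
      A' ≤ 2 * A t - 2 * n + c * (ε ^ 2 * n + m * A t) ∧
      B' ≤ 2 * B t + c * (ε ^ 2 * n + m * A t) ∧ G' ≤ -k * m) :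
    B t₀ ≤ Real.exp (2 * T) * ((c + 2 * (c / k)) * ε ^ 2 *
      (Real.exp (c / k * (2 * ε ^ 2)) * A 0)) := by
  choose! A' B' G' m n hm hn dA dB dG lA lB lG using hd
  set κ := c / k with hκ
  have hκ0 : 0 ≤ κ := by positivity
  have hκk : κ * k = c := by rw [hκ]; field_simp
  set Z : ℝ → ℝ := fun s => Real.exp (κ * G s - 2 * s) * A s with hZ
  set Z' : ℝ → ℝ := fun s => Real.exp (κ * G s - 2 * s) * (A' s - 2 * A s + κ * G' s * A s)
    with hZ'
  have hsub : Ioo 0 t₀ ⊆ Ioo 0 T := Ioo_subset_Ioo le_rfl ht₀.2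
  have hsub' : Icc 0 t₀ ⊆ Icc 0 T := Icc_subset_Icc le_rfl ht₀.2
  have hZc : ContinuousOn Z (Icc 0 T) := by
    simp only [hZ]
    fun_prop
  have dZ : ∀ s ∈ Ioo 0 T, HasDerivWithinAt Z (Z' s) (Ici s) s := by
    intro s hs
    have e1 := (((dG s hs).const_mul κ).sub
      (((hasDerivAt_id s).const_mul 2).hasDerivWithinAt (s := Ici s))).exp.mul (dA s hs)
    refine e1.congr_deriv ?_
    simp only [hZ', id, Pi.sub_apply]
    ring
  have key := anti_of_right_deriv ht₀.1
    (f := fun s => Real.exp (-2 * s) * B s + (c * ε ^ 2 * Z s + κ * (G s * Z s)))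
    (f' := fun s => Real.exp (-2 * s) * (B' s - 2 * B s) + (c * ε ^ 2 * Z' s +
      κ * (G' s * Z s + G s * Z' s)))
    (by
      refine ContinuousOn.mono ?_ hsub'
      fun_prop)
    (by
      intro s hs
      have hs := hsub hs
      have e1 := (((hasDerivAt_id s).const_mul (-2)).exp).hasDerivWithinAt (s := Ici s)
      have e2 := (e1.mul (dB s hs)).add (((dZ s hs).const_mul (c * ε ^ 2)).add
        (((dG s hs).mul (dZ s hs)).const_mul κ))
      refine e2.congr_deriv ?_
      simp only [id]
      ring)
    (by
      intro s hs
      have hs := hsub hs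
      have hs' := Ioo_subset_Icc_self hs
      have a0 := hA0 s hs'
      have g0 := hG0 s hs'
      have hm := hm s hs
      have hn := hn s hs
      have lA := lA s hs
      have lB := lB s hs
      have lG := lG s hs
      set E := Real.exp (-2 * s) with hE
      set F := Real.exp (κ * G s - 2 * s) with hF
      have hE0 : 0 < E := Real.exp_pos _
      have hEF : E ≤ F := Real.exp_le_exp.2 (by nlinarith [mul_nonneg hκ0 g0])
      have hF0 : 0 < F := Real.exp_pos _
      have hκG : κ * G' s ≤ -(c * m s) := by
        have := mul_le_mul_of_nonneg_left lG hκ0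
        rw [← hκk]; linarith
      have hκGA := mul_le_mul_of_nonneg_right hκG a0
      have hεn := mul_le_mul_of_nonneg_right hcε hn
      have x1 : A' s - 2 * A s + κ * G' s * A s ≤ -n s := by linarith
      have x2 : Z' s ≤ F * (-n s) := mul_le_mul_of_nonneg_left x1 hF0.le
      have x3 : F * (-n s) ≤ E * (-n s) := by nlinarith
      have hcε0 : 0 ≤ c * ε ^ 2 := by positivity
      have x4 : c * ε ^ 2 * Z' s ≤ c * ε ^ 2 * (E * (-n s)) :=
        mul_le_mul_of_nonneg_left (x2.trans x3) hcε0
      have x5 : Z' s ≤ 0 := x2.trans (by nlinarith)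
      have x6 : κ * (G s * Z' s) ≤ 0 :=
        mul_nonpos_of_nonneg_of_nonpos hκ0 (mul_nonpos_of_nonneg_of_nonpos g0 x5)
      have x7 : κ * (G' s * Z s) ≤ -(c * m s) * (E * A s) := by
        have y1 : κ * G' s * Z s ≤ -(c * m s) * Z s :=
          mul_le_mul_of_nonneg_right hκG (mul_nonneg hF0.le a0)
        have y2 : E * A s ≤ Z s := mul_le_mul_of_nonneg_right hEF a0
        have y3 := mul_le_mul_of_nonneg_left y2 (mul_nonneg hc hm)
        linarith
      have x8 : E * (B' s - 2 * B s) ≤ E * (c * (ε ^ 2 * n s + m s * A s)) :=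
        mul_le_mul_of_nonneg_left (by linarith) hE0.le
      linarith)
  simp only [hBz, mul_zero, zero_add] at key
  have h0 : (0:ℝ) ∈ Icc 0 T := ⟨le_rfl, ht₀.1.trans ht₀.2⟩
  have hZt : 0 ≤ Z t₀ := mul_nonneg (Real.exp_pos _).le (hA0 _ ht₀)
  have hp1 : 0 ≤ c * ε ^ 2 * Z t₀ + κ * (G t₀ * Z t₀) :=
    add_nonneg (mul_nonneg (by positivity) hZt)
      (mul_nonneg hκ0 (mul_nonneg (hG0 _ ht₀) hZt))
  have hZ0 : Z 0 ≤ Real.exp (κ * (2 * ε ^ 2)) * A 0 := by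
    refine mul_le_mul_of_nonneg_right (Real.exp_le_exp.2 ?_) (hA0 _ h0)
    have := mul_le_mul_of_nonneg_left (hG1 _ h0) hκ0
    linarith
  have hZ00 : 0 ≤ Z 0 := mul_nonneg (Real.exp_pos _).le (hA0 _ h0)
  have hbd : Real.exp (-2 * t₀) * B t₀ ≤
      (c + 2 * κ) * ε ^ 2 * (Real.exp (κ * (2 * ε ^ 2)) * A 0) := by
    have y1 : κ * (G 0 * Z 0) ≤ κ * (2 * ε ^ 2 * Z 0) :=
      mul_le_mul_of_nonneg_left (mul_le_mul_of_nonneg_right (hG1 _ h0) hZ00) hκ0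
    have y2 := mul_le_mul_of_nonneg_left hZ0 (by positivity : 0 ≤ (c + 2 * κ) * ε ^ 2)
    linarith
  have hfin := mul_le_mul_of_nonneg_left hbd (Real.exp_pos (2 * t₀)).le
  rw [← mul_assoc, ← Real.exp_add, show 2 * t₀ + -2 * t₀ = 0 by ring, Real.exp_zero,
    one_mul] at hfin
  refine hfin.trans (mul_le_mul_of_nonneg_right (Real.exp_le_exp.2 (by linarith [ht₀.2])) ?_)
  exact mul_nonneg (by positivity) (mul_nonneg (Real.exp_pos _).le (hA0 _ h0))

lemma weight_le {L : ℝ} (hL : 0 < L) {f : ℝ → ℝ} (hf : ContinuousOn f (Icc 0 L)) :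
    ∫ x in (0:ℝ)..L, f x ^ 2 ≤ ∫ x in (0:ℝ)..L, (1 + x) * f x ^ 2 := by
  apply intervalIntegral.integral_mono_on hL.le (ii hL.le (by fun_prop)) (ii hL.le (by fun_prop))
  intro x hx
  nlinarith [mul_nonneg hx.1 (sq_nonneg (f x))]

lemma weight_ge {L : ℝ} (hL : 0 < L) {f : ℝ → ℝ} (hf : ContinuousOn f (Icc 0 L)) :
    ∫ x in (0:ℝ)..L, (1 + x) * f x ^ 2 ≤ (1 + L) * ∫ x in (0:ℝ)..L, f x ^ 2 := by
  rw [← intervalIntegral.integral_const_mul]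
  apply intervalIntegral.integral_mono_on hL.le (ii hL.le (by fun_prop)) (ii hL.le (by fun_prop))
  intro x hx
  exact mul_le_mul_of_nonneg_right (by linarith [hx.2]) (sq_nonneg _)

/-- Energy inequality and saturated energy for one modified solution. -/
lemma Sol.sat {L T ε : ℝ} {Φ : ℝ → ℝ} {y y1 y2 y3 yt : ℝ → ℝ → ℝ}
    (hL : 0 < L) (hε : 0 < ε) (hΦ : IsCutoff Φ) (S : Sol L T ε Φ y y1 y2 y3 yt)
    (hRL : ∀ t ∈ Ioo 0 T, RL L y t)
    (hsmall : (1 + (1 + L) ^ 2) * (L * ε ^ 2 / 4) ≤ 1) {t : ℝ} (ht : t ∈ Ioo 0 T) :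
    ∃ H' M : ℝ, HasDerivWithinAt (fun s => ε ^ 2 * (Real.exp (-2 * s) *
        ∫ x in (0:ℝ)..L, (1 + x) * y s x ^ 2) /
        (Real.exp (-2 * s) * (∫ x in (0:ℝ)..L, (1 + x) * y s x ^ 2) + ε ^ 2)) H' (Ici t) t ∧
      0 ≤ M ∧ (∫ x in (0:ℝ)..L, y t x ^ 2 ≤ ε ^ 2 → ∫ x in (0:ℝ)..L, y1 t x ^ 2 ≤ M) ∧
      H' ≤ -(Real.exp (-2 * T) / (2 + L) ^ 2) * M := by
  have ht' := Ioo_subset_Icc_self ht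
  have d := S.d3 t ht'
  have c0 := d.c0
  have c1 := d.c1
  set c := Φ (L2norm L (y t) / ε) with hc
  have hcI := hΦ.2.1 (L2norm L (y t) / ε) (mem_Ici.2 (div_nonneg (L2norm_nonneg _ _) hε.le))
  have dE := energy_deriv (T := T) hL ht (fun s hs => (S.d3 s hs).c0) (S.rhs_cont ht')
    (fun x hx => by
      have := S.dt x (Ioo_subset_Icc_self hx) t ht
      rwa [S.pde t ht x hx] at this) (hRL t ht)
  have st := static_energy hL d (S.b0 t ht') (S.bL t ht') (S.bL1 t ht')
    (q := fun x => (c * y t x ^ 2 - 0 * y t x ^ 2) / 2)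
    (q1 := fun x => c * (y t x * y1 t x) - 0 * (y t x * y1 t x))
    (by fun_prop) (by fun_prop) (fun x hx => qderiv (d.d0 x hx) (d.d0 x hx))
  simp only [zero_mul, sub_zero] at st
  have hq := q_single (c := c) (ε := ε) hL hcI.1 hcI.2 d (S.b0 t ht')
    (fun h => cutoff_small hΦ hL.le hε _ h)
  simp only [zero_mul, sub_zero] at hq
  have hn1 := sq_int_nonneg hL.le (y1 t)
  have hq' := mul_le_mul_of_nonneg_left hq (by positivity : 0 ≤ 1 + (1 + L) ^ 2)
  have hs' := mul_le_mul_of_nonneg_right hsmall hn1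
  have hY := weight_le hL c0
  have hn0 := sq_int_nonneg hL.le (y t)
  obtain ⟨H', h1, h2, h3⟩ := sat_deriv hL hε ht (hn0.trans hY) dE hn1
    (by linarith) (weight_ge hL c0)
  by_cases hs : ∫ x in (0:ℝ)..L, y t x ^ 2 ≤ ε ^ 2
  · exact ⟨H', _, h1, hn1, fun _ => le_rfl, h3 hs⟩
  · exact ⟨H', 0, h1, le_rfl, fun h => absurd h hs, by simpa using h2⟩

set_option maxHeartbeats 1000000 in
lemma main_est {L T ε Λ : ℝ} {Φ : ℝ → ℝ} (hL : 0 < L) (hT : 0 < T) (hε : 0 < ε) (hε1 : ε ≤ 1)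
    (hΦ : IsCutoff Φ) (hΛ0 : 0 ≤ Λ)
    (hΛ : ∀ r s, 0 ≤ r → 0 ≤ s → |Φ r - Φ s| ≤ Λ * |r - s|)
    (hs1 : (1 + (1 + L) ^ 2) * (L * ε ^ 2 / 4) ≤ 1)
    {c k : ℝ} (hcdef : c = (1 + (1 + L) ^ 2) * (2 * L + Λ ^ 2 * L))
    (hkdef : k = Real.exp (-2 * T) / (2 + L) ^ 2)
    (hs2 : c * ε ^ 2 ≤ 1)
    {y ybar z zbar : ℝ → ℝ → ℝ}
    (hy : IsModifiedKdVSol L T ε Φ y) (hyb : IsModifiedKdVSol L T ε Φ ybar)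
    (hz : IsLinearKdVSol L T z) (hzb : IsLinearKdVSol L T zbar)
    (h0 : ∀ x ∈ Icc (0:ℝ) L, z 0 x = y 0 x) (h0b : ∀ x ∈ Icc (0:ℝ) L, zbar 0 x = ybar 0 x)
    {t₀ : ℝ} (ht₀ : t₀ ∈ Icc 0 T) :
    ∫ x in (0:ℝ)..L, ((y t₀ x - z t₀ x) - (ybar t₀ x - zbar t₀ x)) ^ 2 ≤
      (Real.exp (2 * T) * (c + 2 * (c / k)) * Real.exp (c / k * 2) * (1 + L)) * ε ^ 2 *
        ∫ x in (0:ℝ)..L, (y 0 x - ybar 0 x) ^ 2 := by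
  obtain ⟨y1, y2, y3, yt, Sy⟩ := Sol.of hL hT hy
  obtain ⟨b1, b2, b3, bt, Sb⟩ := Sol.of hL hT hyb
  obtain ⟨z1, z2, z3, zt, Sz⟩ := Sol.of hL hT (linear_to_modified (ε := ε) hz)
  obtain ⟨r1, r2, r3, rt, Sr⟩ := Sol.of hL hT (linear_to_modified (ε := ε) hzb)
  have hΦI : ∀ r, 0 ≤ r → Φ r ∈ Icc (0:ℝ) 1 := fun r hr => hΦ.2.1 r (mem_Ici.2 hr)
  have hΦ1 : ∀ r, 0 ≤ r → |Φ r| ≤ 1 := fun r hr => by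
    rw [abs_of_nonneg (hΦI r hr).1]; exact (hΦI r hr).2
  have Ry := Sy.RL_all hL hε hΦ1 hΛ
  have Rb := Sb.RL_all hL hε hΦ1 hΛ
  have Rz := Sz.RL_all hL hε (Λ := 0) (by simp) (by simp)
  have Rr := Sr.RL_all hL hε (Λ := 0) (by simp) (by simp)
  have cy := fun s hs => (Sy.d3 s hs).c0
  have cb := fun s hs => (Sb.d3 s hs).c0
  have cz := fun s hs => (Sz.d3 s hs).c0
  have cr := fun s hs => (Sr.d3 s hs).c0
  have h0T : (0:ℝ) ∈ Icc 0 T := ⟨le_rfl, hT.le⟩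
  have hc0 : 0 ≤ c := by rw [hcdef]; positivity
  have hk0 : 0 < k := by rw [hkdef]; positivity
  set A : ℝ → ℝ := fun s => ∫ x in (0:ℝ)..L, (1 + x) * (y s x - ybar s x) ^ 2 with hA
  set B : ℝ → ℝ := fun s => ∫ x in (0:ℝ)..L, (1 + x) *
    ((y s x - z s x) - (ybar s x - zbar s x)) ^ 2 with hB
  set Gy : ℝ → ℝ := fun s => ε ^ 2 * (Real.exp (-2 * s) *
        ∫ x in (0:ℝ)..L, (1 + x) * y s x ^ 2) /
        (Real.exp (-2 * s) * (∫ x in (0:ℝ)..L, (1 + x) * y s x ^ 2) + ε ^ 2) with hGy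
  set Gb : ℝ → ℝ := fun s => ε ^ 2 * (Real.exp (-2 * s) *
        ∫ x in (0:ℝ)..L, (1 + x) * ybar s x ^ 2) /
        (Real.exp (-2 * s) * (∫ x in (0:ℝ)..L, (1 + x) * ybar s x ^ 2) + ε ^ 2) with hGb
  have hw0 : ∀ {f : ℝ → ℝ}, ContinuousOn f (Icc 0 L) → 0 ≤ ∫ x in (0:ℝ)..L, (1 + x) * f x ^ 2 :=
    fun hf => (sq_int_nonneg hL.le _).trans (weight_le hL hf)
  have hGcont : ∀ {u : ℝ → ℝ → ℝ},
      ContinuousOn (fun p : ℝ × ℝ => u p.1 p.2) (Icc 0 T ×ˢ Icc 0 L) →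
      (∀ s ∈ Icc 0 T, ContinuousOn (u s) (Icc 0 L)) →
      ContinuousOn (fun s => ε ^ 2 * (Real.exp (-2 * s) *
        ∫ x in (0:ℝ)..L, (1 + x) * u s x ^ 2) /
        (Real.exp (-2 * s) * (∫ x in (0:ℝ)..L, (1 + x) * u s x ^ 2) + ε ^ 2)) (Icc 0 T) := by
    intro u hu hu'
    have e := energy_cont hL hu
    refine ContinuousOn.div (by fun_prop) (by fun_prop) ?_
    intro s hs
    have := hw0 (hu' s hs)
    positivity
  have main := ode_core (A := A) (B := B) (G := fun s => Gy s + Gb s) (ε := ε) hc0 hk0 hs2 ht₀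
    (energy_cont hL (u := fun s x => y s x - ybar s x) (Sy.cont.sub Sb.cont))
    (energy_cont hL (u := fun s x => (y s x - z s x) - (ybar s x - zbar s x))
      ((Sy.cont.sub Sz.cont).sub (Sb.cont.sub Sr.cont)))
    ((hGcont Sy.cont cy).add (hGcont Sb.cont cb))
    (fun t ht => hw0 ((cy t ht).sub (cb t ht)))
    (fun t ht => add_nonneg
      (sat_bounds hε (mul_nonneg (Real.exp_pos _).le (hw0 (cy t ht)))).1
      (sat_bounds hε (mul_nonneg (Real.exp_pos _).le (hw0 (cb t ht)))).1)
    (fun t ht => by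
      have e1 := (sat_bounds hε (mul_nonneg (Real.exp_pos (-2 * t)).le (hw0 (cy t ht)))).2
      have e2 := (sat_bounds hε (mul_nonneg (Real.exp_pos (-2 * t)).le (hw0 (cb t ht)))).2
      simp only [hGy, hGb]
      linarith)
    (by
      have : B 0 = ∫ x in (0:ℝ)..L, (0:ℝ) := by
        apply intervalIntegral.integral_congr
        intro x hx
        rw [uIcc_of_le hL.le] at hx
        simp [h0 x hx, h0b x hx]
      simpa using this)
    (by
      intro t ht
      have ht' := Ioo_subset_Icc_self ht
      obtain ⟨Hy, My, dHy, My0, hMy, lHy⟩ := Sy.sat hL hε hΦ Ry hs1 ht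
      obtain ⟨Hb, Mb, dHb, Mb0, hMb, lHb⟩ := Sb.sat hL hε hΦ Rb hs1 ht
      have dy := Sy.d3 t ht'
      have db := Sb.d3 t ht'
      have dz := Sz.d3 t ht'
      have dr := Sr.d3 t ht'
      have y0c := dy.c0
      have y1c := dy.c1
      have y3c := dy.c3
      have b0c := db.c0
      have b1c := db.c1
      have b3c := db.c3
      have z0c := dz.c0
      have z1c := dz.c1
      have z3c := dz.c3
      have r0c := dr.c0
      have r1c := dr.c1
      have r3c := dr.c3
      set p := Φ (L2norm L (y t) / ε) with hp
      set p' := Φ (L2norm L (ybar t) / ε) with hp'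
      have hpI := hΦI (L2norm L (y t) / ε) (div_nonneg (L2norm_nonneg _ _) hε.le)
      have hpI' := hΦI (L2norm L (ybar t) / ε) (div_nonneg (L2norm_nonneg _ _) hε.le)
      have hq := q_pair (c := p) (c' := p') (Λ := Λ) hL hε hpI.1 hpI.2 hpI'.1 hpI'.2
        dy (Sy.b0 t ht') db (Sb.b0 t ht')
        (fun h => cutoff_small hΦ hL.le hε _ h) (fun h => cutoff_small hΦ hL.le hε _ h)
        (phi_diff_sq hε hL.le hΛ y0c b0c) My0 Mb0 hMy hMb
      have dw := dy.sub db
      have dv := (dy.sub dz).sub (db.sub dr)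
      have stw := static_energy hL dw (by simp [Sy.b0 t ht', Sb.b0 t ht'])
        (by simp [Sy.bL t ht', Sb.bL t ht']) (by simp [Sy.bL1 t ht', Sb.bL1 t ht'])
        (q := fun x => (p * y t x ^ 2 - p' * ybar t x ^ 2) / 2)
        (q1 := fun x => p * (y t x * y1 t x) - p' * (ybar t x * b1 t x))
        (by fun_prop) (by fun_prop)
        (fun x hx => qderiv (dy.d0 x hx) (db.d0 x hx))
      have stv := static_energy hL dv
        (by simp [Sy.b0 t ht', Sb.b0 t ht', Sz.b0 t ht', Sr.b0 t ht'])
        (by simp [Sy.bL t ht', Sb.bL t ht', Sz.bL t ht', Sr.bL t ht'])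
        (by simp [Sy.bL1 t ht', Sb.bL1 t ht', Sz.bL1 t ht', Sr.bL1 t ht'])
        (q := fun x => (p * y t x ^ 2 - p' * ybar t x ^ 2) / 2)
        (q1 := fun x => p * (y t x * y1 t x) - p' * (ybar t x * b1 t x))
        (by fun_prop) (by fun_prop)
        (fun x hx => qderiv (dy.d0 x hx) (db.d0 x hx))
      have dA := energy_deriv (T := T) (u := fun s x => y s x - ybar s x)
        (u' := fun x => -((y1 t x - b1 t x) + (y3 t x - b3 t x)) -
          (p * (y t x * y1 t x) - p' * (ybar t x * b1 t x))) hL ht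
        (fun s hs => (cy s hs).sub (cb s hs)) (by fun_prop)
        (fun x hx => by
          have hx' := Ioo_subset_Icc_self hx
          refine ((Sy.dt x hx' t ht).sub (Sb.dt x hx' t ht)).congr_deriv ?_
          rw [Sy.pde t ht x hx, Sb.pde t ht x hx]
          ring) (RL.sub hL ht cy cb (Ry t ht) (Rb t ht))
      have dB := energy_deriv (T := T)
        (u := fun s x => (y s x - z s x) - (ybar s x - zbar s x))
        (u' := fun x => -(((y1 t x - z1 t x) - (b1 t x - r1 t x)) +
          ((y3 t x - z3 t x) - (b3 t x - r3 t x))) -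
          (p * (y t x * y1 t x) - p' * (ybar t x * b1 t x))) hL ht
        (fun s hs => ((cy s hs).sub (cz s hs)).sub ((cb s hs).sub (cr s hs))) (by fun_prop)
        (fun x hx => by
          have hx' := Ioo_subset_Icc_self hx
          refine (((Sy.dt x hx' t ht).sub (Sz.dt x hx' t ht)).sub
            ((Sb.dt x hx' t ht).sub (Sr.dt x hx' t ht))).congr_deriv ?_
          rw [Sy.pde t ht x hx, Sb.pde t ht x hx, Sz.pde t ht x hx, Sr.pde t ht x hx]
          ring)
        (RL.sub hL ht (fun s hs => (cy s hs).sub (cz s hs)) (fun s hs => (cb s hs).sub (cr s hs))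
          (RL.sub hL ht cy cz (Ry t ht) (Rz t ht)) (RL.sub hL ht cb cr (Rb t ht) (Rr t ht)))
      have hwA : ∫ x in (0:ℝ)..L, (y t x - ybar t x) ^ 2 ≤ A t := weight_le hL dw.c0
      have hvB : ∫ x in (0:ℝ)..L, ((y t x - z t x) - (ybar t x - zbar t x)) ^ 2 ≤ B t :=
        weight_le hL dv.c0
      have hvn := sq_int_nonneg hL.le
        (fun x => (y1 t x - z1 t x) - (b1 t x - r1 t x))
      have hwn := sq_int_nonneg hL.le (fun x => y1 t x - b1 t x)
      have hqc : (1 + (1 + L) ^ 2) *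
          ∫ x in (0:ℝ)..L, ((p * y t x ^ 2 - p' * ybar t x ^ 2) / 2) ^ 2 ≤
          c * (ε ^ 2 * (∫ x in (0:ℝ)..L, (y1 t x - b1 t x) ^ 2) + (My + Mb) * A t) := by
        have e1 := mul_le_mul_of_nonneg_left hq (by positivity : 0 ≤ 1 + (1 + L) ^ 2)
        have e2 := mul_le_mul_of_nonneg_left hwA (add_nonneg My0 Mb0)
        rw [← mul_assoc, ← hcdef] at e1
        exact e1.trans (mul_le_mul_of_nonneg_left (by linarith) hc0)
      refine ⟨_, _, _, My + Mb, ∫ x in (0:ℝ)..L, (y1 t x - b1 t x) ^ 2, add_nonneg My0 Mb0, hwn,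
        dA, dB, dHy.add dHb, ?_, ?_, ?_⟩
      · linarith
      · linarith
      · rw [← hkdef] at lHy lHb
        linarith)
  have hfin : ∫ x in (0:ℝ)..L, ((y t₀ x - z t₀ x) - (ybar t₀ x - zbar t₀ x)) ^ 2 ≤ B t₀ :=
    weight_le hL (((cy _ ht₀).sub (cz _ ht₀)).sub ((cb _ ht₀).sub (cr _ ht₀)))
  have hA0 : A 0 ≤ (1 + L) * ∫ x in (0:ℝ)..L, (y 0 x - ybar 0 x) ^ 2 :=
    weight_ge hL ((cy _ h0T).sub (cb _ h0T))
  have hN := sq_int_nonneg hL.le (fun x => y 0 x - ybar 0 x)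
  have hκ0 : 0 ≤ c / k := by positivity
  have hexp : Real.exp (c / k * (2 * ε ^ 2)) ≤ Real.exp (c / k * 2) := by
    apply Real.exp_le_exp.2
    have : ε ^ 2 ≤ 1 := pow_le_one₀ hε.le hε1
    exact mul_le_mul_of_nonneg_left (by linarith) hκ0
  have hA00 : 0 ≤ A 0 := hw0 ((cy _ h0T).sub (cb _ h0T))
  have e1 := mul_le_mul hexp hA0 hA00 (Real.exp_pos _).le
  have e2 := mul_le_mul_of_nonneg_left e1
    (by positivity : 0 ≤ Real.exp (2 * T) * ((c + 2 * (c / k)) * ε ^ 2))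
  refine hfin.trans (main.trans ?_)
  calc _ = Real.exp (2 * T) * ((c + 2 * (c / k)) * ε ^ 2) *
        (Real.exp (c / k * (2 * ε ^ 2)) * A 0) := by ring
    _ ≤ _ := e2
    _ = _ := by ring

end KdVAux

/-- global Lipschitzianity of the nonlinear remainder map
`R(t) : y₀ ↦ y(t,·) − z(t,·)`, with a Lipschitz constant tending to `0` with `ε`.
There exist `ε₀ ∈ (0,1]` and `C̃ : (0,ε₀] → (0,∞)` with `C̃(ε) → 0` as `ε → 0⁺` such
that, for all `ε ∈ (0,ε₀]`, all data `y₀, ȳ₀`, all solutions `y, ȳ` of the modified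
KdV system and `z, z̄` of the linearized system with these initial data, and all
`t ∈ [0,T]`,
`‖(y(t,·) − z(t,·)) − (ȳ(t,·) − z̄(t,·))‖_{L²(0,L)} ≤ C̃(ε) ‖y₀ − ȳ₀‖_{L²(0,L)}`. -/
theorem modifiedKdV_remainder_global_lipschitz (L T : ℝ) (hL : 0 < L) (hT : 0 < T)
    (Φ : ℝ → ℝ) (hΦ : IsCutoff Φ) :
    ∃ ε₀ : ℝ, 0 < ε₀ ∧ ε₀ ≤ 1 ∧
    ∃ Ctilde : ℝ → ℝ,
      (∀ ε ∈ Ioc (0:ℝ) ε₀, 0 < Ctilde ε) ∧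
      Tendsto Ctilde (nhdsWithin 0 (Ioi (0:ℝ))) (nhds 0) ∧
      ∀ ε ∈ Ioc (0:ℝ) ε₀, ∀ y₀ ybar₀ : ℝ → ℝ,
        ∀ y ybar z zbar : ℝ → ℝ → ℝ,
        IsModifiedKdVSol L T ε Φ y → IsModifiedKdVSol L T ε Φ ybar →
        IsLinearKdVSol L T z → IsLinearKdVSol L T zbar →
        (∀ x ∈ Icc (0:ℝ) L, y 0 x = y₀ x) →
        (∀ x ∈ Icc (0:ℝ) L, ybar 0 x = ybar₀ x) →
        (∀ x ∈ Icc (0:ℝ) L, z 0 x = y₀ x) →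
        (∀ x ∈ Icc (0:ℝ) L, zbar 0 x = ybar₀ x) →
        ∀ t ∈ Icc (0:ℝ) T,
          L2norm L (fun x => (y t x - z t x) - (ybar t x - zbar t x))
            ≤ Ctilde ε * L2norm L (fun x => y₀ x - ybar₀ x) := by
  obtain ⟨Λ, hΛ0, hΛ⟩ := KdVAux.cutoff_lip hΦ
  obtain ⟨c, hcdef⟩ : ∃ c : ℝ, c = (1 + (1 + L) ^ 2) * (2 * L + Λ ^ 2 * L) := ⟨_, rfl⟩
  obtain ⟨k, hkdef⟩ : ∃ k : ℝ, k = Real.exp (-2 * T) / (2 + L) ^ 2 := ⟨_, rfl⟩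
  have hc0 : 0 < c := by rw [hcdef]; positivity
  have hk0 : 0 < k := by rw [hkdef]; positivity
  have hcL : (1 + (1 + L) ^ 2) * (2 * L) ≤ c := by
    rw [hcdef]
    apply mul_le_mul_of_nonneg_left _ (by positivity)
    have : 0 ≤ Λ ^ 2 * L := by positivity
    linarith
  obtain ⟨C, hC⟩ : ∃ C : ℝ, C = Real.exp (2 * T) * (c + 2 * (c / k)) * Real.exp (c / k * 2) *
    (1 + L) := ⟨_, rfl⟩
  have hC0 : 0 < C := by rw [hC]; positivity
  refine ⟨1 / (1 + c), by positivity, ?_, fun ε => Real.sqrt C * ε, ?_, ?_, ?_⟩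
  · rw [div_le_one (by positivity)]; linarith
  · intro ε hε
    exact mul_pos (Real.sqrt_pos.2 hC0) hε.1
  · have : Tendsto (fun ε : ℝ => Real.sqrt C * ε) (nhds 0) (nhds (Real.sqrt C * 0)) :=
      tendsto_id.const_mul _
    rw [mul_zero] at this
    exact this.mono_left nhdsWithin_le_nhds
  · intro ε hε y₀ ybar₀ y ybar z zbar hy hyb hz hzb i1 i2 i3 i4 t ht
    have hε0 : 0 < ε := hε.1
    have hε2 : ε * (1 + c) ≤ 1 := (le_div_iff₀ (by positivity)).1 hε.2
    have hε1 : ε ≤ 1 := by nlinarith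
    have hs2 : c * ε ^ 2 ≤ 1 := by nlinarith
    have hs1 : (1 + (1 + L) ^ 2) * (L * ε ^ 2 / 4) ≤ 1 := by
      have e1 := mul_le_mul_of_nonneg_right hcL (sq_nonneg ε)
      have e2 : 0 ≤ (1 + (1 + L) ^ 2) * (L * ε ^ 2) := by positivity
      linarith
    have key := KdVAux.main_est hL hT hε0 hε1 hΦ hΛ0 hΛ hs1 hcdef hkdef hs2 hy hyb hz hzb
      (fun x hx => (i3 x hx).trans (i1 x hx).symm) (fun x hx => (i4 x hx).trans (i2 x hx).symm) ht
    rw [← hC] at key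
    have hcongr : ∫ x in (0:ℝ)..L, (y 0 x - ybar 0 x) ^ 2 =
        ∫ x in (0:ℝ)..L, (y₀ x - ybar₀ x) ^ 2 := by
      apply intervalIntegral.integral_congr
      intro x hx
      rw [uIcc_of_le hL.le] at hx
      simp only [i1 x hx, i2 x hx]
    rw [hcongr] at key
    unfold L2norm
    refine (Real.sqrt_le_sqrt key).trans (le_of_eq ?_)
    rw [Real.sqrt_mul (by positivity), Real.sqrt_mul hC0.le, Real.sqrt_sq hε0.le]
end
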